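/- Suppose y ∈ D satisfies y(a) = y^a and y(b) = y^b and is a local minimizer (with respect to ‖·‖_{1,∞}) of J over all trajectories in D satisfying these boundary conditions. Assume for each i = 1,…,N that the function x ↦ ∂L/∂v_i(x, y(x), C D_γ^{α,β} y(x)) is absolutely continuous on [a,b] with continuous combined Riemann–Liouville derivative D_{1−γ}^{β,α}. Then for every h ∈ D with h(a) = h(b) = 0, the following identity holds: ∫_a^b Σ_{i=1}^N [ ∂L/∂y_i(x, y(x), C D_γ^{α,β} y(x)) + D_{1−γ}^{β,α}( ∂L/∂v_i(·, y(·), C D_γ^{α,β} y(·)) )(x) ]·h_i(x) dx = 0. -/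

import Mathlib

open MeasureTheory Set Real

noncomputable section

/-- Left Riemann–Liouville fractional integral `(ₐIₓ^α f)(x)`. -/
def leftRLI (a α : ℝ) (f : ℝ → ℝ) (x : ℝ) : ℝ :=
  (1 / Real.Gamma α) * ∫ t in a..x, (x - t) ^ (α - 1) * f t

/-- Right Riemann–Liouville fractional integral `(ₓI_b^α f)(x)`. -/
def rightRLI (b α : ℝ) (f : ℝ → ℝ) (x : ℝ) : ℝ :=
  (1 / Real.Gamma α) * ∫ t in x..b, (t - x) ^ (α - 1) * f t

/-- A function is absolutely continuous on `[a, b]` iff it is the integral of its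
(almost everywhere defined) derivative. -/
def AbsolutelyContinuousOn (f : ℝ → ℝ) (a b : ℝ) : Prop :=
  IntervalIntegrable (deriv f) volume a b ∧
    ∀ x ∈ Icc a b, f x = f a + ∫ t in a..x, deriv f t

/-- Left Caputo fractional derivative `(ᶜₐDₓ^α f)(x)`. -/
def caputoLeft (a α : ℝ) (f : ℝ → ℝ) (x : ℝ) : ℝ :=
  (1 / Real.Gamma (1 - α)) * ∫ t in a..x, (x - t) ^ (-α) * deriv f t

/-- Right Caputo fractional derivative `(ᶜₓD_b^α f)(x)`. -/
def caputoRight (b α : ℝ) (f : ℝ → ℝ) (x : ℝ) : ℝ :=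
  -(1 / Real.Gamma (1 - α)) * ∫ t in x..b, (t - x) ^ (-α) * deriv f t

/-- Left Riemann–Liouville fractional derivative `(ₐDₓ^α g)(x) = d/dx (ₐIₓ^{1-α} g)(x)`. -/
def rlLeftD (a α : ℝ) (g : ℝ → ℝ) (x : ℝ) : ℝ :=
  deriv (leftRLI a (1 - α) g) x

/-- Right Riemann–Liouville fractional derivative `(ₓD_b^α g)(x) = -d/dx (ₓI_b^{1-α} g)(x)`. -/
def rlRightD (b α : ℝ) (g : ℝ → ℝ) (x : ℝ) : ℝ :=
  -deriv (rightRLI b (1 - α) g) x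

/-- Combined Caputo fractional derivative `ᶜD_γ^{α,β} f = γ ᶜₐDₓ^α f + (1-γ) ᶜₓD_b^β f`. -/
def combCaputo (a b α β γ : ℝ) (f : ℝ → ℝ) (x : ℝ) : ℝ :=
  γ * caputoLeft a α f x + (1 - γ) * caputoRight b β f x

/-- Combined Riemann–Liouville derivative `D_{1-γ}^{β,α} g = (1-γ) ₐDₓ^β g + γ ₓD_b^α g`. -/
def combRL (a b α β γ : ℝ) (g : ℝ → ℝ) (x : ℝ) : ℝ :=
  (1 - γ) * rlLeftD a β g x + γ * rlRightD b α g x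

/-- Componentwise combined Caputo derivative of a vector-valued function. -/
def combCaputoVec (a b α β γ : ℝ) {N : ℕ} (y : ℝ → Fin N → ℝ) (x : ℝ) : Fin N → ℝ :=
  fun i => combCaputo a b α β γ (fun t => y t i) x

/-- The class `𝐃` of trajectories: each component absolutely continuous on `[a,b]` and the
combined Caputo derivative exists and is continuous on `[a,b]`. -/
def memD (a b α β γ : ℝ) {N : ℕ} (y : ℝ → Fin N → ℝ) : Prop :=
  (∀ i, AbsolutelyContinuousOn (fun t => y t i) a b) ∧
    ∀ i, ContinuousOn (fun x => combCaputo a b α β γ (fun t => y t i) x) (Icc a b)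

/-- The norm `‖y‖_{1,∞} = max_{[a,b]} ‖y(x)‖ + max_{[a,b]} ‖ᶜD_γ^{α,β} y(x)‖`. -/
def norm1inf (a b α β γ : ℝ) {N : ℕ} (y : ℝ → Fin N → ℝ) : ℝ :=
  sSup ((fun x => ‖y x‖) '' Icc a b) +
    sSup ((fun x => ‖combCaputoVec a b α β γ y x‖) '' Icc a b)

/-- Partial derivative of a Lagrangian `L(x, y, v)` w.r.t. the `i`-th component of `y`. -/
def pdY {N : ℕ} (L : ℝ → (Fin N → ℝ) → (Fin N → ℝ) → ℝ) (i : Fin N) (x : ℝ)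
    (u v : Fin N → ℝ) : ℝ :=
  deriv (fun s => L x (Function.update u i s) v) (u i)

/-- Partial derivative of a Lagrangian `L(x, y, v)` w.r.t. the `i`-th component of `v`. -/
def pdV {N : ℕ} (L : ℝ → (Fin N → ℝ) → (Fin N → ℝ) → ℝ) (i : Fin N) (x : ℝ)
    (u v : Fin N → ℝ) : ℝ :=
  deriv (fun s => L x u (Function.update v i s)) (v i)

/-!
Write `u` for the derivative of a component of `y` and `T u = k₁ * u + k₂ * u` for its combined
Caputo derivative, where `k₁`, `k₂` are one-sided power kernels. The classical argument perturbs `u`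
by `ε q` with `q` continuous, compactly supported in `(a, b)` and of mean zero. But `T u` has the
junk value `0` of a divergent integral wherever `u` is too singular, and on that null set
`T (u + ε q)` need not be continuous, so `y + ε ∫ q` need not be a competitor.

Instead, `u` is first replaced by `u + p`, where `p` is a shell-wise (Meyers–Serrin) mollification
error: `u + p` is continuous in `(a, b)`, and both `p` in `L¹` and `τ = T (u + p) - T u` uniformly
are as small as desired. The distance `norm1inf` also involves `T p` where only one of the two
convolutions of `u` converges. Either these convolutions obey an a priori bound, and `T p` is small;
or narrow spikes added to `p` correct the finitely many exceptional points, or make `T p` unbounded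
along a sequence of them, in which case the supremum in `norm1inf` is `0` by convention. Hence `J`
at `y` is at most its formal value along `y + ∫ q`, for small `q` orthogonal to the constants and to
the endpoint singularities `(t - a) ^ (-β)`, `(b - t) ^ (-α)`.

The first variation therefore vanishes on such `q`. By duality, with `f = ∂L/∂yᵢ` and
`g = ∂L/∂vᵢ`, the function `γ I_b^{1-α} g - (1-γ) I_a^{1-β} g - ∫ f` is a combination of the
constants and the two endpoint singularities; it is bounded, so only the constant remains. The
fractional integrals of `g`, a function of bounded variation, are differences of monotone functions,
so the identity can be differentiated almost everywhere.
-/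

section

open Filter Topology

/-- A kernel on the line, continuous away from the origin and bounded by `C * |s| ^ (-θ)` with
`0 < θ < 1`. The bound forces `k 0 = 0`, because `0 ^ (-θ) = 0` in Mathlib. -/
structure WeaklySingular (k : ℝ → ℝ) (θ C : ℝ) : Prop where
  meas : Measurable k
  cont : ContinuousOn k {0}ᶜ
  bound : ∀ s, |k s| ≤ C * |s| ^ (-θ)
  pos : 0 < θ
  lt_one : θ < 1
  nonneg : 0 ≤ C

/-- Convolution with a kernel, `x ↦ ∫ t, k (x - t) * f t`; it takes the value `0` wherever
the integral diverges. -/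
def kerConv (k f : ℝ → ℝ) : ℝ → ℝ :=
  convolution f k (ContinuousLinearMap.mul ℝ ℝ).flip volume

/-- Absolute convergence of the integral defining `kerConv k f x`. -/
def KerConvExistsAt (k f : ℝ → ℝ) (x : ℝ) : Prop :=
  ConvolutionExistsAt f k x (ContinuousLinearMap.mul ℝ ℝ).flip volume

theorem kerConv_apply (k f : ℝ → ℝ) (x : ℝ) : kerConv k f x = ∫ t, k (x - t) * f t := rfl

theorem kerConvExistsAt_iff {k f : ℝ → ℝ} {x : ℝ} :
    KerConvExistsAt k f x ↔ Integrable fun t => k (x - t) * f t := Iff.rfl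

section KerConv

variable {k f g : ℝ → ℝ} {x : ℝ}

theorem KerConvExistsAt.add (hf : KerConvExistsAt k f x) (hg : KerConvExistsAt k g x) :
    KerConvExistsAt k (f + g) x := by
  simp only [kerConvExistsAt_iff, Pi.add_apply, mul_add]
  exact Integrable.add hf hg

theorem KerConvExistsAt.sub (hf : KerConvExistsAt k f x) (hg : KerConvExistsAt k g x) :
    KerConvExistsAt k (f - g) x := by
  simp only [kerConvExistsAt_iff, Pi.sub_apply, mul_sub]
  exact Integrable.sub hf hg

theorem kerConv_add (hf : KerConvExistsAt k f x) (hg : KerConvExistsAt k g x) :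
    kerConv k (f + g) x = kerConv k f x + kerConv k g x :=
  ConvolutionExistsAt.add_distrib hf hg

theorem kerConv_sub (hf : KerConvExistsAt k f x) (hg : KerConvExistsAt k g x) :
    kerConv k (f - g) x = kerConv k f x - kerConv k g x := by
  simp only [kerConv_apply, Pi.sub_apply, mul_sub]
  exact integral_sub hf hg

theorem kerConv_const_mul (k f : ℝ → ℝ) (x c : ℝ) :
    kerConv k (fun t => c * f t) x = c * kerConv k f x := by
  simp only [kerConv_apply, mul_left_comm _ c, integral_const_mul]

theorem kerConv_of_not_existsAt (hf : ¬ KerConvExistsAt k f x) : kerConv k f x = 0 :=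
  integral_undef hf

theorem kerConv_comp_sub_right (k f : ℝ → ℝ) (x c : ℝ) :
    kerConv k (fun t => f (t - c)) x = kerConv k f (x - c) := by
  simp only [kerConv_apply]
  rw [← integral_sub_right_eq_self (fun t => k (x - c - t) * f t) c]
  simp only [sub_sub_sub_cancel_right]

end KerConv

section Series

variable {ι : Type*} [Countable ι] {F : ι → ℝ → ℝ}

theorem integrable_tsum_of_summable_integral_abs (hF : ∀ j, Integrable (F j))
    (hs : Summable fun j => ∫ t, |F j t|) : Integrable fun t => ∑' j, F j t := by
  refine ⟨(AEMeasurable.tsum fun j => (hF j).aemeasurable).aestronglyMeasurable, ?_⟩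
  have hfin : ∑' j, ∫⁻ t, ‖F j t‖ₑ ≠ ⊤ := by
    simp only [← ofReal_integral_norm_eq_lintegral_enorm (hF _)]
    exact hs.tsum_ofReal_ne_top
  rw [← lintegral_tsum fun j => (hF j).aestronglyMeasurable.enorm] at hfin
  exact lt_of_le_of_lt (lintegral_mono fun t => enorm_tsum_le_tsum_enorm) hfin.lt_top

theorem kerConvExistsAt_tsum {k : ℝ → ℝ} {x : ℝ} (hF : ∀ j, KerConvExistsAt k (F j) x)
    (hs : Summable fun j => ∫ t, |k (x - t) * F j t|) :
    KerConvExistsAt k (fun t => ∑' j, F j t) x := by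
  simp only [kerConvExistsAt_iff, ← tsum_mul_left]
  exact integrable_tsum_of_summable_integral_abs hF hs

theorem hasSum_kerConv {k : ℝ → ℝ} {x : ℝ} (hF : ∀ j, KerConvExistsAt k (F j) x)
    (hs : Summable fun j => ∫ t, |k (x - t) * F j t|) :
    HasSum (fun j => kerConv k (F j) x) (kerConv k (fun t => ∑' j, F j t) x) := by
  have h := hasSum_integral_of_summable_integral_norm hF hs
  simp only [ContinuousLinearMap.flip_apply, ContinuousLinearMap.mul_apply', tsum_mul_left] at h
  exact h

end Series

/-- The singular part of the model kernel `|s| ^ (-θ)`. -/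
def singularPart (θ : ℝ) : ℝ → ℝ := (Icc (-1 : ℝ) 1).indicator fun s => |s| ^ (-θ)

section ModelKernel

variable {θ : ℝ}

theorem intervalIntegrable_abs_rpow_neg (hθ : θ < 1) (R : ℝ) :
    IntervalIntegrable (fun s : ℝ => |s| ^ (-θ)) volume 0 R := by
  wlog hR : 0 ≤ R generalizing R
  · rw [IntervalIntegrable.iff_comp_neg]
    simpa only [abs_neg, neg_zero] using this (-R) (by linarith)
  refine (intervalIntegral.intervalIntegrable_rpow' (r := -θ) (by linarith)).congr fun s hs => ?_
  rw [uIoc_of_le hR] at hs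
  simp only [abs_of_pos hs.1]

theorem integrable_singularPart (hθ : θ < 1) : Integrable (singularPart θ) := by
  have h := (intervalIntegrable_abs_rpow_neg hθ (-1)).symm.trans
    (intervalIntegrable_abs_rpow_neg hθ 1)
  rw [intervalIntegrable_iff_integrableOn_Icc_of_le (by norm_num)] at h
  exact h.integrable_indicator measurableSet_Icc

theorem singularPart_nonneg (θ s : ℝ) : 0 ≤ singularPart θ s :=
  indicator_nonneg (fun _ _ => by positivity) s

theorem abs_rpow_neg_le {ρ s : ℝ} (hθ : 0 < θ) (hρ : 0 < ρ) (h : ρ ≤ |s|) :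
    |s| ^ (-θ) ≤ ρ ^ (-θ) :=
  rpow_le_rpow_of_nonpos hρ h (by linarith)

theorem abs_rpow_neg_le_singularPart_add_one (hθ : 0 < θ) (s : ℝ) :
    |s| ^ (-θ) ≤ singularPart θ s + 1 := by
  by_cases hs : s ∈ Icc (-1 : ℝ) 1
  · simp [singularPart, hs]
  · have h1 : 1 ≤ |s| := by
      by_contra! h
      exact hs (abs_le.1 h.le)
    have h := abs_rpow_neg_le hθ one_pos h1
    rw [one_rpow] at h
    linarith [singularPart_nonneg θ s]

end ModelKernel

namespace WeaklySingular

variable {k f : ℝ → ℝ} {θ C : ℝ}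

theorem abs_le_singularPart (hk : WeaklySingular k θ C) (s : ℝ) :
    |k s| ≤ C * (singularPart θ s + 1) :=
  (hk.bound s).trans
    (mul_le_mul_of_nonneg_left (abs_rpow_neg_le_singularPart_add_one hk.pos s) hk.nonneg)

theorem abs_le_of_le_abs (hk : WeaklySingular k θ C) {ρ s : ℝ} (hρ : 0 < ρ) (h : ρ ≤ |s|) :
    |k s| ≤ C * ρ ^ (-θ) :=
  (hk.bound s).trans (mul_le_mul_of_nonneg_left (abs_rpow_neg_le hk.pos hρ h) hk.nonneg)

theorem map_zero (hk : WeaklySingular k θ C) : k 0 = 0 := by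
  have h := hk.bound 0
  rw [abs_zero, zero_rpow (by linarith [hk.pos]), mul_zero] at h
  exact abs_nonpos_iff.1 h

theorem comp_neg (hk : WeaklySingular k θ C) : WeaklySingular (fun s => k (-s)) θ C where
  meas := hk.meas.comp measurable_neg
  cont := hk.cont.comp continuous_neg.continuousOn (by intro s hs; simpa using hs)
  bound s := by simpa only [abs_neg] using hk.bound (-s)
  pos := hk.pos
  lt_one := hk.lt_one
  nonneg := hk.nonneg

theorem intervalIntegrable_majorant (hk : WeaklySingular k θ C) (A B : ℝ) :
    IntervalIntegrable (fun s => C * (singularPart θ s + 1)) volume A B :=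
  ((integrable_singularPart hk.lt_one).intervalIntegrable.add intervalIntegrable_const).const_mul C

theorem intervalIntegrable (hk : WeaklySingular k θ C) (A B : ℝ) :
    IntervalIntegrable k volume A B :=
  (hk.intervalIntegrable_majorant A B).mono_fun' hk.meas.aestronglyMeasurable.restrict
    (.of_forall hk.abs_le_singularPart)

theorem integral_abs_le (hk : WeaklySingular k θ C) {A B : ℝ} (hAB : A ≤ B) :
    ∫ s in A..B, |k s| ≤ C * ((∫ s, singularPart θ s) + (B - A)) := by
  have hI := integrable_singularPart hk.lt_one
  calc ∫ s in A..B, |k s| ≤ ∫ s in A..B, C * (singularPart θ s + 1) :=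
        intervalIntegral.integral_mono_on hAB (hk.intervalIntegrable A B).abs
          (hk.intervalIntegrable_majorant A B) fun s _ => hk.abs_le_singularPart s
    _ = C * ((∫ s in A..B, singularPart θ s) + (B - A)) := by
        rw [intervalIntegral.integral_const_mul, intervalIntegral.integral_add
          hI.intervalIntegrable intervalIntegrable_const, intervalIntegral.integral_const,
          smul_eq_mul, mul_one]
    _ ≤ C * ((∫ s, singularPart θ s) + (B - A)) := by
        refine mul_le_mul_of_nonneg_left (add_le_add_left ?_ _) hk.nonneg
        rw [intervalIntegral.integral_of_le hAB]
        exact setIntegral_le_integral hI (.of_forall (singularPart_nonneg θ))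

theorem locallyIntegrable (hk : WeaklySingular k θ C) : LocallyIntegrable k := fun x =>
  ⟨Icc (x - 1) (x + 1), Icc_mem_nhds (by linarith) (by linarith),
    (intervalIntegrable_iff_integrableOn_Icc_of_le (by linarith)).1 (hk.intervalIntegrable _ _)⟩

theorem integrable_prod (hk : WeaklySingular k θ C) (hf : Integrable f) (hfm : Measurable f)
    {μ : Measure ℝ} [SFinite μ] {ξ : ℝ → ℝ} (hξ : Measurable ξ) {M : ℝ}
    (hI : ∀ t, Integrable (fun s => k (ξ s - t)) μ) (hM : ∀ t, ∫ s, |k (ξ s - t)| ∂μ ≤ M) :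
    Integrable (fun p : ℝ × ℝ => k (ξ p.1 - p.2) * f p.2) (μ.prod volume) := by
  have hm : Measurable (fun p : ℝ × ℝ => k (ξ p.1 - p.2) * f p.2) :=
    (hk.meas.comp ((hξ.comp measurable_fst).sub measurable_snd)).mul (hfm.comp measurable_snd)
  rw [integrable_prod_iff' hm.aestronglyMeasurable]
  refine ⟨.of_forall fun t => (hI t).mul_const (f t), Integrable.mono' (hf.abs.const_mul M)
    hm.stronglyMeasurable.norm.integral_prod_left'.aestronglyMeasurable (.of_forall fun t => ?_)⟩
  simp only [norm_mul, norm_eq_abs]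
  rw [integral_mul_const, abs_mul, abs_abs, abs_of_nonneg (integral_nonneg fun _ => abs_nonneg _)]
  exact mul_le_mul_of_nonneg_right (hM t) (abs_nonneg _)

theorem integrable_prod_Icc (hk : WeaklySingular k θ C) (hf : Integrable f) (hfm : Measurable f)
    (A B : ℝ) :
    Integrable (fun p : ℝ × ℝ => k (p.1 - p.2) * f p.2)
      ((volume.restrict (Icc A B)).prod volume) := by
  rcases lt_or_ge B A with h | hAB
  · simp only [Icc_eq_empty (not_le.2 h), Measure.restrict_empty, Measure.zero_prod,
      integrable_zero_measure]
  refine hk.integrable_prod hf hfm measurable_id (M := C * ((∫ s, singularPart θ s) + (B - A)))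
    (fun t => ?_) fun t => ?_
  · have hI : IntervalIntegrable (fun s => k (s - t)) volume A B := by
      simpa only [sub_add_cancel] using
        (hk.intervalIntegrable (A - t) (B - t)).comp_sub_right t
    exact (intervalIntegrable_iff_integrableOn_Icc_of_le hAB).1 hI
  · simp only [id]
    rw [integral_Icc_eq_integral_Ioc, ← intervalIntegral.integral_of_le hAB,
      intervalIntegral.integral_comp_sub_right (fun s => |k s|)]
    have h := hk.integral_abs_le (A := A - t) (B := B - t) (by linarith)
    rwa [sub_sub_sub_cancel_right] at h

theorem integral_abs_comp_line_le (hk : WeaklySingular k θ C) (z : ℝ) {r : ℝ} (hr : r ≠ 0) :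
    ∫ s in (0 : ℝ)..1, |k (z - r * s)| ≤ |r|⁻¹ * (C * ((∫ s, singularPart θ s) + |r|)) := by
  rw [intervalIntegral.integral_comp_sub_mul (fun s => |k s|) hr, mul_one, mul_zero, sub_zero,
    smul_eq_mul]
  rcases lt_or_gt_of_ne hr with h | h
  · have hle := hk.integral_abs_le (A := z) (B := z - r) (by linarith)
    rw [sub_sub_cancel_left] at hle
    rw [intervalIntegral.integral_symm, abs_of_neg h, mul_neg, ← neg_mul, ← inv_neg]
    exact mul_le_mul_of_nonneg_left hle (inv_nonneg.2 (by linarith))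
  · have hle := hk.integral_abs_le (A := z - r) (B := z) (by linarith)
    rw [sub_sub_cancel] at hle
    rw [abs_of_pos h]
    exact mul_le_mul_of_nonneg_left hle (inv_nonneg.2 h.le)

theorem intervalIntegrable_comp_line (hk : WeaklySingular k θ C) (z : ℝ) {r : ℝ} (hr : r ≠ 0) :
    IntervalIntegrable (fun s => k (z - r * s)) volume 0 1 := by
  have h := ((hk.intervalIntegrable (z - r * 0) (z - r * 1)).comp_sub_left z).comp_mul_left (c := r)
  simpa only [sub_sub_cancel, mul_zero, mul_one, zero_div, div_self hr] using h

theorem integrable_prod_line (hk : WeaklySingular k θ C) (hf : Integrable f) (hfm : Measurable f)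
    (x : ℝ) {r : ℝ} (hr : r ≠ 0) :
    Integrable (fun p : ℝ × ℝ => k ((x - r * p.1) - p.2) * f p.2)
      ((volume.restrict (Ioc 0 1)).prod volume) := by
  refine hk.integrable_prod hf hfm (ξ := fun s => x - r * s) (by fun_prop)
    (M := |r|⁻¹ * (C * ((∫ s, singularPart θ s) + |r|))) (fun t => ?_) fun t => ?_
  · simp only [sub_right_comm x _ t]
    exact (intervalIntegrable_iff_integrableOn_Ioc_of_le zero_le_one).1
      (hk.intervalIntegrable_comp_line (x - t) hr)
  · simp only [sub_right_comm x _ t]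
    rw [← intervalIntegral.integral_of_le zero_le_one]
    exact hk.integral_abs_comp_line_le (x - t) hr

theorem ae_kerConvExistsAt (hk : WeaklySingular k θ C) (hf : Integrable f) (hfm : Measurable f) :
    ∀ᵐ x, KerConvExistsAt k f x := by
  have h : ∀ n : ℕ, ∀ᵐ x, x ∈ Icc (-(n : ℝ)) n → KerConvExistsAt k f x := fun n =>
    (ae_restrict_iff' measurableSet_Icc).1 (hk.integrable_prod_Icc hf hfm (-n) n).prod_right_ae
  filter_upwards [ae_all_iff.2 h] with x hx
  obtain ⟨n, hn⟩ := exists_nat_ge |x|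
  exact hx n (abs_le.1 hn)

theorem aestronglyMeasurable_integrand (hk : WeaklySingular k θ C) (hf : Integrable f) (x : ℝ) :
    AEStronglyMeasurable fun t => k (x - t) * f t :=
  (hk.meas.comp (measurable_const.sub measurable_id)).aestronglyMeasurable.mul
    hf.aestronglyMeasurable

theorem abs_integrand_le_of_eq_zero (hk : WeaklySingular k θ C) {x ρ : ℝ} (hρ : 0 < ρ)
    (h0 : ∀ t, |x - t| < ρ → f t = 0) (t : ℝ) :
    |k (x - t) * f t| ≤ C * ρ ^ (-θ) * |f t| := by
  rcases lt_or_ge (|x - t|) ρ with h | h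
  · simp only [h0 t h, mul_zero, abs_zero, le_refl]
  · rw [abs_mul]
    exact mul_le_mul_of_nonneg_right (hk.abs_le_of_le_abs hρ h) (abs_nonneg _)

theorem existsAt_of_eq_zero (hk : WeaklySingular k θ C) (hf : Integrable f) {x ρ : ℝ} (hρ : 0 < ρ)
    (h0 : ∀ t, |x - t| < ρ → f t = 0) : KerConvExistsAt k f x :=
  Integrable.mono' (hf.abs.const_mul (C * ρ ^ (-θ))) (hk.aestronglyMeasurable_integrand hf x)
    (.of_forall (hk.abs_integrand_le_of_eq_zero hρ h0))

theorem integral_abs_integrand_le_of_eq_zero (hk : WeaklySingular k θ C) (hf : Integrable f)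
    {x ρ : ℝ} (hρ : 0 < ρ) (h0 : ∀ t, |x - t| < ρ → f t = 0) :
    ∫ t, |k (x - t) * f t| ≤ C * ρ ^ (-θ) * ∫ t, |f t| := by
  rw [← integral_const_mul]
  exact integral_mono (Integrable.abs (hk.existsAt_of_eq_zero hf hρ h0)) (hf.abs.const_mul _)
    (hk.abs_integrand_le_of_eq_zero hρ h0)

theorem existsAt_of_bounded (hk : WeaklySingular k θ C) (hf : Integrable f) {x ρ M : ℝ}
    (hρ : 0 < ρ) (hb : ∀ t, |x - t| < ρ → |f t| ≤ M) : KerConvExistsAt k f x := by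
  have hM : 0 ≤ M := (abs_nonneg _).trans (hb x (by simpa using hρ))
  have hC := hk.nonneg
  have hρ' : 0 ≤ C * ρ ^ (-θ) := by positivity
  refine Integrable.mono'
    (g := fun t => C * M * singularPart θ (x - t) + (C + C * ρ ^ (-θ)) * |f t|)
    ((((integrable_singularPart hk.lt_one).comp_sub_left x).const_mul _).add (hf.abs.const_mul _))
    (hk.aestronglyMeasurable_integrand hf x) (.of_forall fun t => ?_)
  change |k (x - t) * f t| ≤ _
  have hs := singularPart_nonneg θ (x - t)
  rw [abs_mul]
  rcases lt_or_ge (|x - t|) ρ with h | h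
  · calc |k (x - t)| * |f t| ≤ C * (singularPart θ (x - t) + 1) * |f t| :=
          mul_le_mul_of_nonneg_right (hk.abs_le_singularPart _) (abs_nonneg _)
      _ = C * singularPart θ (x - t) * |f t| + C * |f t| := by ring
      _ ≤ C * singularPart θ (x - t) * M + C * |f t| := by
          gcongr
          exact hb t h
      _ ≤ C * M * singularPart θ (x - t) + (C + C * ρ ^ (-θ)) * |f t| := by
          nlinarith [mul_nonneg hρ' (abs_nonneg (f t))]
  · calc |k (x - t)| * |f t| ≤ C * ρ ^ (-θ) * |f t| :=
          mul_le_mul_of_nonneg_right (hk.abs_le_of_le_abs hρ h) (abs_nonneg _)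
      _ ≤ C * M * singularPart θ (x - t) + (C + C * ρ ^ (-θ)) * |f t| := by
          nlinarith [mul_nonneg hC (abs_nonneg (f t)), mul_nonneg (mul_nonneg hC hM) hs]

theorem existsAt_of_continuousAt (hk : WeaklySingular k θ C) (hf : Integrable f) {x : ℝ}
    (hc : ContinuousAt f x) : KerConvExistsAt k f x := by
  obtain ⟨ρ, hρ, h⟩ := Metric.continuousAt_iff.1 hc 1 one_pos
  refine hk.existsAt_of_bounded hf (M := |f x| + 1) hρ fun t ht => ?_
  have hd := @h t (by rwa [dist_comm, Real.dist_eq])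
  rw [Real.dist_eq] at hd
  linarith [abs_sub_abs_le_abs_sub (f t) (f x)]

theorem continuous_kerConv (hk : WeaklySingular k θ C) (hf : Continuous f)
    (hc : HasCompactSupport f) : Continuous (kerConv k f) :=
  hc.continuous_convolution_left _ hf hk.locallyIntegrable

theorem continuousAt_kerConv_of_eq_zero (hk : WeaklySingular k θ C) (hf : Integrable f) {x ρ : ℝ}
    (hρ : 0 < ρ) (h0 : ∀ t, |x - t| < ρ → f t = 0) : ContinuousAt (kerConv k f) x := by
  refine continuousAt_of_dominated (bound := fun t => C * (ρ / 2) ^ (-θ) * |f t|)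
    (.of_forall fun y => hk.aestronglyMeasurable_integrand hf y) ?_ (hf.abs.const_mul _)
    (.of_forall fun t => ?_)
  · filter_upwards [Metric.ball_mem_nhds x (half_pos hρ)] with y hy
    rw [Metric.mem_ball, Real.dist_eq] at hy
    refine .of_forall (hk.abs_integrand_le_of_eq_zero (half_pos hρ) fun t ht => h0 t ?_)
    linarith [abs_sub_le x y t, abs_sub_comm x y]
  · change ContinuousAt (fun y => k (y - t) * f t) x
    rcases lt_or_ge (|x - t|) ρ with h | h
    · simp only [h0 t h, mul_zero]
      exact continuousAt_const
    · have hne : x - t ≠ 0 := abs_pos.1 (hρ.trans_le h)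
      have hkx := hk.cont.continuousAt (isOpen_compl_singleton.mem_nhds hne)
      exact (hkx.comp (f := fun y => y - t) (by fun_prop)).mul continuousAt_const

end WeaklySingular

/-- A Lipschitz function of oscillation at most one: the multipliers for which the commutator with
convolution by a weakly singular kernel is a bounded operator. -/
structure IsCutoff (χ : ℝ → ℝ) (Λ : ℝ) : Prop where
  abs_sub_le : ∀ s t, |χ s - χ t| ≤ Λ * |s - t|
  abs_sub_le_one : ∀ s t, |χ s - χ t| ≤ 1

namespace IsCutoff

variable {χ : ℝ → ℝ} {Λ : ℝ}

theorem nonneg (hχ : IsCutoff χ Λ) : 0 ≤ Λ := by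
  simpa using (abs_nonneg _).trans (hχ.abs_sub_le 1 0)

theorem continuous (hχ : IsCutoff χ Λ) : Continuous χ :=
  (LipschitzWith.of_dist_le_mul (K := ⟨Λ, hχ.nonneg⟩) hχ.abs_sub_le).continuous

end IsCutoff

theorem abs_clamp_sub_clamp_le (p q : ℝ) : |max 0 (min 1 p) - max 0 (min 1 q)| ≤ |p - q| := by
  refine (abs_max_sub_max_le_max _ _ _ _).trans ?_
  rw [sub_self, abs_zero]
  refine max_le (abs_nonneg _) ((abs_min_sub_min_le_max _ _ _ _).trans ?_)
  rw [sub_self, abs_zero, max_eq_right (abs_nonneg _)]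

theorem abs_sub_le_one_of_mem_unit {p q : ℝ} (hp : p ∈ Icc (0 : ℝ) 1) (hq : q ∈ Icc (0 : ℝ) 1) :
    |p - q| ≤ 1 :=
  abs_le.2 ⟨by linarith [hp.1, hq.2], by linarith [hp.2, hq.1]⟩

/-- The trapezoidal cutoff, equal to `1` near `x` and supported in the ball of radius `ρ`. -/
def cutoff (x ρ t : ℝ) : ℝ := max 0 (min 1 (2 - 3 / ρ * |x - t|))

section Cutoff

variable {x ρ t : ℝ}

theorem cutoff_mem_Icc (x ρ t : ℝ) : cutoff x ρ t ∈ Icc (0 : ℝ) 1 :=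
  ⟨le_max_left _ _, max_le zero_le_one (min_le_left _ _)⟩

theorem cutoff_eq_one (hρ : 0 < ρ) (h : |x - t| ≤ ρ / 3) : cutoff x ρ t = 1 := by
  have hle : 3 / ρ * |x - t| ≤ 1 := by
    calc 3 / ρ * |x - t| ≤ 3 / ρ * (ρ / 3) := by gcongr
      _ = 1 := by field_simp
  rw [cutoff, min_eq_left (by linarith), max_eq_right zero_le_one]

theorem cutoff_eq_zero (hρ : 0 < ρ) (h : 2 * ρ / 3 ≤ |x - t|) : cutoff x ρ t = 0 := by
  have hle : 2 ≤ 3 / ρ * |x - t| := by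
    calc 2 = 3 / ρ * (2 * ρ / 3) := by field_simp
      _ ≤ 3 / ρ * |x - t| := by gcongr
  exact max_eq_left ((min_le_right _ _).trans (by linarith))

theorem isCutoff_cutoff (hρ : 0 < ρ) : IsCutoff (cutoff x ρ) (3 / ρ) where
  abs_sub_le s t := by
    refine (abs_clamp_sub_clamp_le _ _).trans ?_
    rw [show 2 - 3 / ρ * |x - s| - (2 - 3 / ρ * |x - t|) = 3 / ρ * (|x - t| - |x - s|) by ring,
      abs_mul, abs_of_pos (by positivity : 0 < 3 / ρ)]
    refine mul_le_mul_of_nonneg_left ?_ (by positivity)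
    simpa only [sub_sub_sub_cancel_left] using abs_abs_sub_abs_le_abs_sub (x - t) (x - s)
  abs_sub_le_one s t := abs_sub_le_one_of_mem_unit (cutoff_mem_Icc x ρ s) (cutoff_mem_Icc x ρ t)

variable {f : ℝ → ℝ}

theorem hasCompactSupport_cutoff_mul (hρ : 0 < ρ) : HasCompactSupport (cutoff x ρ * f) := by
  refine HasCompactSupport.intro (isCompact_closedBall x ρ) fun t ht => ?_
  rw [Metric.mem_closedBall, not_le, dist_comm, Real.dist_eq] at ht
  rw [Pi.mul_apply, cutoff_eq_zero hρ (by linarith), zero_mul]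

theorem continuous_cutoff_mul (hρ : 0 < ρ) (hf : ContinuousOn f (Metric.ball x ρ)) :
    Continuous (cutoff x ρ * f) := by
  refine continuous_iff_continuousAt.2 fun t => ?_
  by_cases ht : t ∈ Metric.ball x ρ
  · exact (isCutoff_cutoff hρ).continuous.continuousAt.mul
      (hf.continuousAt (Metric.isOpen_ball.mem_nhds ht))
  · rw [Metric.mem_ball, Real.dist_eq, not_lt, abs_sub_comm] at ht
    have hfar : ∀ᶠ s in 𝓝 t, 2 * ρ / 3 < |x - s| :=
      (by fun_prop : Continuous fun s => |x - s|).continuousAt.eventually_const_lt (by linarith)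
    refine (continuousAt_const (y := (0 : ℝ))).congr (hfar.mono fun s hs => ?_)
    rw [Pi.mul_apply, cutoff_eq_zero hρ hs.le, zero_mul]

end Cutoff

theorem WeaklySingular.continuousAt_kerConv {k f : ℝ → ℝ} {θ C : ℝ} (hk : WeaklySingular k θ C)
    (hf : Integrable f) {x ρ : ℝ} (hρ : 0 < ρ) (hc : ContinuousOn f (Metric.ball x ρ)) :
    ContinuousAt (kerConv k f) x := by
  set w : ℝ → ℝ := cutoff x ρ * f
  have hw : Continuous w := continuous_cutoff_mul hρ hc
  have hwc : HasCompactSupport w := hasCompactSupport_cutoff_mul hρ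
  have hwi : Integrable w := hw.integrable_of_hasCompactSupport hwc
  have hv : ∀ t, |x - t| < ρ / 3 → (f - w) t = 0 := fun t ht => by
    change f t - cutoff x ρ t * f t = 0
    rw [cutoff_eq_one hρ ht.le, one_mul, sub_self]
  have hsplit := (hk.continuous_kerConv hw hwc).continuousAt.add
    (hk.continuousAt_kerConv_of_eq_zero (hf.sub hwi) (by positivity) hv)
  refine hsplit.congr ?_
  filter_upwards [Metric.ball_mem_nhds x (by positivity : 0 < ρ / 6)] with y hy
  rw [Metric.mem_ball, Real.dist_eq] at hy
  have hrest : KerConvExistsAt k (f - w) y :=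
    hk.existsAt_of_eq_zero (hf.sub hwi) (ρ := ρ / 6) (by positivity) fun t ht => hv t (by
      linarith [abs_sub_le x y t, abs_sub_comm x y])
  rw [Pi.add_apply, ← kerConv_add (hk.existsAt_of_continuousAt hwi hw.continuousAt) hrest,
    add_sub_cancel]

/-- The commutator of convolution with `k` and multiplication by `χ`. -/
def convCommutator (k χ f : ℝ → ℝ) (x : ℝ) : ℝ := ∫ t, k (x - t) * (χ t - χ x) * f t

namespace WeaklySingular

variable {k χ f : ℝ → ℝ} {θ C Λ : ℝ}

theorem abs_commutator_kernel_le (hk : WeaklySingular k θ C) (hχ : IsCutoff χ Λ) (x t : ℝ) :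
    |k (x - t) * (χ t - χ x)| ≤ C * (Λ + 1) := by
  have hC := hk.nonneg
  have hΛ := hχ.nonneg
  rw [abs_mul]
  rcases le_or_gt 1 |x - t| with h | h
  · have hkx := hk.abs_le_of_le_abs one_pos h
    rw [one_rpow, mul_one] at hkx
    calc |k (x - t)| * |χ t - χ x| ≤ C * 1 := by
          gcongr
          exact hχ.abs_sub_le_one _ _
      _ ≤ C * (Λ + 1) := by gcongr; linarith
  · rcases eq_or_ne (x - t) 0 with h0 | h0
    · rw [h0, hk.map_zero, abs_zero, zero_mul]
      positivity
    have hp : 0 < |x - t| := abs_pos.2 h0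
    have hpow : |x - t| ^ (-θ) * |x - t| ≤ 1 := by
      rw [← rpow_add_one hp.ne']
      exact rpow_le_one hp.le h.le (by linarith [hk.lt_one])
    calc |k (x - t)| * |χ t - χ x| ≤ (C * |x - t| ^ (-θ)) * (Λ * |t - x|) := by
          gcongr
          · exact hk.bound _
          · exact hχ.abs_sub_le _ _
      _ = C * Λ * (|x - t| ^ (-θ) * |x - t|) := by rw [abs_sub_comm t x]; ring
      _ ≤ C * Λ * 1 := by gcongr
      _ ≤ C * (Λ + 1) := by nlinarith

theorem abs_commutator_integrand_le (hk : WeaklySingular k θ C) (hχ : IsCutoff χ Λ) (x t : ℝ) :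
    |k (x - t) * (χ t - χ x) * f t| ≤ C * (Λ + 1) * |f t| := by
  rw [abs_mul]
  exact mul_le_mul_of_nonneg_right (hk.abs_commutator_kernel_le hχ x t) (abs_nonneg _)

theorem integrable_commutator_integrand (hk : WeaklySingular k θ C) (hχ : IsCutoff χ Λ)
    (hf : Integrable f) (x : ℝ) : Integrable fun t => k (x - t) * (χ t - χ x) * f t := by
  refine Integrable.mono' (hf.abs.const_mul (C * (Λ + 1))) ?_
    (.of_forall (hk.abs_commutator_integrand_le hχ x))
  exact ((hk.meas.comp (measurable_const.sub measurable_id)).mul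
    (hχ.continuous.measurable.sub measurable_const)).aestronglyMeasurable.mul
      hf.aestronglyMeasurable

theorem abs_convCommutator_le (hk : WeaklySingular k θ C) (hχ : IsCutoff χ Λ) (hf : Integrable f)
    (x : ℝ) : |convCommutator k χ f x| ≤ C * (Λ + 1) * ∫ t, |f t| := by
  rw [← integral_const_mul]
  exact norm_integral_le_of_norm_le (f := fun t => k (x - t) * (χ t - χ x) * f t)
    (hf.abs.const_mul _) (.of_forall (hk.abs_commutator_integrand_le hχ x))

theorem continuous_convCommutator (hk : WeaklySingular k θ C) (hχ : IsCutoff χ Λ)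
    (hf : Integrable f) : Continuous (convCommutator k χ f) := by
  refine continuous_iff_continuousAt.2 fun x => ?_
  refine continuousAt_of_dominated (bound := fun t => C * (Λ + 1) * |f t|)
    (.of_forall fun y => (hk.integrable_commutator_integrand hχ hf y).aestronglyMeasurable)
    (.of_forall fun y => .of_forall (hk.abs_commutator_integrand_le hχ y)) (hf.abs.const_mul _) ?_
  filter_upwards [volume.ae_ne x] with t ht
  have hkx := hk.cont.continuousAt (isOpen_compl_singleton.mem_nhds (sub_ne_zero.2 ht.symm))
  exact ((hkx.comp (f := fun y => y - t) (by fun_prop)).mul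
    (continuousAt_const.sub hχ.continuous.continuousAt)).mul continuousAt_const

theorem kerConv_mul_integrand_eq (k χ f : ℝ → ℝ) (x : ℝ) :
    (fun t => k (x - t) * (χ * f) t) =
      fun t => χ x * (k (x - t) * f t) + k (x - t) * (χ t - χ x) * f t := by
  ext t
  rw [Pi.mul_apply]
  ring

theorem integrable_cutoff_const_mul {x : ℝ} (h : KerConvExistsAt k f x ∨ χ x = 0) :
    Integrable fun t => χ x * (k (x - t) * f t) := by
  rcases h with h | h
  · exact Integrable.const_mul h _
  · simp only [h, zero_mul]
    exact integrable_zero _ _ _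

theorem existsAt_mul (hk : WeaklySingular k θ C) (hχ : IsCutoff χ Λ) (hf : Integrable f) {x : ℝ}
    (h : KerConvExistsAt k f x ∨ χ x = 0) : KerConvExistsAt k (χ * f) x := by
  rw [kerConvExistsAt_iff, kerConv_mul_integrand_eq]
  exact (integrable_cutoff_const_mul h).add (hk.integrable_commutator_integrand hχ hf x)

theorem kerConv_mul (hk : WeaklySingular k θ C) (hχ : IsCutoff χ Λ) (hf : Integrable f) {x : ℝ}
    (h : KerConvExistsAt k f x ∨ χ x = 0) :
    kerConv k (χ * f) x = χ x * kerConv k f x + convCommutator k χ f x := by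
  rw [kerConv_apply, kerConv_mul_integrand_eq, integral_add (integrable_cutoff_const_mul h)
    (hk.integrable_commutator_integrand hχ hf x), integral_const_mul]
  rfl

end WeaklySingular

/-- The average of the translates of `v` by `r * s`, `s ∈ [0, 1]`, a one-sided mollification. -/
def shiftAverage (r : ℝ) (v : ℝ → ℝ) (t : ℝ) : ℝ := ∫ s in (0 : ℝ)..1, v (t - r * s)

section ShiftAverage

variable {r : ℝ} {v : ℝ → ℝ}

theorem shiftAverage_zero_left (v : ℝ → ℝ) : shiftAverage 0 v = v := by
  ext t
  simp [shiftAverage]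

theorem shiftAverage_comp_neg (r : ℝ) (v : ℝ → ℝ) (t : ℝ) :
    shiftAverage r (fun s => v (-s)) t = shiftAverage (-r) v (-t) := by
  simp only [shiftAverage, neg_sub, neg_mul, sub_neg_eq_add, neg_add_eq_sub]

theorem shiftAverage_eq_inv_mul_integral (hr : r ≠ 0) (v : ℝ → ℝ) (t : ℝ) :
    shiftAverage r v t = r⁻¹ * ∫ s in (t - r)..t, v s := by
  rw [shiftAverage, intervalIntegral.integral_comp_sub_mul v hr, mul_one, mul_zero, sub_zero,
    smul_eq_mul]

theorem shiftAverage_congr_ae (hr : r ≠ 0) {w : ℝ → ℝ} (h : v =ᵐ[volume] w) :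
    shiftAverage r v = shiftAverage r w := by
  ext t
  rw [shiftAverage_eq_inv_mul_integral hr, shiftAverage_eq_inv_mul_integral hr,
    intervalIntegral.integral_congr_ae (h.mono fun _ hs _ => hs)]

theorem continuous_shiftAverage (hr : r ≠ 0) (hv : Integrable v) :
    Continuous (shiftAverage r v) := by
  have hprim : Continuous fun t => ∫ s in (0 : ℝ)..t, v s :=
    intervalIntegral.continuous_primitive (fun _ _ => hv.intervalIntegrable) 0
  refine ((continuous_const (y := r⁻¹)).mul
    (hprim.sub (hprim.comp (continuous_sub_right r)))).congr fun t => ?_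
  rw [shiftAverage_eq_inv_mul_integral hr]
  exact congrArg (r⁻¹ * ·) (intervalIntegral.integral_interval_sub_left
    hv.intervalIntegrable hv.intervalIntegrable)

theorem continuous_shiftAverage_of_continuous (hv : Continuous v) (r : ℝ) :
    Continuous (shiftAverage r v) :=
  intervalIntegral.continuous_parametric_intervalIntegral_of_continuous'
    (by simp only [Function.uncurry_def]; fun_prop) 0 1

theorem measurable_shiftAverage (hv : Measurable v) (r : ℝ) : Measurable (shiftAverage r v) := by
  have hline : StronglyMeasurable fun p : ℝ × ℝ => v (p.1 - r * p.2) :=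
    (hv.comp (by fun_prop)).stronglyMeasurable
  unfold shiftAverage
  simp only [intervalIntegral.integral_of_le zero_le_one]
  exact (hline.integral_prod_right' (ν := volume.restrict (Ioc 0 1))).measurable

theorem abs_shiftAverage_le (r : ℝ) (v : ℝ → ℝ) (t : ℝ) :
    |shiftAverage r v t| ≤ shiftAverage r (fun s => |v s|) t :=
  intervalIntegral.abs_integral_le_integral_abs zero_le_one

theorem shiftAverage_sub {w : ℝ → ℝ} {t : ℝ}
    (hv : IntervalIntegrable (fun s => v (t - r * s)) volume 0 1)
    (hw : IntervalIntegrable (fun s => w (t - r * s)) volume 0 1) :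
    shiftAverage r (v - w) t = shiftAverage r v t - shiftAverage r w t :=
  intervalIntegral.integral_sub hv hw

theorem intervalIntegrable_line (hv : Integrable v) (hr : r ≠ 0) (t : ℝ) :
    IntervalIntegrable (fun s => v (t - r * s)) volume 0 1 :=
  ((hv.comp_sub_left t).comp_mul_left' hr).intervalIntegrable

theorem line_mem_closedBall (r t : ℝ) {s : ℝ} (hs : s ∈ Icc (0 : ℝ) 1) :
    t - r * s ∈ Metric.closedBall t |r| := by
  rw [Metric.mem_closedBall, Real.dist_eq, sub_sub_cancel_left, abs_neg, abs_mul,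
    abs_of_nonneg hs.1]
  exact mul_le_of_le_one_right (abs_nonneg r) hs.2

theorem abs_shiftAverage_sub_le {t c ε : ℝ} (hc : ContinuousOn v (Metric.closedBall t |r|))
    (h : ∀ s ∈ Metric.closedBall t |r|, |v s - c| ≤ ε) : |shiftAverage r v t - c| ≤ ε := by
  have hline : ContinuousOn (fun s => v (t - r * s)) (uIcc 0 1) := by
    rw [uIcc_of_le zero_le_one]
    exact hc.comp (by fun_prop) fun s => line_mem_closedBall r t
  have hsub : shiftAverage r v t - c = ∫ s in (0 : ℝ)..1, (v (t - r * s) - c) := by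
    rw [intervalIntegral.integral_sub hline.intervalIntegrable intervalIntegrable_const,
      intervalIntegral.integral_const, sub_zero, one_smul, shiftAverage]
  have hbound := intervalIntegral.norm_integral_le_of_norm_le_const (a := (0 : ℝ)) (b := 1)
    (f := fun s => v (t - r * s) - c) (C := ε) fun s hs =>
      h _ (line_mem_closedBall r t (Ioc_subset_Icc_self (uIoc_of_le (zero_le_one' ℝ) ▸ hs)))
  rwa [sub_zero, abs_one, mul_one, ← hsub] at hbound

theorem shiftAverage_eq_zero {t : ℝ} (h : ∀ s ∈ Metric.closedBall t |r|, v s = 0) :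
    shiftAverage r v t = 0 := by
  refine (intervalIntegral.integral_congr (g := fun _ => 0) fun s hs => ?_).trans
    intervalIntegral.integral_zero
  exact h _ (line_mem_closedBall r t (uIcc_of_le (zero_le_one' ℝ) ▸ hs))

theorem tendsto_shiftAverage {t : ℝ} (h : ∀ᶠ s in 𝓝 t, ContinuousAt v s) :
    Tendsto (fun r => shiftAverage r v t) (𝓝 0) (𝓝 (v t)) := by
  refine Metric.tendsto_nhds.2 fun ε hε => ?_
  obtain ⟨δ, hδ, hball⟩ := Metric.eventually_nhds_iff_ball.1
    (h.and (h.self_of_nhds.eventually (Metric.ball_mem_nhds _ (half_pos hε))))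
  filter_upwards [Metric.ball_mem_nhds 0 hδ] with r hr
  rw [mem_ball_zero_iff, norm_eq_abs] at hr
  have hsub := Metric.closedBall_subset_ball hr (x := t)
  exact (abs_shiftAverage_sub_le (fun s hs => (hball s (hsub hs)).1.continuousWithinAt)
    fun s hs => (hball s (hsub hs)).2.le).trans_lt (half_lt_self hε)

theorem tendstoUniformlyOn_shiftAverage (hv : Continuous v) {K : Set ℝ} (hK : IsCompact K) :
    TendstoUniformlyOn (fun r => shiftAverage r v) v (𝓝 0) K := by
  have hjoint : Continuous (Function.uncurry fun r => shiftAverage r v) :=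
    intervalIntegral.continuous_parametric_intervalIntegral_of_continuous' (by fun_prop) 0 1
  intro U hU
  obtain ⟨V, hV, hVU⟩ := hK.mem_uniformity_of_prod (s := univ) (q := (0 : ℝ)) hjoint.continuousOn
    (mem_univ _) (symm_le_uniformity hU)
  rw [nhdsWithin_univ] at hV
  filter_upwards [hV] with r hr x hx
  simpa only [shiftAverage_zero_left] using! hVU r hr x hx

theorem measurePreserving_shear (r : ℝ) :
    MeasurePreserving (fun p : ℝ × ℝ => (p.1, p.2 - r * p.1))
      ((volume.restrict (Ioc (0 : ℝ) 1)).prod volume)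
      ((volume.restrict (Ioc (0 : ℝ) 1)).prod volume) :=
  (MeasurePreserving.id _).skew_product (g := fun s t : ℝ => t - r * s)
    (by unfold Function.uncurry; fun_prop)
    (.of_forall fun s => map_sub_right_eq_self volume (r * s))

theorem integrable_shear (r : ℝ) (hv : Integrable v) :
    Integrable (fun p : ℝ × ℝ => v (p.2 - r * p.1))
      ((volume.restrict (Ioc (0 : ℝ) 1)).prod volume) :=
  (measurePreserving_shear r).integrable_comp_of_integrable
    (g := fun p : ℝ × ℝ => v p.2) (hv.comp_snd _)

theorem integrable_shiftAverage (r : ℝ) (hv : Integrable v) : Integrable (shiftAverage r v) := by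
  unfold shiftAverage
  simp only [intervalIntegral.integral_of_le zero_le_one]
  exact (integrable_shear r hv).integral_prod_right

theorem integral_abs_shiftAverage_le (r : ℝ) (hv : Integrable v) :
    ∫ t, |shiftAverage r v t| ≤ ∫ t, |v t| := by
  have hswap : ∫ t, shiftAverage r (fun t => |v t|) t = ∫ t, |v t| := by
    simp only [shiftAverage, intervalIntegral.integral_of_le zero_le_one]
    rw [integral_integral_swap (f := fun t s => |v (t - r * s)|) (integrable_shear r hv.abs).swap]
    simp only [integral_sub_right_eq_self fun t => |v t|, setIntegral_const, measureReal_def,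
      Real.volume_Ioc, sub_zero, ENNReal.ofReal_one, ENNReal.toReal_one, one_smul]
  rw [← hswap]
  exact integral_mono (integrable_shiftAverage r hv).abs (integrable_shiftAverage r hv.abs)
    (abs_shiftAverage_le r v)

theorem tendsto_integral_abs_shiftAverage_sub_of_hasCompactSupport (hv : Continuous v)
    (hc : HasCompactSupport v) :
    Tendsto (fun r => ∫ t, |shiftAverage r v t - v t|) (𝓝 0) (𝓝 0) := by
  obtain ⟨M, hM⟩ := hc.exists_bound_of_continuous hv
  obtain ⟨R, hR⟩ := hc.isCompact.isBounded.subset_closedBall 0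
  have hzero : ∀ t, t ∉ Metric.closedBall 0 R → v t = 0 := fun t ht =>
    image_eq_zero_of_notMem_tsupport fun h => ht (hR h)
  have hbound : ∀ r ∈ Metric.ball (0 : ℝ) 1, ∀ t, ‖|shiftAverage r v t - v t|‖ ≤
      (Metric.closedBall (0 : ℝ) (R + 1)).indicator (fun _ => 2 * M) t := fun r hr t => by
    rw [norm_eq_abs, abs_abs]
    by_cases ht : t ∈ Metric.closedBall 0 (R + 1)
    · rw [indicator_of_mem ht, two_mul]
      exact abs_shiftAverage_sub_le hv.continuousOn fun s _ =>
        (norm_sub_le _ _).trans (add_le_add (hM s) (hM t))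
    · have hfar : ∀ s ∈ Metric.closedBall t |r|, v s = 0 := fun s hs => hzero s fun hs' => ht (by
        rw [mem_closedBall_zero_iff] at hs' ⊢
        rw [mem_ball_zero_iff, norm_eq_abs] at hr
        linarith [norm_le_norm_add_norm_sub' t s, mem_closedBall_iff_norm'.1 hs])
      rw [indicator_of_notMem ht, shiftAverage_eq_zero hfar,
        hfar t (Metric.mem_closedBall_self (abs_nonneg r)), sub_zero, abs_zero]
  have hlim := tendsto_integral_filter_of_dominated_convergence (f := fun _ => (0 : ℝ))
    (F := fun r t => |shiftAverage r v t - v t|) (l := 𝓝 0) (μ := volume) _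
    (.of_forall fun r =>
      ((measurable_shiftAverage hv.measurable r).sub hv.measurable).abs.aestronglyMeasurable)
    (eventually_of_mem (Metric.ball_mem_nhds 0 one_pos) fun r hr => .of_forall (hbound r hr))
    ((integrableOn_const measure_closedBall_lt_top.ne).integrable_indicator
      measurableSet_closedBall)
    (.of_forall fun t => by
      simpa using ((tendsto_shiftAverage (t := t) (.of_forall fun s => hv.continuousAt)).sub_const
        (v t)).abs)
  simpa only [integral_zero] using hlim

theorem integral_abs_shiftAverage_sub_le {w : ℝ → ℝ} (hr : r ≠ 0) (hv : Integrable v)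
    (hw : Integrable w) :
    ∫ t, |shiftAverage r v t - v t| ≤
      2 * (∫ t, |v t - w t|) + ∫ t, |shiftAverage r w t - w t| := by
  have hd : Integrable (v - w) := hv.sub hw
  have hpt : ∀ t, |shiftAverage r v t - v t| ≤
      |shiftAverage r (v - w) t| + |v t - w t| + |shiftAverage r w t - w t| := fun t => by
    rw [shiftAverage_sub (intervalIntegrable_line hv hr t) (intervalIntegrable_line hw hr t)]
    have h₁ := abs_add_le (shiftAverage r v t - shiftAverage r w t - (v t - w t))
      (shiftAverage r w t - w t)
    have h₂ := abs_sub (shiftAverage r v t - shiftAverage r w t) (v t - w t)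
    rw [show shiftAverage r v t - shiftAverage r w t - (v t - w t) +
      (shiftAverage r w t - w t) = shiftAverage r v t - v t by ring] at h₁
    linarith
  have i₁ := (integrable_shiftAverage r hd).abs
  have i₂ : Integrable fun t => |v t - w t| := hd.abs
  have i₃ : Integrable fun t => |shiftAverage r w t - w t| :=
    ((integrable_shiftAverage r hw).sub hw).abs
  have hsum := integral_mono ((integrable_shiftAverage r hv).sub hv).abs ((i₁.add i₂).add i₃) hpt
  rw [integral_add' (i₁.add i₂) i₃, integral_add' i₁ i₂] at hsum
  have hle : ∫ t, |shiftAverage r (v - w) t| ≤ ∫ t, |v t - w t| :=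
    integral_abs_shiftAverage_le r hd
  simp only [Pi.sub_apply] at hsum
  linarith

theorem tendsto_integral_abs_shiftAverage_sub (hv : Integrable v) :
    Tendsto (fun r => ∫ t, |shiftAverage r v t - v t|) (𝓝[≠] 0) (𝓝 0) := by
  refine Metric.tendsto_nhds.2 fun ε hε => ?_
  obtain ⟨w, hwc, hvw, hw, hwi⟩ := hv.exists_hasCompactSupport_integral_sub_le
    (by positivity : 0 < ε / 4)
  have hsmall := (tendsto_integral_abs_shiftAverage_sub_of_hasCompactSupport hw
    hwc).eventually_lt_const (half_pos hε)
  filter_upwards [self_mem_nhdsWithin, nhdsWithin_le_nhds hsmall] with r hr hwr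
  rw [dist_zero_right, norm_eq_abs, abs_of_nonneg (integral_nonneg fun t => abs_nonneg _)]
  have := integral_abs_shiftAverage_sub_le hr hv hwi
  simp only [norm_eq_abs] at hvw
  linarith

end ShiftAverage

/-- The averages of `k` in the direction `σ` are dominated by `k` itself. This makes the one-sided
mollification converge at every point where the convolution with `k` exists. -/
def AverageDominated (k : ℝ → ℝ) (σ : ℝ) : Prop :=
  ∃ C', ∀ r > 0, ∀ s, |shiftAverage (σ * r) k s| ≤ C' * |k s|

theorem AverageDominated.comp_neg {k : ℝ → ℝ} {σ : ℝ} (h : AverageDominated k σ) :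
    AverageDominated (fun s => k (-s)) (-σ) := by
  obtain ⟨C', hC'⟩ := h
  refine ⟨C', fun r hr s => ?_⟩
  rw [shiftAverage_comp_neg, neg_mul, neg_neg]
  exact hC' r hr (-s)

namespace WeaklySingular

variable {k v : ℝ → ℝ} {θ C : ℝ}

theorem kerConv_shiftAverage (hk : WeaklySingular k θ C) (hv : Integrable v) (hvm : Measurable v)
    {r : ℝ} (hr : r ≠ 0) (x : ℝ) :
    kerConv k (shiftAverage r v) x = shiftAverage r (kerConv k v) x := by
  have hinteg : Integrable (fun p : ℝ × ℝ => k (x - p.2) * v (p.2 - r * p.1))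
      ((volume.restrict (Ioc (0 : ℝ) 1)).prod volume) := by
    refine ((measurePreserving_shear r).integrable_comp_of_integrable
      (hk.integrable_prod_line hv hvm x hr)).congr (.of_forall fun p => ?_)
    simp only [Function.comp_apply, sub_sub, add_sub_cancel]
  simp only [shiftAverage, kerConv_apply, intervalIntegral.integral_of_le zero_le_one,
    ← integral_const_mul]
  rw [integral_integral_swap (f := fun t s => k (x - t) * v (t - r * s)) hinteg.swap]
  refine integral_congr_ae (.of_forall fun s => ?_)
  dsimp only
  rw [← integral_sub_right_eq_self (fun t => k (x - r * s - t) * v t) (r * s)]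
  simp only [sub_sub_sub_cancel_right]

theorem kerConv_shiftAverage_eq_kernel (hk : WeaklySingular k θ C) (hv : Integrable v)
    (hvm : Measurable v) {r : ℝ} (hr : r ≠ 0) (x : ℝ) :
    kerConv k (shiftAverage r v) x = kerConv (shiftAverage r k) v x := by
  rw [hk.kerConv_shiftAverage hv hvm hr]
  simp only [shiftAverage, kerConv_apply, intervalIntegral.integral_of_le zero_le_one,
    ← integral_mul_const]
  rw [integral_integral_swap (f := fun s t => k (x - r * s - t) * v t)
    (hk.integrable_prod_line hv hvm x hr)]
  simp only [sub_right_comm]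

theorem tendsto_kerConv_shiftAverage (hk : WeaklySingular k θ C) {σ : ℝ} (hσ : σ ≠ 0)
    (hd : AverageDominated k σ) (hv : Integrable v) (hvm : Measurable v) {x : ℝ}
    (hx : KerConvExistsAt k v x) :
    Tendsto (fun r => kerConv k (shiftAverage (σ * r) v) x) (𝓝[>] 0) (𝓝 (kerConv k v x)) := by
  obtain ⟨C', hC'⟩ := hd
  have hscale : Tendsto (fun r : ℝ => σ * r) (𝓝[>] 0) (𝓝 0) := by
    simpa using ((continuous_const_mul σ).tendsto 0).mono_left nhdsWithin_le_nhds
  have hlim : Tendsto (fun r => kerConv (shiftAverage (σ * r) k) v x) (𝓝[>] 0)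
      (𝓝 (kerConv k v x)) := by
    refine tendsto_integral_filter_of_dominated_convergence (fun t => C' * |k (x - t) * v t|)
      (.of_forall fun r => (((measurable_shiftAverage hk.meas _).comp
        (measurable_const.sub measurable_id)).mul hvm).aestronglyMeasurable)
      ?_ ((Integrable.abs hx).const_mul C') ?_
    · filter_upwards [self_mem_nhdsWithin] with r hr
      refine .of_forall fun t => ?_
      rw [abs_mul, ← mul_assoc]
      exact (norm_mul _ _).trans_le (mul_le_mul_of_nonneg_right (hC' r hr _) (abs_nonneg _))
    · filter_upwards [volume.ae_ne x] with t ht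
      have hcont : ∀ᶠ s in 𝓝 (x - t), ContinuousAt k s :=
        (eventually_ne_nhds (sub_ne_zero.2 ht.symm)).mono fun s hs =>
          hk.cont.continuousAt (isOpen_compl_singleton.mem_nhds hs)
      exact ((tendsto_shiftAverage hcont).comp hscale).mul_const _
  refine hlim.congr' ?_
  filter_upwards [self_mem_nhdsWithin] with r hr
  exact (hk.kerConv_shiftAverage_eq_kernel hv hvm (mul_ne_zero hσ (ne_of_gt hr)) x).symm

end WeaklySingular

/-- The causal power kernel `c s ^ (-θ)` on `s > 0`. -/
def powerKernel (c θ : ℝ) : ℝ → ℝ := (Ioi 0).indicator fun s => c * s ^ (-θ)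

section PowerKernel

variable {c θ s r : ℝ}

theorem powerKernel_of_pos (hs : 0 < s) : powerKernel c θ s = c * s ^ (-θ) :=
  indicator_of_mem (mem_Ioi.2 hs) _

theorem powerKernel_of_nonpos (hs : s ≤ 0) : powerKernel c θ s = 0 :=
  indicator_of_notMem (notMem_Ioi.2 hs) _

theorem abs_powerKernel (c θ s : ℝ) : |powerKernel c θ s| = powerKernel |c| θ s := by
  rcases le_or_gt s 0 with hs | hs
  · rw [powerKernel_of_nonpos hs, powerKernel_of_nonpos hs, abs_zero]
  · rw [powerKernel_of_pos hs, powerKernel_of_pos hs, abs_mul, abs_of_pos (rpow_pos_of_pos hs _)]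

theorem powerKernel_nonneg (hc : 0 ≤ c) (θ s : ℝ) : 0 ≤ powerKernel c θ s :=
  indicator_nonneg (fun _ hs => mul_nonneg hc (rpow_nonneg (le_of_lt hs) _)) s

theorem weaklySingular_powerKernel (c : ℝ) (h0 : 0 < θ) (h1 : θ < 1) :
    WeaklySingular (powerKernel c θ) θ |c| where
  meas := (by fun_prop : Measurable fun s : ℝ => c * s ^ (-θ)).indicator measurableSet_Ioi
  cont := by
    intro s hs
    refine ContinuousAt.continuousWithinAt ?_
    rcases lt_or_gt_of_ne (show s ≠ 0 from hs) with h | h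
    · refine (continuousAt_const (y := (0 : ℝ))).congr ?_
      filter_upwards [Iio_mem_nhds h] with t ht
      exact (powerKernel_of_nonpos (le_of_lt ht)).symm
    · refine (continuousAt_const.mul (continuousAt_rpow_const _ (-θ) (Or.inl h.ne')) :
        ContinuousAt (fun s : ℝ => c * s ^ (-θ)) s).congr ?_
      filter_upwards [Ioi_mem_nhds h] with t ht
      exact (powerKernel_of_pos ht).symm
  bound s := by
    rw [abs_powerKernel]
    rcases le_or_gt s 0 with hs | hs
    · rw [powerKernel_of_nonpos hs]
      positivity
    · rw [powerKernel_of_pos hs, abs_of_pos hs]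
  pos := h0
  lt_one := h1
  nonneg := abs_nonneg c

theorem integral_powerKernel_le (hc : 0 ≤ c) (h1 : θ < 1) (hs : 0 < s) (hr : 0 < r) :
    ∫ t in (s - r)..s, powerKernel c θ t ≤ c * (s ^ (1 - θ) / (1 - θ)) := by
  have hinteg : IntervalIntegrable (fun t : ℝ => c * t ^ (-θ)) volume 0 s :=
    (intervalIntegral.intervalIntegrable_rpow' (by linarith)).const_mul c
  have heq : ∫ t in (0 : ℝ)..s, c * t ^ (-θ) = c * (s ^ (1 - θ) / (1 - θ)) := by
    rw [intervalIntegral.integral_const_mul, integral_rpow (Or.inl (by linarith)),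
      zero_rpow (by linarith), neg_add_eq_sub, sub_zero]
  rw [← heq, intervalIntegral.integral_of_le (by linarith), intervalIntegral.integral_of_le hs.le,
    powerKernel, setIntegral_indicator measurableSet_Ioi]
  refine setIntegral_mono_set hinteg.1 ?_ (.of_forall fun t ht => ⟨ht.2, ht.1.2⟩)
  rw [EventuallyLE, ae_restrict_iff' measurableSet_Ioc]
  exact .of_forall fun t ht => mul_nonneg hc (rpow_nonneg ht.1.le _)

theorem shiftAverage_powerKernel_of_nonpos (hr : 0 < r) (hs : s ≤ 0) :
    shiftAverage r (powerKernel c θ) s = 0 := by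
  refine (intervalIntegral.integral_congr (g := fun _ => 0) fun t ht => ?_).trans
    intervalIntegral.integral_zero
  rw [uIcc_of_le zero_le_one] at ht
  exact powerKernel_of_nonpos (by linarith [mul_nonneg hr.le ht.1])

theorem shiftAverage_powerKernel_le_of_le_half (hc : 0 ≤ c) (h0 : 0 < θ) (h1 : θ < 1) (hr : 0 < r)
    (hrs : r ≤ s / 2) : shiftAverage r (powerKernel c θ) s ≤ 2 * (c * s ^ (-θ)) := by
  have hs : 0 < s := by linarith
  have hpt : ∀ t ∈ uIoc (0 : ℝ) 1, ‖powerKernel c θ (s - r * t)‖ ≤ c * (s / 2) ^ (-θ) :=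
    fun t ht => by
      rw [uIoc_of_le zero_le_one] at ht
      have hhalf : s / 2 ≤ s - r * t := by nlinarith [ht.1, ht.2]
      rw [norm_eq_abs, abs_of_nonneg (powerKernel_nonneg hc _ _),
        powerKernel_of_pos (by linarith)]
      exact mul_le_mul_of_nonneg_left
        (rpow_le_rpow_of_nonpos (half_pos hs) hhalf (by linarith)) hc
  have hinteg := intervalIntegral.norm_integral_le_of_norm_le_const hpt
  rw [sub_zero, abs_one, mul_one] at hinteg
  calc shiftAverage r (powerKernel c θ) s ≤ c * (s / 2) ^ (-θ) := (le_abs_self _).trans hinteg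
    _ = 2 ^ θ * (c * s ^ (-θ)) := by
        rw [div_rpow hs.le zero_le_two, rpow_neg zero_le_two, div_inv_eq_mul]
        ring
    _ ≤ 2 * (c * s ^ (-θ)) := by
        gcongr
        simpa only [rpow_one] using rpow_le_rpow_of_exponent_le one_le_two h1.le

theorem shiftAverage_powerKernel_le_of_half_lt (hc : 0 ≤ c) (h1 : θ < 1) (hs : 0 < s)
    (hrs : s / 2 < r) : shiftAverage r (powerKernel c θ) s ≤ 2 / (1 - θ) * (c * s ^ (-θ)) := by
  have hr : 0 < r := by linarith
  have : 0 < 1 - θ := by linarith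
  calc shiftAverage r (powerKernel c θ) s = r⁻¹ * ∫ t in (s - r)..s, powerKernel c θ t :=
        shiftAverage_eq_inv_mul_integral hr.ne' _ _
    _ ≤ (s / 2)⁻¹ * (c * (s ^ (1 - θ) / (1 - θ))) := by
        refine mul_le_mul (by gcongr) (integral_powerKernel_le hc h1 hs hr) ?_ (by positivity)
        exact intervalIntegral.integral_nonneg (by linarith) fun t _ => powerKernel_nonneg hc _ _
    _ = 2 / (1 - θ) * (c * s ^ (-θ)) := by
        rw [sub_eq_add_neg, rpow_add hs, rpow_one]
        field_simp

theorem averageDominated_powerKernel (c : ℝ) (h0 : 0 < θ) (h1 : θ < 1) :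
    AverageDominated (powerKernel c θ) 1 := by
  refine ⟨2 / (1 - θ), fun r hr s => ?_⟩
  have hθ : 0 < 1 - θ := by linarith
  have hc := abs_nonneg c
  rw [abs_powerKernel, one_mul]
  refine (abs_shiftAverage_le _ _ _).trans ?_
  simp only [abs_powerKernel]
  rcases le_or_gt s 0 with hs | hs
  · rw [shiftAverage_powerKernel_of_nonpos hr hs, powerKernel_of_nonpos hs, mul_zero]
  rw [powerKernel_of_pos hs]
  rcases le_or_gt r (s / 2) with h | h
  · refine (shiftAverage_powerKernel_le_of_le_half hc h0 h1 hr h).trans ?_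
    gcongr
    exact (le_div_iff₀ hθ).2 (by nlinarith)
  · exact shiftAverage_powerKernel_le_of_half_lt hc h1 hs h

end PowerKernel

/-- The function `k₁ * f + k₂ * f`: for the two Caputo kernels and `f = y'` it is the combined
Caputo derivative of `y`. -/
def biConv (k₁ k₂ f : ℝ → ℝ) (x : ℝ) : ℝ := kerConv k₁ f x + kerConv k₂ f x

/-- Both convolutions defining `biConv k₁ k₂ f x` converge absolutely. -/
def BiConvExistsAt (k₁ k₂ f : ℝ → ℝ) (x : ℝ) : Prop :=
  KerConvExistsAt k₁ f x ∧ KerConvExistsAt k₂ f x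

section BiConv

variable {k₁ k₂ f g : ℝ → ℝ} {x : ℝ}

theorem BiConvExistsAt.add (hf : BiConvExistsAt k₁ k₂ f x) (hg : BiConvExistsAt k₁ k₂ g x) :
    BiConvExistsAt k₁ k₂ (f + g) x :=
  ⟨hf.1.add hg.1, hf.2.add hg.2⟩

theorem biConv_add (hf : BiConvExistsAt k₁ k₂ f x) (hg : BiConvExistsAt k₁ k₂ g x) :
    biConv k₁ k₂ (f + g) x = biConv k₁ k₂ f x + biConv k₁ k₂ g x := by
  rw [biConv, kerConv_add hf.1 hg.1, kerConv_add hf.2 hg.2, add_add_add_comm]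
  rfl

theorem biConv_sub (hf : BiConvExistsAt k₁ k₂ f x) (hg : BiConvExistsAt k₁ k₂ g x) :
    biConv k₁ k₂ (f - g) x = biConv k₁ k₂ f x - biConv k₁ k₂ g x := by
  rw [biConv, kerConv_sub hf.1 hg.1, kerConv_sub hf.2 hg.2, sub_add_sub_comm]
  rfl

theorem biConv_const_mul (k₁ k₂ f : ℝ → ℝ) (x c : ℝ) :
    biConv k₁ k₂ (fun t => c * f t) x = c * biConv k₁ k₂ f x := by
  simp only [biConv, kerConv_const_mul, mul_add]

theorem biConv_comp_sub_right (k₁ k₂ f : ℝ → ℝ) (x c : ℝ) :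
    biConv k₁ k₂ (fun t => f (t - c)) x = biConv k₁ k₂ f (x - c) := by
  simp only [biConv, kerConv_comp_sub_right]

end BiConv

/-- A priori control of the first convolution by the sum of the two. Whether it holds decides how
the points at which only one of the two convolutions converges are handled. -/
def AprioriBound (k₁ k₂ : ℝ → ℝ) : Prop :=
  ∃ C, 0 ≤ C ∧ ∀ w : ℝ → ℝ, Continuous w → HasCompactSupport w → ∀ B x : ℝ,
    (∀ s, |s - x| ≤ 1 → |biConv k₁ k₂ w s| ≤ B) → |kerConv k₁ w x| ≤ C * (B + ∫ t, |w t|)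

theorem AprioriBound.exists_common_bound {k₁ k₂ : ℝ → ℝ} (hA : AprioriBound k₁ k₂) :
    ∃ K, 0 < K ∧ ∀ w : ℝ → ℝ, Continuous w → HasCompactSupport w → ∀ ε x : ℝ,
      (∀ s, |s - x| ≤ 1 → |biConv k₁ k₂ w s| ≤ ε) → ∫ t, |w t| ≤ ε →
        |kerConv k₁ w x| ≤ K * ε ∧ |kerConv k₂ w x| ≤ K * ε := by
  obtain ⟨C, hC, hbound⟩ := hA
  refine ⟨2 * C + 1, by positivity, fun w hw hwc ε x hT hwε => ?_⟩
  have hTx : |kerConv k₁ w x + kerConv k₂ w x| ≤ ε := hT x (by simp)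
  have hε : 0 ≤ ε := (abs_nonneg _).trans hTx
  have hk₁ : |kerConv k₁ w x| ≤ 2 * C * ε :=
    calc |kerConv k₁ w x| ≤ C * (ε + ∫ t, |w t|) := hbound w hw hwc ε x hT
      _ ≤ C * (ε + ε) := by gcongr
      _ = 2 * C * ε := by ring
  have hk₂ : |kerConv k₂ w x| ≤ |kerConv k₁ w x + kerConv k₂ w x| + |kerConv k₁ w x| := by
    simpa using abs_sub (kerConv k₁ w x + kerConv k₂ w x) (kerConv k₁ w x)
  constructor <;> linarith

section WeaklySingularPair

variable {k₁ k₂ f v Ψ : ℝ → ℝ} {θ₁ θ₂ C₁ C₂ x : ℝ}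

theorem biConvExistsAt_of_continuousAt (h₁ : WeaklySingular k₁ θ₁ C₁)
    (h₂ : WeaklySingular k₂ θ₂ C₂) (hf : Integrable f) (hc : ContinuousAt f x) :
    BiConvExistsAt k₁ k₂ f x :=
  ⟨h₁.existsAt_of_continuousAt hf hc, h₂.existsAt_of_continuousAt hf hc⟩

theorem continuous_biConv (h₁ : WeaklySingular k₁ θ₁ C₁) (h₂ : WeaklySingular k₂ θ₂ C₂)
    (hf : Continuous f) (hc : HasCompactSupport f) : Continuous (biConv k₁ k₂ f) :=
  (h₁.continuous_kerConv hf hc).add (h₂.continuous_kerConv hf hc)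

theorem biConv_mul {χ : ℝ → ℝ} {Λ : ℝ} (h₁ : WeaklySingular k₁ θ₁ C₁)
    (h₂ : WeaklySingular k₂ θ₂ C₂) (hχ : IsCutoff χ Λ) (hf : Integrable f)
    (h : BiConvExistsAt k₁ k₂ f x ∨ χ x = 0) :
    biConv k₁ k₂ (χ * f) x =
      χ x * biConv k₁ k₂ f x + (convCommutator k₁ χ f x + convCommutator k₂ χ f x) := by
  rw [biConv, h₁.kerConv_mul hχ hf (h.imp_left And.left),
    h₂.kerConv_mul hχ hf (h.imp_left And.right), add_add_add_comm, ← mul_add]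
  rfl

theorem biConv_shiftAverage (h₁ : WeaklySingular k₁ θ₁ C₁) (h₂ : WeaklySingular k₂ θ₂ C₂)
    (hv : Integrable v) (hvm : Measurable v) (hΨ : ∀ᵐ x, biConv k₁ k₂ v x = Ψ x) {r : ℝ}
    (hr : r ≠ 0) : biConv k₁ k₂ (shiftAverage r v) = shiftAverage r Ψ := by
  have hline : ∀ {k : ℝ → ℝ} {θ C : ℝ} (x : ℝ), WeaklySingular k θ C →
      IntervalIntegrable (fun s => kerConv k v (x - r * s)) volume 0 1 := fun x hk => by
    rw [intervalIntegrable_iff_integrableOn_Ioc_of_le zero_le_one]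
    exact (hk.integrable_prod_line hv hvm x hr).integral_prod_left
  ext x
  rw [← shiftAverage_congr_ae hr hΨ, biConv, h₁.kerConv_shiftAverage hv hvm hr,
    h₂.kerConv_shiftAverage hv hvm hr]
  exact (intervalIntegral.integral_add (hline x h₁) (hline x h₂)).symm

end WeaklySingularPair

section Mollification

variable {k₁ k₂ v Ψ : ℝ → ℝ} {θ₁ θ₂ C₁ C₂ : ℝ}

theorem hasCompactSupport_shiftAverage (hvc : HasCompactSupport v) (r : ℝ) :
    HasCompactSupport (shiftAverage r v) := by
  refine HasCompactSupport.intro (hvc.isCompact.cthickening (r := |r|)) fun t ht => ?_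
  refine shiftAverage_eq_zero fun s hs => image_eq_zero_of_notMem_tsupport fun hsv => ht ?_
  exact Metric.mem_cthickening_of_dist_le t s |r| _ hsv (by rwa [dist_comm])

theorem exists_bound_kerConv_shiftAverage_sub (h₁ : WeaklySingular k₁ θ₁ C₁)
    (h₂ : WeaklySingular k₂ θ₂ C₂) (hA : AprioriBound k₁ k₂) (hv : Integrable v)
    (hvm : Measurable v) (hvc : HasCompactSupport v) (hΨ : ∀ᵐ x, biConv k₁ k₂ v x = Ψ x) :
    ∃ K, 0 < K ∧ ∀ r ≠ 0, ∀ r' ≠ 0, ∀ ε x : ℝ,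
      (∀ s, |s - x| ≤ 1 → |shiftAverage r Ψ s - shiftAverage r' Ψ s| ≤ ε) →
      ∫ t, |shiftAverage r v t - shiftAverage r' v t| ≤ ε →
        |kerConv k₁ (shiftAverage r v) x - kerConv k₁ (shiftAverage r' v) x| ≤ K * ε ∧
        |kerConv k₂ (shiftAverage r v) x - kerConv k₂ (shiftAverage r' v) x| ≤ K * ε := by
  obtain ⟨K, hK, hbound⟩ := hA.exists_common_bound
  refine ⟨K, hK, fun r hr r' hr' ε x hT hn => ?_⟩
  have hex : ∀ {r : ℝ} (s : ℝ), r ≠ 0 → BiConvExistsAt k₁ k₂ (shiftAverage r v) s := fun s hr =>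
    biConvExistsAt_of_continuousAt h₁ h₂ (integrable_shiftAverage _ hv)
      (continuous_shiftAverage hr hv).continuousAt
  rw [← kerConv_sub (hex x hr).1 (hex x hr').1, ← kerConv_sub (hex x hr).2 (hex x hr').2]
  refine hbound _ ((continuous_shiftAverage hr hv).sub (continuous_shiftAverage hr' hv))
    ((hasCompactSupport_shiftAverage hvc r).sub (hasCompactSupport_shiftAverage hvc r'))
    ε x (fun s hs => ?_) hn
  rw [biConv_sub (hex s hr) (hex s hr'), biConv_shiftAverage h₁ h₂ hv hvm hΨ hr,
    biConv_shiftAverage h₁ h₂ hv hvm hΨ hr']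
  exact hT s hs

/-- The shift averages at scale `r` are `ε`-close to `v` in `L¹` and to `Ψ` uniformly on `K`. -/
def ShiftAverageClose (v Ψ : ℝ → ℝ) (K : Set ℝ) (ε r : ℝ) : Prop :=
  ∫ t, |shiftAverage r v t - v t| ≤ ε ∧ ∀ x ∈ K, |shiftAverage r Ψ x - Ψ x| ≤ ε

theorem eventually_shiftAverageClose (hv : Integrable v) (hΨ : Continuous Ψ) {K : Set ℝ}
    (hK : IsCompact K) {ε : ℝ} (hε : 0 < ε) : ∀ᶠ r in 𝓝[≠] 0, ShiftAverageClose v Ψ K ε r := by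
  have hunif := Metric.tendstoUniformlyOn_iff.1 (tendstoUniformlyOn_shiftAverage hΨ hK) ε hε
  filter_upwards [(tendsto_integral_abs_shiftAverage_sub hv).eventually (Iic_mem_nhds hε),
    hunif.filter_mono nhdsWithin_le_nhds] with r hL hU
  refine ⟨hL, fun x hx => ?_⟩
  rw [← Real.dist_eq, dist_comm]
  exact (hU x hx).le

theorem integral_abs_shiftAverage_sub_shiftAverage_le (hv : Integrable v) (r r' : ℝ) :
    ∫ t, |shiftAverage r v t - shiftAverage r' v t| ≤
      (∫ t, |shiftAverage r v t - v t|) + ∫ t, |shiftAverage r' v t - v t| := by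
  have hi := integrable_shiftAverage (v := v) r hv
  have hi' := integrable_shiftAverage (v := v) r' hv
  refine le_of_le_of_eq ?_ (integral_add (hi.sub hv).abs (hi'.sub hv).abs)
  refine integral_mono (hi.sub hi').abs ((hi.sub hv).abs.add (hi'.sub hv).abs) fun t => ?_
  simpa using abs_sub (shiftAverage r v t - v t) (shiftAverage r' v t - v t)

/-- `k₁ * f` and `k₂ * f` are `η`-close at `x` to those of `v` among `k₁ * v` and `k₂ * v` that
converge there. -/
def KerConvsClose (k₁ k₂ f v : ℝ → ℝ) (η x : ℝ) : Prop :=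
  (KerConvExistsAt k₁ v x → |kerConv k₁ f x - kerConv k₁ v x| ≤ η) ∧
    (KerConvExistsAt k₂ v x → |kerConv k₂ f x - kerConv k₂ v x| ≤ η)

theorem eventually_kerConvsClose_shiftAverage (h₁ : WeaklySingular k₁ θ₁ C₁)
    (h₂ : WeaklySingular k₂ θ₂ C₂) (hd₁ : AverageDominated k₁ 1)
    (hd₂ : AverageDominated k₂ (-1)) (hA : AprioriBound k₁ k₂) (hv : Integrable v)
    (hvm : Measurable v) (hvc : HasCompactSupport v) (hΨc : Continuous Ψ)
    (hΨ : ∀ᵐ x, biConv k₁ k₂ v x = Ψ x) (a b : ℝ) {η : ℝ} (hη : 0 < η) :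
    ∀ᶠ r in 𝓝[≠] 0, ∀ x ∈ Icc a b, KerConvsClose k₁ k₂ (shiftAverage r v) v η x := by
  obtain ⟨K, hK, hbound⟩ := exists_bound_kerConv_shiftAverage_sub h₁ h₂ hA hv hvm hvc hΨ
  set ε := η / (2 * K) with hε
  have hεη : K * (ε + ε) = η := by rw [hε]; field_simp; ring
  have hclose := eventually_shiftAverageClose hv hΨc (isCompact_Icc (a := a - 1) (b := b + 1))
    (by positivity : 0 < ε)
  filter_upwards [hclose, self_mem_nhdsWithin] with r hr hr0 x hx
  -- The averages form a Cauchy family: compare scale `r` with `r'` and let `r' → 0`.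
  have hcauchy : ∀ᶠ r' in 𝓝[≠] 0,
      |kerConv k₁ (shiftAverage r v) x - kerConv k₁ (shiftAverage r' v) x| ≤ η ∧
      |kerConv k₂ (shiftAverage r v) x - kerConv k₂ (shiftAverage r' v) x| ≤ η := by
    filter_upwards [hclose, self_mem_nhdsWithin] with r' hr' hr'0
    rw [← hεη]
    refine hbound r hr0 r' hr'0 (ε + ε) x (fun s hs => ?_)
      ((integral_abs_shiftAverage_sub_shiftAverage_le hv r r').trans (add_le_add hr.1 hr'.1))
    have hs' : s ∈ Icc (a - 1) (b + 1) :=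
      ⟨by linarith [hx.1, neg_le_of_abs_le hs], by linarith [hx.2, le_of_abs_le hs]⟩
    calc |shiftAverage r Ψ s - shiftAverage r' Ψ s|
        = |(shiftAverage r Ψ s - Ψ s) - (shiftAverage r' Ψ s - Ψ s)| := by ring_nf
      _ ≤ ε + ε := (abs_sub _ _).trans (add_le_add (hr.2 s hs') (hr'.2 s hs'))
  have hσ : ∀ σ : ℝ, σ ≠ 0 → Tendsto (σ * ·) (𝓝[>] 0) (𝓝[≠] 0) := fun σ hσ => by
    refine tendsto_nhdsWithin_iff.2 ⟨?_, ?_⟩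
    · exact ((continuous_const_mul σ).tendsto' 0 0 (mul_zero σ)).mono_left nhdsWithin_le_nhds
    · filter_upwards [self_mem_nhdsWithin] with t ht using mul_ne_zero hσ (ne_of_gt ht)
  constructor <;> intro hex
  · exact le_of_tendsto (tendsto_const_nhds.sub
      (h₁.tendsto_kerConv_shiftAverage one_ne_zero hd₁ hv hvm hex)).abs
      (((hσ 1 one_ne_zero).eventually hcauchy).mono fun _ h => h.1)
  · have hneg : (-1 : ℝ) ≠ 0 := by norm_num
    exact le_of_tendsto (tendsto_const_nhds.sub
      (h₂.tendsto_kerConv_shiftAverage hneg hd₂ hv hvm hex)).abs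
      (((hσ (-1) hneg).eventually hcauchy).mono fun _ h => h.2)

theorem exists_shiftAverageClose (h₁ : WeaklySingular k₁ θ₁ C₁) (h₂ : WeaklySingular k₂ θ₂ C₂)
    (hd₁ : AverageDominated k₁ 1) (hd₂ : AverageDominated k₂ (-1)) (hv : Integrable v)
    (hvm : Measurable v) (hvc : HasCompactSupport v) (hΨc : Continuous Ψ)
    (hΨ : ∀ᵐ x, biConv k₁ k₂ v x = Ψ x) (a b : ℝ) {η ρ : ℝ} (hη : 0 < η) (hρ : 0 < ρ) :
    ∃ r, r ≠ 0 ∧ |r| ≤ ρ ∧ ShiftAverageClose v Ψ (Icc a b) η r ∧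
      (AprioriBound k₁ k₂ →
        ∀ x ∈ Icc a b, KerConvsClose k₁ k₂ (shiftAverage r v) v η x) := by
  have hsmall : ∀ᶠ r : ℝ in 𝓝[≠] 0, |r| ≤ ρ :=
    (continuous_abs.tendsto' (0 : ℝ) 0 abs_zero).mono_left nhdsWithin_le_nhds
      |>.eventually (Iic_mem_nhds hρ)
  have hA : ∀ᶠ r in 𝓝[≠] 0, AprioriBound k₁ k₂ →
      ∀ x ∈ Icc a b, KerConvsClose k₁ k₂ (shiftAverage r v) v η x :=
    eventually_imp_distrib_left.2 fun hA =>
      eventually_kerConvsClose_shiftAverage h₁ h₂ hd₁ hd₂ hA hv hvm hvc hΨc hΨ a b hη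
  obtain ⟨r, hr0, hrρ, hclose, hrA⟩ := (eventually_mem_nhdsWithin.and (hsmall.and
    ((eventually_shiftAverageClose hv hΨc (isCompact_Icc (a := a) (b := b)) hη).and hA))).exists
  exact ⟨r, hr0, hrρ, hclose, hrA⟩

end Mollification

theorem exists_pos_le_mul_le {A B ε : ℝ} (hA : 0 ≤ A) (hB : 0 ≤ B) (hε : 0 < ε) :
    ∃ δ, 0 < δ ∧ δ ≤ ε ∧ A * δ ≤ ε ∧ B * δ ≤ ε := by
  have hM : 0 < 1 + A + B := by positivity
  have hle : ∀ c ≤ 1 + A + B, c * (ε / (1 + A + B)) ≤ ε := fun c hc =>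
    (mul_le_mul_of_nonneg_right hc (by positivity)).trans_eq (mul_div_cancel₀ _ hM.ne')
  exact ⟨ε / (1 + A + B), by positivity, by simpa using hle 1 (by linarith),
    hle A (by linarith), hle B (by linarith)⟩

theorem integral_abs_tsum_le {ι : Type*} [Countable ι] {F : ι → ℝ → ℝ}
    (hF : ∀ i, Integrable (F i)) (hs : Summable fun i => ∫ t, |F i t|) :
    ∫ t, |∑' i, F i t| ≤ ∑' i, ∫ t, |F i t| := by
  have hF' : ∀ i, Integrable fun t => |F i t| := fun i => (hF i).abs
  have hs' : Summable fun i => ∫ t, |(|F i t|)| := by simpa only [abs_abs] using hs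
  rw [(hasSum_integral_of_summable_integral_norm hF' hs').tsum_eq]
  refine integral_mono_of_nonneg (.of_forall fun t => abs_nonneg _)
    (integrable_tsum_of_summable_integral_abs hF' hs') (.of_forall fun t => ?_)
  by_cases h : Summable fun i => F i t
  · exact norm_tsum_le_tsum_norm h.norm
  · simp only [tsum_eq_zero_of_not_summable h, abs_zero]
    exact tsum_nonneg fun _ => abs_nonneg _

/-- A function concentrated within `ρ` of `x₀` which is negligible, at level `ε`, both in `L¹` and
for `biConv k₁ k₂`, although `k₁ * G` takes the prescribed value `c` at `x₀`. -/
structure IsSpike (k₁ k₂ : ℝ → ℝ) (x₀ ρ ε c : ℝ) (G : ℝ → ℝ) : Prop where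
  continuous : Continuous G
  eq_zero : ∀ t, ρ ≤ |x₀ - t| → G t = 0
  integral_abs_le : ∫ t, |G t| ≤ ε
  abs_biConv_le : ∀ x, |biConv k₁ k₂ G x| ≤ ε
  kerConv_eq : kerConv k₁ G x₀ = c

namespace IsSpike

variable {k₁ k₂ G : ℝ → ℝ} {x₀ ρ ε c : ℝ}

theorem hasCompactSupport (hG : IsSpike k₁ k₂ x₀ ρ ε c G) : HasCompactSupport G := by
  refine HasCompactSupport.intro (isCompact_closedBall x₀ ρ) fun t ht => hG.eq_zero t ?_
  rw [Metric.mem_closedBall, not_le, dist_comm, Real.dist_eq] at ht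
  exact ht.le

theorem integrable (hG : IsSpike k₁ k₂ x₀ ρ ε c G) : Integrable G :=
  hG.continuous.integrable_of_hasCompactSupport hG.hasCompactSupport

theorem const_mul (hG : IsSpike k₁ k₂ x₀ ρ ε c G) (m : ℝ) :
    IsSpike k₁ k₂ x₀ ρ (|m| * ε) (m * c) fun t => m * G t where
  continuous := continuous_const.mul hG.continuous
  eq_zero t ht := by rw [hG.eq_zero t ht, mul_zero]
  integral_abs_le := by
    simp only [abs_mul, integral_const_mul]
    exact mul_le_mul_of_nonneg_left hG.integral_abs_le (abs_nonneg m)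
  abs_biConv_le x := by
    rw [biConv_const_mul, abs_mul]
    exact mul_le_mul_of_nonneg_left (hG.abs_biConv_le x) (abs_nonneg m)
  kerConv_eq := by rw [kerConv_const_mul, hG.kerConv_eq]

theorem mono {ε' ρ' : ℝ} (hG : IsSpike k₁ k₂ x₀ ρ ε c G) (hρ : ρ ≤ ρ') (hε : ε ≤ ε') :
    IsSpike k₁ k₂ x₀ ρ' ε' c G where
  continuous := hG.continuous
  eq_zero t ht := hG.eq_zero t (hρ.trans ht)
  integral_abs_le := hG.integral_abs_le.trans hε
  abs_biConv_le x := (hG.abs_biConv_le x).trans hε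
  kerConv_eq := hG.kerConv_eq

theorem integral_abs_integrand_le {k : ℝ → ℝ} {θ C : ℝ} (hG : IsSpike k₁ k₂ x₀ ρ ε c G)
    (hk : WeaklySingular k θ C) (hρ : 0 < ρ) {x : ℝ} (hx : 2 * ρ ≤ |x - x₀|) :
    ∫ t, |k (x - t) * G t| ≤ C * ρ ^ (-θ) * ε := by
  have hC := hk.nonneg
  refine (hk.integral_abs_integrand_le_of_eq_zero hG.integrable hρ fun t ht =>
    hG.eq_zero t ?_).trans (by gcongr; exact hG.integral_abs_le)
  have := abs_sub_le x t x₀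
  rw [abs_sub_comm t x₀] at this
  linarith

end IsSpike

section Spikes

variable {k₁ k₂ : ℝ → ℝ} {θ₁ θ₂ C₁ C₂ : ℝ}

theorem exists_normalized_of_not_aprioriBound (hA : ¬ AprioriBound k₁ k₂) (x₀ : ℝ) {ε : ℝ}
    (hε : 0 < ε) :
    ∃ w, Continuous w ∧ HasCompactSupport w ∧ (∀ s, |s - x₀| ≤ 1 → |biConv k₁ k₂ w s| ≤ ε) ∧
      ∫ t, |w t| ≤ ε ∧ kerConv k₁ w x₀ = 1 := by
  simp only [AprioriBound] at hA
  push Not at hA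
  obtain ⟨w, hw, hwc, B, x, hB, hlt⟩ := hA ε⁻¹ (by positivity)
  have hB0 : 0 ≤ B := (abs_nonneg _).trans (hB x (by simp))
  have hn0 : 0 ≤ ∫ t, |w t| := integral_nonneg fun _ => abs_nonneg _
  set A := kerConv k₁ w x
  have hA0 : 0 < |A| := lt_of_le_of_lt (by positivity) hlt
  have hsum : |A⁻¹| * (B + ∫ t, |w t|) ≤ ε := by
    rw [inv_mul_lt_iff₀ hε] at hlt
    rw [abs_inv, inv_mul_le_iff₀ hA0, mul_comm]
    exact hlt.le
  have hBε : |A⁻¹| * B ≤ ε := (by gcongr; linarith : |A⁻¹| * B ≤ _).trans hsum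
  have hnε : |A⁻¹| * ∫ t, |w t| ≤ ε := (by gcongr; linarith : |A⁻¹| * _ ≤ _).trans hsum
  refine ⟨fun t => A⁻¹ * w (t - (x₀ - x)), by fun_prop,
    (hwc.comp_homeomorph (Homeomorph.subRight (x₀ - x))).mul_left, fun s hs => ?_, ?_, ?_⟩
  · rw [biConv_const_mul, biConv_comp_sub_right, abs_mul]
    refine (mul_le_mul_of_nonneg_left (hB _ ?_) (abs_nonneg _)).trans hBε
    rwa [show s - (x₀ - x) - x = s - x₀ by ring]
  · simp only [abs_mul, integral_const_mul]
    rwa [integral_sub_right_eq_self fun t => |w t|]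
  · rw [kerConv_const_mul, kerConv_comp_sub_right, sub_sub_cancel,
      inv_mul_cancel₀ (abs_pos.1 hA0)]

theorem abs_convCommutator_add_le {χ f : ℝ → ℝ} {Λ : ℝ} (h₁ : WeaklySingular k₁ θ₁ C₁)
    (h₂ : WeaklySingular k₂ θ₂ C₂) (hχ : IsCutoff χ Λ) (hf : Integrable f) (x : ℝ) :
    |convCommutator k₁ χ f x| + |convCommutator k₂ χ f x| ≤
      (C₁ + C₂) * (Λ + 1) * ∫ t, |f t| := by
  linarith [h₁.abs_convCommutator_le hχ hf x, h₂.abs_convCommutator_le hχ hf x]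

theorem integral_abs_cutoff_mul_le {f : ℝ → ℝ} (hf : Integrable f) (x ρ : ℝ) :
    ∫ t, |(cutoff x ρ * f) t| ≤ ∫ t, |f t| := by
  refine integral_mono_of_nonneg (.of_forall fun t => abs_nonneg _) hf.abs (.of_forall fun t => ?_)
  obtain ⟨h0, h1⟩ := cutoff_mem_Icc x ρ t
  change |cutoff x ρ t * f t| ≤ |f t|
  rw [abs_mul, abs_of_nonneg h0]
  exact mul_le_of_le_one_left (abs_nonneg _) h1

theorem exists_isSpike_near_one (h₁ : WeaklySingular k₁ θ₁ C₁) (h₂ : WeaklySingular k₂ θ₂ C₂)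
    (hA : ¬ AprioriBound k₁ k₂) (x₀ : ℝ) {ρ η : ℝ} (hρ : 0 < ρ) (hρ1 : ρ ≤ 1) (hη : 0 < η) :
    ∃ G c, |c - 1| ≤ η ∧ IsSpike k₁ k₂ x₀ ρ η c G := by
  have hC₁ := h₁.nonneg
  have hC₂ := h₂.nonneg
  have hcut : IsCutoff (cutoff x₀ ρ) (3 / ρ) := isCutoff_cutoff hρ
  set M := (C₁ + C₂) * (3 / ρ + 1)
  have hM0 : 0 ≤ M := by positivity
  set ε := η / (1 + M) with hε
  have hε0 : 0 < ε := by positivity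
  have hεη : ε + M * ε = η := by rw [hε]; field_simp
  obtain ⟨w, hw, hwc, hT, hn, hone⟩ := exists_normalized_of_not_aprioriBound hA x₀ hε0
  have hwi : Integrable w := hw.integrable_of_hasCompactSupport hwc
  have hex : ∀ s, BiConvExistsAt k₁ k₂ w s := fun s =>
    biConvExistsAt_of_continuousAt h₁ h₂ hwi hw.continuousAt
  have hcomm : ∀ s, |convCommutator k₁ (cutoff x₀ ρ) w s| +
      |convCommutator k₂ (cutoff x₀ ρ) w s| ≤ M * ε := fun s =>
    (abs_convCommutator_add_le h₁ h₂ hcut hwi s).trans (by gcongr)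
  have hmain : ∀ s, |cutoff x₀ ρ s * biConv k₁ k₂ w s| ≤ ε := fun s => by
    rcases le_or_gt |s - x₀| 1 with hs | hs
    · obtain ⟨h0, h1⟩ := cutoff_mem_Icc x₀ ρ s
      rw [abs_mul, abs_of_nonneg h0]
      exact (mul_le_of_le_one_left (abs_nonneg _) h1).trans (hT s hs)
    · rw [cutoff_eq_zero hρ (by rw [abs_sub_comm]; linarith), zero_mul, abs_zero]
      exact hε0.le
  refine ⟨cutoff x₀ ρ * w, kerConv k₁ (cutoff x₀ ρ * w) x₀, ?_, ?_⟩
  · rw [h₁.kerConv_mul hcut hwi (.inl (hex x₀).1), hone,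
      cutoff_eq_one hρ (by rw [sub_self, abs_zero]; positivity), mul_one, add_sub_cancel_left]
    linarith [hcomm x₀, abs_nonneg (convCommutator k₂ (cutoff x₀ ρ) w x₀)]
  · refine ⟨hcut.continuous.mul hw, fun t ht => ?_, ?_, fun s => ?_, rfl⟩
    · rw [Pi.mul_apply, cutoff_eq_zero hρ (by linarith), zero_mul]
    · linarith [integral_abs_cutoff_mul_le hwi x₀ ρ, mul_nonneg hM0 hε0.le]
    · rw [biConv_mul h₁ h₂ hcut hwi (.inl (hex s))]
      refine (abs_add_le _ _).trans ?_
      linarith [hmain s, hcomm s, abs_add_le (convCommutator k₁ (cutoff x₀ ρ) w s)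
        (convCommutator k₂ (cutoff x₀ ρ) w s)]

theorem exists_isSpike (h₁ : WeaklySingular k₁ θ₁ C₁) (h₂ : WeaklySingular k₂ θ₂ C₂)
    (hA : ¬ AprioriBound k₁ k₂) (x₀ : ℝ) {ρ η : ℝ} (hρ : 0 < ρ) (hη : 0 < η) (c : ℝ) :
    ∃ G, IsSpike k₁ k₂ x₀ ρ η c G := by
  set ε := min (1 / 2) (η / (2 * (1 + |c|)))
  have hε0 : 0 < ε := lt_min one_half_pos (by positivity)
  obtain ⟨G, c', hc', hG⟩ := exists_isSpike_near_one h₁ h₂ hA x₀ (lt_min hρ one_pos)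
    (min_le_right ρ 1) hε0
  have hc'_ge : 1 / 2 ≤ c' := by
    linarith [neg_le_of_abs_le hc', min_le_left (1 / 2) (η / (2 * (1 + |c|)))]
  have hscale : |c / c'| * ε ≤ η := by
    have hdiv : |c / c'| ≤ 2 * (1 + |c|) := by
      rw [abs_div, abs_of_pos (by linarith : 0 < c'), div_le_iff₀ (by linarith)]
      nlinarith [abs_nonneg c]
    calc |c / c'| * ε ≤ 2 * (1 + |c|) * (η / (2 * (1 + |c|))) := by
          gcongr
          exact min_le_right _ _
      _ = η := by field_simp
  have h := (hG.const_mul (c / c')).mono (min_le_left ρ 1) hscale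
  rw [div_mul_cancel₀ c (by linarith)] at h
  exact ⟨_, h⟩

/-- A function supported within `r i` of the points `xs i`, negligible, at level `η`, both in `L¹`
and for `biConv k₁ k₂`, although `k₁ * w` is `η`-close to `c i` at each `xs i`. -/
structure IsSpikeTrain {ι : Type*} (k₁ k₂ : ℝ → ℝ) (xs r c : ι → ℝ) (η : ℝ) (w : ℝ → ℝ) :
    Prop where
  measurable : Measurable w
  integrable : Integrable w
  eq_zero : ∀ t, (∀ i, r i ≤ |xs i - t|) → w t = 0
  integral_abs_le : ∫ t, |w t| ≤ η
  existsAt : ∀ x, BiConvExistsAt k₁ k₂ w x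
  continuous_biConv : Continuous (biConv k₁ k₂ w)
  abs_biConv_le : ∀ x, |biConv k₁ k₂ w x| ≤ η
  abs_kerConv_sub_le : ∀ i, |kerConv k₁ w (xs i) - c i| ≤ η

section SpikeTrain

variable {ι : Type*} {xs r c ε : ι → ℝ} {F : ι → ℝ → ℝ}

theorem subsingleton_setOf_abs_sub_lt_half (hsep : ∀ i j, i ≠ j → r i ≤ |xs i - xs j|) (x : ℝ) :
    {i | |x - xs i| < r i / 2}.Subsingleton := by
  intro i hi j hj
  rw [mem_ofPred_eq] at hi hj
  by_contra hij
  have hi_le := hsep i j hij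
  have hj_le := hsep j i (Ne.symm hij)
  rw [abs_sub_comm] at hj_le
  have htri := abs_sub_le (xs i) x (xs j)
  rw [abs_sub_comm (xs i) x] at htri
  linarith

theorem summable_of_le_of_half_le {A : ι → ℝ} {x : ℝ} (hε : Summable ε) (hA : ∀ i, 0 ≤ A i)
    (hsep : ∀ i j, i ≠ j → r i ≤ |xs i - xs j|)
    (hfar : ∀ i, r i / 2 ≤ |x - xs i| → A i ≤ ε i) : Summable A := by
  refine Summable.of_norm_bounded_eventually hε (eventually_cofinite.2
    ((subsingleton_setOf_abs_sub_lt_half hsep x).finite.subset fun i hi => ?_))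
  by_contra h
  exact hi ((norm_of_nonneg (hA i)).trans_le (hfar i (not_lt.1 h)))

theorem abs_kerConv_tsum_sub_le {S : ℝ} {i : ι}
    (hF : ∀ i, IsSpike k₁ k₂ (xs i) (r i / 4) (ε i) (c i) (F i))
    (hfar : ∀ i x, r i / 2 ≤ |x - xs i| → ∫ t, |k₁ (x - t) * F i t| ≤ ε i)
    (hr : ∀ i, 0 < r i) (hsep : ∀ i j, i ≠ j → r i ≤ |xs i - xs j|) (hε : HasSum ε S)
    (hsum : HasSum (fun j => kerConv k₁ (F j) (xs i)) (kerConv k₁ (fun t => ∑' j, F j t) (xs i))) :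
    |kerConv k₁ (fun t => ∑' j, F j t) (xs i) - c i| ≤ S := by
  classical
  rw [← (hsum.sub (hasSum_ite_eq i (c i))).tsum_eq, ← norm_eq_abs]
  refine tsum_of_norm_bounded hε fun j => ?_
  split_ifs with hji
  · rw [hji, (hF i).kerConv_eq, sub_self, norm_zero]
    exact (abs_nonneg _).trans ((hF i).abs_biConv_le 0)
  · rw [sub_zero]
    refine (norm_integral_le_integral_norm _).trans (hfar j (xs i) ?_)
    rw [abs_sub_comm]
    linarith [hsep j i hji, hr j]

theorem isSpikeTrain_tsum [Countable ι] {S η : ℝ} (h₁ : WeaklySingular k₁ θ₁ C₁)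
    (h₂ : WeaklySingular k₂ θ₂ C₂) (hF : ∀ i, IsSpike k₁ k₂ (xs i) (r i / 4) (ε i) (c i) (F i))
    (hfar₁ : ∀ i x, r i / 2 ≤ |x - xs i| → ∫ t, |k₁ (x - t) * F i t| ≤ ε i)
    (hfar₂ : ∀ i x, r i / 2 ≤ |x - xs i| → ∫ t, |k₂ (x - t) * F i t| ≤ ε i)
    (hr : ∀ i, 0 < r i) (hsep : ∀ i j, i ≠ j → r i ≤ |xs i - xs j|) (hε : HasSum ε S)
    (hSη : S ≤ η) : IsSpikeTrain k₁ k₂ xs r c η fun t => ∑' i, F i t := by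
  have hex : ∀ i x, BiConvExistsAt k₁ k₂ (F i) x := fun i x =>
    biConvExistsAt_of_continuousAt h₁ h₂ (hF i).integrable (hF i).continuous.continuousAt
  have hsum₁ := fun x => summable_of_le_of_half_le (x := x) hε.summable
    (fun i => integral_nonneg fun _ => abs_nonneg _) hsep (hfar₁ · x)
  have hsum₂ := fun x => summable_of_le_of_half_le (x := x) hε.summable
    (fun i => integral_nonneg fun _ => abs_nonneg _) hsep (hfar₂ · x)
  have hS₁ := fun x => hasSum_kerConv (fun i => (hex i x).1) (hsum₁ x)
  have hST : ∀ x, HasSum (fun i => biConv k₁ k₂ (F i) x)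
      (biConv k₁ k₂ (fun t => ∑' i, F i t) x) := fun x =>
    (hS₁ x).add (hasSum_kerConv (fun i => (hex i x).2) (hsum₂ x))
  have hnorm : Summable fun i => ∫ t, |F i t| :=
    Summable.of_nonneg_of_le (fun i => integral_nonneg fun _ => abs_nonneg _)
      (fun i => (hF i).integral_abs_le) hε.summable
  refine ⟨Measurable.tsum fun i => (hF i).continuous.measurable,
    integrable_tsum_of_summable_integral_abs (fun i => (hF i).integrable) hnorm, fun t ht => ?_,
    ?_, fun x => ⟨kerConvExistsAt_tsum (fun i => (hex i x).1) (hsum₁ x),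
      kerConvExistsAt_tsum (fun i => (hex i x).2) (hsum₂ x)⟩, ?_, fun x => ?_, fun i => ?_⟩
  · have hF0 : ∀ i, F i t = 0 := fun i =>
      (hF i).eq_zero t (by linarith [ht i, hr i, abs_sub_comm t (xs i)])
    simp only [hF0, tsum_zero]
  · refine (integral_abs_tsum_le (fun i => (hF i).integrable) hnorm).trans (le_trans ?_ hSη)
    exact hε.tsum_eq ▸ hnorm.tsum_le_tsum (fun i => (hF i).integral_abs_le) hε.summable
  · rw [show biConv k₁ k₂ (fun t => ∑' i, F i t) = fun x => ∑' i, biConv k₁ k₂ (F i) x from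
      funext fun x => (hST x).tsum_eq.symm]
    exact continuous_tsum (fun i => continuous_biConv h₁ h₂ (hF i).continuous
      (hF i).hasCompactSupport) hε.summable fun i x => (hF i).abs_biConv_le x
  · rw [← (hST x).tsum_eq, ← norm_eq_abs]
    exact (tsum_of_norm_bounded hε fun i => (hF i).abs_biConv_le x).trans hSη
  · exact (abs_kerConv_tsum_sub_le hF hfar₁ hr hsep hε (hS₁ (xs i))).trans hSη

theorem exists_isSpikeTrain [Countable ι] (h₁ : WeaklySingular k₁ θ₁ C₁)
    (h₂ : WeaklySingular k₂ θ₂ C₂) (hA : ¬ AprioriBound k₁ k₂) (hr : ∀ i, 0 < r i)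
    (hsep : ∀ i j, i ≠ j → r i ≤ |xs i - xs j|) (c : ι → ℝ) {η : ℝ} (hη : 0 < η) :
    ∃ w, IsSpikeTrain k₁ k₂ xs r c η w := by
  have := Encodable.ofCountable ι
  obtain ⟨ε, hε, S, hS, hSη⟩ := posSumOfEncodable hη ι
  have hC₁ := h₁.nonneg
  have hC₂ := h₂.nonneg
  have hr4 : ∀ i, 0 < r i / 4 := fun i => by have := hr i; positivity
  choose δ hδ hδε hδ₁ hδ₂ using fun i => exists_pos_le_mul_le
    (mul_nonneg hC₁ (rpow_nonneg (hr4 i).le (-θ₁)))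
    (mul_nonneg hC₂ (rpow_nonneg (hr4 i).le (-θ₂))) (hε i)
  choose F hF using fun i => exists_isSpike h₁ h₂ hA (xs i) (hr4 i) (hδ i) (c i)
  have hfar : ∀ {k : ℝ → ℝ} {θ C : ℝ}, WeaklySingular k θ C →
      (∀ i, C * (r i / 4) ^ (-θ) * δ i ≤ ε i) → ∀ i x, r i / 2 ≤ |x - xs i| →
      ∫ t, |k (x - t) * F i t| ≤ ε i := fun hk hle i x hx =>
    ((hF i).integral_abs_integrand_le hk (hr4 i) (by linarith)).trans (hle i)
  exact ⟨_, isSpikeTrain_tsum h₁ h₂ (fun i => (hF i).mono le_rfl (hδε i)) (hfar h₁ hδ₁)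
    (hfar h₂ hδ₂) hr hsep hS hSη⟩

end SpikeTrain

end Spikes

/-! ### Test functions and the endpoint singularities -/

/-- Continuous functions with compact support in the open interval `(a, b)`. -/
def testSpace (a b : ℝ) : Submodule ℝ (ℝ → ℝ) where
  carrier := {q | Continuous q ∧ ∃ A B, a < A ∧ B < b ∧ ∀ t, t ∉ Icc A B → q t = 0}
  zero_mem' := ⟨continuous_zero, a + 1, b - 1, by linarith, by linarith, fun _ _ => rfl⟩
  add_mem' := by
    rintro p q ⟨hp, A, B, hA, hB, h0⟩ ⟨hq, A', B', hA', hB', h0'⟩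
    refine ⟨hp.add hq, min A A', max B B', lt_min hA hA', max_lt hB hB', fun t ht => ?_⟩
    rw [Pi.add_apply, h0 t fun h => ht ⟨(min_le_left _ _).trans h.1, h.2.trans (le_max_left _ _)⟩,
      h0' t fun h => ht ⟨(min_le_right _ _).trans h.1, h.2.trans (le_max_right _ _)⟩, add_zero]
  smul_mem' := by
    rintro c q ⟨hq, A, B, hA, hB, h0⟩
    exact ⟨hq.const_smul c, A, B, hA, hB, fun t ht => by rw [Pi.smul_apply, h0 t ht, smul_zero]⟩


section TestSpace

variable {a b : ℝ} {q : ℝ → ℝ}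

theorem testSpace.integrable_mul {F : ℝ → ℝ} (hF : ContinuousOn F (Ioo a b))
    (hq : q ∈ testSpace a b) : Integrable fun t => F t * q t := by
  obtain ⟨hqc, A, B, hA, hB, h0⟩ := hq
  refine IntegrableOn.integrable_of_forall_notMem_eq_zero (s := Icc A B) ?_ fun t ht => by
    rw [h0 t ht, mul_zero]
  refine ContinuousOn.integrableOn_Icc ((hF.mono ?_).mul hqc.continuousOn)
  exact fun t ht => ⟨by linarith [ht.1], by linarith [ht.2]⟩

theorem testSpace.hasCompactSupport (hq : q ∈ testSpace a b) : HasCompactSupport q := by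
  obtain ⟨_, A, B, _, _, h0⟩ := hq
  exact HasCompactSupport.intro isCompact_Icc h0

theorem testSpace.integrable (hq : q ∈ testSpace a b) : Integrable q :=
  hq.1.integrable_of_hasCompactSupport (testSpace.hasCompactSupport hq)

theorem testSpace.eq_zero (hq : q ∈ testSpace a b) {t : ℝ} (ht : t ∉ Ioo a b) : q t = 0 := by
  obtain ⟨_, A, B, hA, hB, h0⟩ := hq
  exact h0 t fun h => ht ⟨by linarith [h.1], by linarith [h.2]⟩

theorem mem_testSpace_of_tsupport_subset (hq : Continuous q) (hqc : HasCompactSupport q)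
    (hqs : tsupport q ⊆ Ioo a b) : q ∈ testSpace a b := by
  refine ⟨hq, ?_⟩
  rcases (tsupport q).eq_empty_or_nonempty with he | hne
  · refine ⟨a + 1, b - 1, by linarith, by linarith, fun t _ => ?_⟩
    exact image_eq_zero_of_notMem_tsupport (he ▸ notMem_empty t)
  · have hK : IsCompact (tsupport q) := hqc
    refine ⟨_, _, (hqs (hK.sInf_mem hne)).1, (hqs (hK.sSup_mem hne)).2, fun t ht => ?_⟩
    exact image_eq_zero_of_notMem_tsupport fun h =>
      ht ⟨csInf_le hK.bddBelow h, le_csSup hK.bddAbove h⟩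

/-- Integration against a function continuous on `(a, b)`, as a functional on `testSpace a b`. -/
def pairing (F : ℝ → ℝ) (hF : ContinuousOn F (Ioo a b)) : testSpace a b →ₗ[ℝ] ℝ where
  toFun q := ∫ t, F t * (q : ℝ → ℝ) t
  map_add' p q := by
    simp only [Submodule.coe_add, Pi.add_apply, mul_add]
    exact integral_add (testSpace.integrable_mul hF p.2) (testSpace.integrable_mul hF q.2)
  map_smul' c q := by
    simp only [Submodule.coe_smul, Pi.smul_apply, smul_eq_mul, RingHom.id_apply,
      mul_left_comm _ c]
    exact integral_const_mul _ _

theorem pairing_apply {F : ℝ → ℝ} (hF : ContinuousOn F (Ioo a b)) (q : testSpace a b) :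
    pairing F hF q = ∫ t, F t * (q : ℝ → ℝ) t :=
  rfl

theorem eqOn_zero_of_forall_integral_mul_eq_zero {F : ℝ → ℝ} (hF : ContinuousOn F (Ioo a b))
    (h : ∀ q ∈ testSpace a b, ∫ t, F t * q t = 0) : EqOn F 0 (Ioo a b) := by
  have hae : ∀ᵐ x, x ∈ Ioo a b → F x = 0 := by
    refine isOpen_Ioo.ae_eq_zero_of_integral_contDiff_smul_eq_zero
      (hF.locallyIntegrableOn measurableSet_Ioo) fun q hq hqc hqs => ?_
    simpa only [smul_eq_mul, mul_comm] using
      h q (mem_testSpace_of_tsupport_subset hq.continuous hqc hqs)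
  exact Measure.eqOn_open_of_ae_eq (μ := volume)
    ((ae_restrict_iff' measurableSet_Ioo).2 hae) isOpen_Ioo hF continuousOn_const

variable {ι : Type*} [Fintype ι] {ψ : ι → ℝ → ℝ}

theorem continuousOn_linearCombination (hψ : ∀ i, ContinuousOn (ψ i) (Ioo a b)) (c : ι → ℝ) :
    ContinuousOn (fun t => ∑ i, c i * ψ i t) (Ioo a b) :=
  continuousOn_finsetSum _ fun i _ => continuousOn_const.mul (hψ i)

theorem integral_linearCombination_mul (hψ : ∀ i, ContinuousOn (ψ i) (Ioo a b)) (c : ι → ℝ)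
    (hq : q ∈ testSpace a b) :
    ∫ t, (∑ i, c i * ψ i t) * q t = ∑ i, c i * ∫ t, ψ i t * q t := by
  simp only [Finset.sum_mul, mul_assoc, ← integral_const_mul]
  exact integral_finsetSum _ fun i _ => (testSpace.integrable_mul (hψ i) hq).const_mul (c i)

theorem exists_eq_linearCombination_of_integral_mul_eq_zero {F : ℝ → ℝ}
    (hF : ContinuousOn F (Ioo a b)) (hψ : ∀ i, ContinuousOn (ψ i) (Ioo a b))
    (h : ∀ q ∈ testSpace a b, (∀ i, ∫ t, ψ i t * q t = 0) → ∫ t, F t * q t = 0) :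
    ∃ c : ι → ℝ, ∀ t ∈ Ioo a b, F t = ∑ i, c i * ψ i t := by
  have hspan : pairing F hF ∈ Submodule.span ℝ (range fun i => pairing (ψ i) (hψ i)) := by
    refine mem_span_of_iInf_ker_le_ker fun q hq => ?_
    simp only [Submodule.mem_iInf, LinearMap.mem_ker] at hq ⊢
    exact h q q.2 hq
  obtain ⟨c, hc⟩ := (Submodule.mem_span_range_iff_exists_fun _).1 hspan
  have hψc := continuousOn_linearCombination hψ c
  refine ⟨c, fun t ht => sub_eq_zero.1 (eqOn_zero_of_forall_integral_mul_eq_zero (hF.sub hψc)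
    (fun q hq => ?_) ht)⟩
  have hcq := LinearMap.congr_fun hc ⟨q, hq⟩
  simp only [LinearMap.sum_apply, LinearMap.smul_apply, smul_eq_mul, pairing_apply] at hcq
  change ∫ t, (F t - ∑ i, c i * ψ i t) * q t = 0
  simp only [sub_mul]
  rw [integral_sub (testSpace.integrable_mul hF hq) (testSpace.integrable_mul hψc hq),
    integral_linearCombination_mul hψ c hq, hcq, sub_self]

theorem exists_testSpace_integral_mul_eq (hψ : ∀ i, ContinuousOn (ψ i) (Ioo a b))
    (hind : ∀ c : ι → ℝ, (∀ t ∈ Ioo a b, ∑ i, c i * ψ i t = 0) → c = 0) (m : ι → ℝ) :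
    ∃ q ∈ testSpace a b, ∀ i, ∫ t, ψ i t * q t = m i := by
  classical
  have hsurj : Function.Surjective (LinearMap.pi fun i => pairing (ψ i) (hψ i)) := by
    refine LinearMap.dualMap_injective_iff.1 ((injective_iff_map_eq_zero _).2 fun g hg => ?_)
    have hc : (fun i => g fun j => if i = j then 1 else 0) = 0 := hind _ fun t ht =>
      eqOn_zero_of_forall_integral_mul_eq_zero (continuousOn_linearCombination hψ _)
        (fun q hq => ?_) ht
    · refine LinearMap.ext fun v => ?_
      rw [LinearMap.pi_apply_eq_sum_univ, LinearMap.zero_apply]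
      exact Finset.sum_eq_zero fun i _ => by rw [congrFun hc i, Pi.zero_apply, smul_zero]
    · have hgq := LinearMap.congr_fun hg ⟨q, hq⟩
      rw [LinearMap.dualMap_apply, LinearMap.pi_apply_eq_sum_univ] at hgq
      rw [integral_linearCombination_mul hψ _ hq]
      simpa [pairing_apply, mul_comm] using hgq
  obtain ⟨q, hq⟩ := hsurj m
  exact ⟨q, q.2, fun i => congrFun hq i⟩

end TestSpace

section EndpointFun

variable {a b α β : ℝ}

theorem eq_zero_of_abs_add_rpow_add_rpow_le {c₀ c₁ c₂ M : ℝ} (hab : a < b) (hα : 0 < α)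
    (hβ : 0 < β)
    (h : ∀ t ∈ Ioo a b, |c₀ + c₁ * (t - a) ^ (-β) + c₂ * (b - t) ^ (-α)| ≤ M) : c₁ = 0 := by
  by_contra hc
  have hblow : Tendsto (fun s : ℝ => |c₁| * s ^ (-β)) (𝓝[>] 0) atTop :=
    (tendsto_rpow_neg_nhdsGT_zero (by linarith)).const_mul_atTop (abs_pos.2 hc)
  have hmid : (0 : ℝ) < (b - a) / 2 := by linarith
  obtain ⟨s, hs, hs0, hsm⟩ := ((hblow.eventually_gt_atTop
    (M + |c₀| + |c₂| * ((b - a) / 2) ^ (-α))).and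
    (Ioo_mem_nhdsGT hmid)).exists
  have hbound := h (a + s) ⟨by linarith, by linarith⟩
  rw [add_sub_cancel_left] at hbound
  have hpow : (b - (a + s)) ^ (-α) ≤ ((b - a) / 2) ^ (-α) :=
    rpow_le_rpow_of_nonpos hmid (by linarith) (by linarith)
  have hpow0 : 0 ≤ (b - (a + s)) ^ (-α) := rpow_nonneg (by linarith) _
  have hfar : |c₂ * (b - (a + s)) ^ (-α)| ≤ |c₂| * ((b - a) / 2) ^ (-α) := by
    rw [abs_mul, abs_of_nonneg hpow0]; gcongr
  have hnear : |c₁ * s ^ (-β)| ≤ |c₀ + c₁ * s ^ (-β) + c₂ * (b - (a + s)) ^ (-α)| + |c₀|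
      + |c₂ * (b - (a + s)) ^ (-α)| := by
    have hsub := abs_sub (c₀ + c₁ * s ^ (-β) + c₂ * (b - (a + s)) ^ (-α))
      (c₀ + c₂ * (b - (a + s)) ^ (-α))
    rw [show c₀ + c₁ * s ^ (-β) + c₂ * (b - (a + s)) ^ (-α) - (c₀ + c₂ * (b - (a + s)) ^ (-α))
      = c₁ * s ^ (-β) by ring] at hsub
    linarith [abs_add_le c₀ (c₂ * (b - (a + s)) ^ (-α))]
  rw [abs_mul, abs_of_nonneg (rpow_nonneg hs0.le _)] at hnear
  linarith

/-- The constant function and the two endpoint singularities `(t - a) ^ (-β)`, `(b - t) ^ (-α)`. -/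
def endpointFun (a b α β : ℝ) : Fin 3 → ℝ → ℝ :=
  ![fun _ => 1, fun t => (t - a) ^ (-β), fun t => (b - t) ^ (-α)]

theorem continuousOn_endpointFun (a b α β : ℝ) (i : Fin 3) :
    ContinuousOn (endpointFun a b α β i) (Ioo a b) := by
  fin_cases i
  · exact continuousOn_const
  · exact ContinuousOn.rpow_const (by fun_prop) fun t ht => Or.inl (by linarith [ht.1])
  · exact ContinuousOn.rpow_const (by fun_prop) fun t ht => Or.inl (by linarith [ht.2])

theorem coeff_eq_zero_of_abs_sum_endpointFun_le (hab : a < b) (hα : 0 < α) (hβ : 0 < β)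
    {c : Fin 3 → ℝ} {M : ℝ} (h : ∀ t ∈ Ioo a b, |∑ i, c i * endpointFun a b α β i t| ≤ M) :
    c 1 = 0 ∧ c 2 = 0 := by
  replace h : ∀ t ∈ Ioo a b, |c 0 + c 1 * (t - a) ^ (-β) + c 2 * (b - t) ^ (-α)| ≤ M :=
    fun t ht => by simpa [Fin.sum_univ_three, endpointFun] using h t ht
  refine ⟨eq_zero_of_abs_add_rpow_add_rpow_le hab hα hβ h,
    eq_zero_of_abs_add_rpow_add_rpow_le (a := a) (b := b) (c₀ := c 0) (c₂ := c 1) (M := M)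
      hab hβ hα fun t ht => ?_⟩
  have hrefl := h (a + b - t) ⟨by linarith [ht.2], by linarith [ht.1]⟩
  rw [show a + b - t - a = b - t by ring, show b - (a + b - t) = t - a by ring] at hrefl
  rwa [add_right_comm]

theorem eq_zero_of_sum_endpointFun_eq_zero (hab : a < b) (hα : 0 < α) (hβ : 0 < β)
    {c : Fin 3 → ℝ} (h : ∀ t ∈ Ioo a b, ∑ i, c i * endpointFun a b α β i t = 0) : c = 0 := by
  obtain ⟨hc₁, hc₂⟩ := coeff_eq_zero_of_abs_sum_endpointFun_le (M := 0) hab hα hβ fun t ht => by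
    rw [h t ht, abs_zero]
  have hmid := h ((a + b) / 2) ⟨by linarith, by linarith⟩
  rw [Fin.sum_univ_three, hc₁, hc₂] at hmid
  ext i
  fin_cases i
  · simpa [endpointFun] using hmid
  · exact hc₁
  · exact hc₂

end EndpointFun

/-! ### Interior mollification -/

/-- The distance from `t ∈ (a, b)` to the endpoints, negative outside of `[a, b]`. -/
def boundaryDist (a b t : ℝ) : ℝ := min (t - a) (b - t)

/-- The cutoff equal to `1` at distance at least `2 / n` from the endpoints of `(a, b)` and to `0`
at distance at most `1 / n`. -/
def exhaustion (a b : ℝ) (n : ℕ) (t : ℝ) : ℝ := max 0 (min 1 (n * boundaryDist a b t - 1))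

/-- The partition of unity of `(a, b)` into shells on which the distance to the endpoints is
comparable to `1 / j`. -/
def shell (a b : ℝ) (j : ℕ) (t : ℝ) : ℝ := exhaustion a b (j + 1) t - exhaustion a b j t

section Shell

variable {a b t : ℝ} {n j : ℕ}

theorem boundaryDist_pos : 0 < boundaryDist a b t ↔ t ∈ Ioo a b := by
  simp [boundaryDist]

theorem boundaryDist_nonpos (ht : t ∉ Ioo a b) : boundaryDist a b t ≤ 0 :=
  not_lt.1 fun h => ht (boundaryDist_pos.1 h)

theorem abs_boundaryDist_sub_le (a b s t : ℝ) :
    |boundaryDist a b s - boundaryDist a b t| ≤ |s - t| := by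
  refine (abs_min_sub_min_le_max _ _ _ _).trans (max_le ?_ ?_)
  · rw [sub_sub_sub_cancel_right]
  · rw [sub_sub_sub_cancel_left, abs_sub_comm]

theorem half_boundaryDist_le {x : ℝ} (h : |x - t| < boundaryDist a b x / 2) :
    boundaryDist a b x / 2 ≤ boundaryDist a b t := by
  linarith [le_of_abs_le (abs_boundaryDist_sub_le a b x t)]

theorem exhaustion_eq_zero (h : n * boundaryDist a b t ≤ 1) : exhaustion a b n t = 0 :=
  max_eq_left ((min_le_right _ _).trans (by linarith))

theorem exhaustion_eq_one (h : 2 ≤ n * boundaryDist a b t) : exhaustion a b n t = 1 := by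
  rw [exhaustion, min_eq_left (by linarith), max_eq_right zero_le_one]

theorem exhaustion_nonneg (a b : ℝ) (n : ℕ) (t : ℝ) : 0 ≤ exhaustion a b n t := le_max_left _ _

theorem exhaustion_le_one (a b : ℝ) (n : ℕ) (t : ℝ) : exhaustion a b n t ≤ 1 :=
  max_le zero_le_one (min_le_left _ _)

theorem abs_exhaustion_sub_le (a b : ℝ) (n : ℕ) (s t : ℝ) :
    |exhaustion a b n s - exhaustion a b n t| ≤ n * |s - t| := by
  refine (abs_clamp_sub_clamp_le _ _).trans ?_
  rw [sub_sub_sub_cancel_right, ← mul_sub, abs_mul, Nat.abs_cast]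
  exact mul_le_mul_of_nonneg_left (abs_boundaryDist_sub_le a b s t) n.cast_nonneg

theorem shell_eq_zero_of_near (h : (j + 1) * boundaryDist a b t ≤ 1) : shell a b j t = 0 := by
  have : (0 : ℝ) ≤ j := j.cast_nonneg
  rw [shell, exhaustion_eq_zero (by push_cast; exact h), exhaustion_eq_zero, sub_zero]
  rcases le_total 0 (boundaryDist a b t) with hd | hd <;> nlinarith

theorem shell_eq_zero_of_far (h : 2 ≤ j * boundaryDist a b t) : shell a b j t = 0 := by
  have : (0 : ℝ) ≤ j := j.cast_nonneg
  have hd : 0 ≤ boundaryDist a b t := by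
    by_contra hd
    nlinarith
  rw [shell, exhaustion_eq_one h, exhaustion_eq_one (by push_cast; linarith), sub_self]

theorem shell_eq_zero_of_notMem (j : ℕ) (ht : t ∉ Ioo a b) : shell a b j t = 0 :=
  shell_eq_zero_of_near ((mul_nonpos_of_nonneg_of_nonpos (by positivity)
    (boundaryDist_nonpos ht)).trans zero_le_one)

theorem shell_mem_unit (a b : ℝ) (j : ℕ) (t : ℝ) : shell a b j t ∈ Icc (0 : ℝ) 1 := by
  constructor
  · rcases le_total 0 (boundaryDist a b t) with hd | hd
    · rw [shell, exhaustion, exhaustion, sub_nonneg]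
      gcongr
      exact j.le_succ
    · rw [shell_eq_zero_of_near ((mul_nonpos_of_nonneg_of_nonpos (by positivity) hd).trans
        zero_le_one)]
  · rw [shell]
    linarith [exhaustion_le_one a b (j + 1) t, exhaustion_nonneg a b j t]

theorem isCutoff_shell (a b : ℝ) (j : ℕ) : IsCutoff (shell a b j) (2 * j + 1) where
  abs_sub_le s t := by
    have h1 := abs_exhaustion_sub_le a b (j + 1) s t
    have h2 := abs_exhaustion_sub_le a b j s t
    push_cast at h1
    calc |shell a b j s - shell a b j t|
        = |(exhaustion a b (j + 1) s - exhaustion a b (j + 1) t) -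
            (exhaustion a b j s - exhaustion a b j t)| := by
          rw [shell, shell, sub_sub_sub_comm]
      _ ≤ (j + 1) * |s - t| + j * |s - t| := (abs_sub _ _).trans (add_le_add h1 h2)
      _ = (2 * j + 1) * |s - t| := by ring
  abs_sub_le_one s t := abs_sub_le_one_of_mem_unit (shell_mem_unit a b j s) (shell_mem_unit a b j t)

theorem sum_shell (a b : ℝ) (n : ℕ) (t : ℝ) :
    ∑ j ∈ Finset.range n, shell a b j t = exhaustion a b n t := by
  simp only [shell]
  rw [Finset.sum_range_sub (exhaustion a b · t), exhaustion_eq_zero (n := 0) (by simp), sub_zero]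

theorem measurable_shell_mul {u : ℝ → ℝ} (hu : Measurable u) : Measurable (shell a b j * u) :=
  (isCutoff_shell a b j).continuous.measurable.mul hu

theorem integrable_shell_mul {u : ℝ → ℝ} (hu : Integrable u) : Integrable (shell a b j * u) := by
  refine hu.abs.mono' ((isCutoff_shell a b j).continuous.aestronglyMeasurable.mul
    hu.aestronglyMeasurable) (.of_forall fun t => ?_)
  rw [Pi.mul_apply, norm_mul, norm_eq_abs, abs_of_nonneg (shell_mem_unit a b j t).1]
  exact mul_le_of_le_one_left (abs_nonneg _) (shell_mem_unit a b j t).2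

theorem hasCompactSupport_shell_mul (a b : ℝ) (j : ℕ) (u : ℝ → ℝ) :
    HasCompactSupport (shell a b j * u) :=
  HasCompactSupport.intro isCompact_Icc fun t ht => by
    rw [Pi.mul_apply, shell_eq_zero_of_notMem j fun h => ht (Ioo_subset_Icc_self h), zero_mul]

end Shell

/-- A sequence of functions, the `j`-th living where the distance to the endpoints of `(a, b)` is
comparable to `1 / j`. -/
structure IsShellFamily (a b : ℝ) (P : ℕ → ℝ → ℝ) : Prop where
  measurable : ∀ j, Measurable (P j)
  integrable : ∀ j, Integrable (P j)
  eq_zero_of_near : ∀ (j : ℕ) t, (j + 2) * boundaryDist a b t ≤ 1 → P j t = 0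
  eq_zero_of_far : ∀ (j : ℕ) t, 3 ≤ j * boundaryDist a b t → P j t = 0

namespace IsShellFamily

variable {a b x t : ℝ} {P : ℕ → ℝ → ℝ}

theorem eq_zero (hP : IsShellFamily a b P) (ht : t ∉ Ioo a b) (j : ℕ) : P j t = 0 :=
  hP.eq_zero_of_near j t ((mul_nonpos_of_nonneg_of_nonpos (by positivity)
    (boundaryDist_nonpos ht)).trans zero_le_one)

theorem eq_zero_of_abs_sub_lt (hP : IsShellFamily a b P) (hx : x ∉ Ioo a b) {j : ℕ}
    (ht : |x - t| < 1 / (j + 2)) : P j t = 0 := by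
  have hdist : boundaryDist a b t ≤ 1 / (j + 2) := by
    linarith [neg_le_of_abs_le (abs_boundaryDist_sub_le a b x t), boundaryDist_nonpos hx]
  refine hP.eq_zero_of_near j t ((mul_le_mul_of_nonneg_left hdist (by positivity)).trans_eq ?_)
  field_simp

theorem exists_forall_eq_zero (hP : IsShellFamily a b P) (hx : x ∈ Ioo a b) :
    ∃ n : ℕ, ∀ t, |x - t| < boundaryDist a b x / 2 →
      3 ≤ n * boundaryDist a b t ∧ ∀ j ≥ n, P j t = 0 := by
  have hd := boundaryDist_pos.2 hx
  obtain ⟨n, hn⟩ := exists_nat_ge (6 / boundaryDist a b x)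
  rw [div_le_iff₀ hd] at hn
  have hfar : ∀ j ≥ n, ∀ t, |x - t| < boundaryDist a b x / 2 → 3 ≤ j * boundaryDist a b t :=
    fun j hj t ht => by
      have h1 : (n : ℝ) ≤ j := Nat.cast_le.2 hj
      have h2 : n * (boundaryDist a b x / 2) ≤ j * boundaryDist a b t :=
        mul_le_mul h1 (half_boundaryDist_le ht) (half_pos hd).le j.cast_nonneg
      linarith
  exact ⟨n, fun t ht => ⟨hfar n le_rfl t ht, fun j hj => hP.eq_zero_of_far j t (hfar j hj t ht)⟩⟩

theorem summable_integral_abs_integrand {k : ℝ → ℝ} {θ C : ℝ} {ε : ℕ → ℝ}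
    (hP : IsShellFamily a b P) (hk : WeaklySingular k θ C) (hε : Summable ε)
    (hle : ∀ j, ∫ t, |P j t| ≤ ε j)
    (hle' : ∀ j : ℕ, C * (1 / (j + 2) : ℝ) ^ (-θ) * ∫ t, |P j t| ≤ ε j) (x : ℝ) :
    Summable fun j => ∫ t, |k (x - t) * P j t| := by
  have hC := hk.nonneg
  by_cases hx : x ∈ Ioo a b
  · have hd := boundaryDist_pos.2 hx
    obtain ⟨n, hn⟩ := hP.exists_forall_eq_zero hx
    refine Summable.of_norm_bounded_eventually
      (hε.mul_left (C * (boundaryDist a b x / 2) ^ (-θ))) ?_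
    rw [Nat.cofinite_eq_atTop]
    filter_upwards [eventually_ge_atTop n] with j hj
    rw [norm_eq_abs, abs_of_nonneg (integral_nonneg fun _ => abs_nonneg _)]
    refine (hk.integral_abs_integrand_le_of_eq_zero (hP.integrable j) (half_pos hd) fun t ht =>
      (hn t ht).2 j hj).trans (mul_le_mul_of_nonneg_left (hle j) (by positivity))
  · exact Summable.of_nonneg_of_le (fun j => integral_nonneg fun _ => abs_nonneg _)
      (fun j => (hk.integral_abs_integrand_le_of_eq_zero (hP.integrable j) (by positivity)
        fun t ht => hP.eq_zero_of_abs_sub_lt hx ht).trans (hle' j)) hε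

end IsShellFamily

/-- `u` is an integrable function living on `(a, b)` for which `biConv k₁ k₂ u` is given on
`[a, b]` by the continuous function `φ`, in the sense of the possibly junk value of `biConv`. -/
structure IsBiConvSolution (k₁ k₂ : ℝ → ℝ) (a b : ℝ) (u φ : ℝ → ℝ) : Prop where
  integrable : Integrable u
  measurable : Measurable u
  eq_zero : ∀ t, t ∉ Ioo a b → u t = 0
  continuous : Continuous φ
  biConv_eq : ∀ x ∈ Icc a b, biConv k₁ k₂ u x = φ x

/-- The continuous function `biConv k₁ k₂ (shell a b j * u)` when `biConv k₁ k₂ u = φ`. -/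
def shellForcing (k₁ k₂ : ℝ → ℝ) (a b : ℝ) (u φ : ℝ → ℝ) (j : ℕ) (x : ℝ) : ℝ :=
  shell a b j x * φ x + (convCommutator k₁ (shell a b j) u x + convCommutator k₂ (shell a b j) u x)

/-- The error made in replacing the part of `u` on the `j`-th shell by its shift average. -/
def shellError (a b : ℝ) (u : ℝ → ℝ) (j : ℕ) (r : ℝ) : ℝ → ℝ :=
  shiftAverage r (shell a b j * u) - shell a b j * u

/-- `r` is an admissible mollification scale on the `j`-th shell: short compared to the width of
the shell, and accurate to within `δ`. -/
structure IsShellRadius (k₁ k₂ : ℝ → ℝ) (a b : ℝ) (u φ : ℝ → ℝ) (δ : ℝ) (j : ℕ) (r : ℝ) :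
    Prop where
  ne_zero : r ≠ 0
  abs_le : |r| ≤ 1 / ((j + 1) * (j + 2))
  close : ShiftAverageClose (shell a b j * u) (shellForcing k₁ k₂ a b u φ j) (Icc a b) δ r
  kerConvsClose : AprioriBound k₁ k₂ → ∀ x ∈ Icc a b,
    KerConvsClose k₁ k₂ (shiftAverage r (shell a b j * u)) (shell a b j * u) δ x

section ShellError

variable {k₁ k₂ u φ : ℝ → ℝ} {θ₁ θ₂ C₁ C₂ a b x t r : ℝ} {j : ℕ}

theorem shellError_eq_zero_of_near (hr : |r| ≤ 1 / ((j + 1) * (j + 2)))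
    (ht : (j + 2) * boundaryDist a b t ≤ 1) : shellError a b u j r t = 0 := by
  have hv : ∀ s ∈ Metric.closedBall t |r|, (shell a b j * u) s = 0 := fun s hs => by
    rw [Metric.mem_closedBall, Real.dist_eq] at hs
    have hdist : boundaryDist a b s ≤ 1 / (j + 2) + 1 / ((j + 1) * (j + 2)) := by
      have := (le_div_iff₀' (by positivity)).2 ht
      linarith [le_of_abs_le (abs_boundaryDist_sub_le a b s t)]
    have hsum : (j + 1 : ℝ) * (1 / (j + 2) + 1 / ((j + 1) * (j + 2))) = 1 := by
      field_simp
      ring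
    rw [Pi.mul_apply, shell_eq_zero_of_near, zero_mul]
    exact (mul_le_mul_of_nonneg_left hdist (by positivity)).trans_eq hsum
  rw [shellError, Pi.sub_apply, shiftAverage_eq_zero hv, hv t (by simp), sub_zero]

theorem shellError_eq_zero_of_far (hr : |r| ≤ 1 / ((j + 1) * (j + 2)))
    (ht : 3 ≤ j * boundaryDist a b t) : shellError a b u j r t = 0 := by
  have hv : ∀ s ∈ Metric.closedBall t |r|, (shell a b j * u) s = 0 := fun s hs => by
    rw [Metric.mem_closedBall, Real.dist_eq] at hs
    have hj : (0 : ℝ) ≤ j := j.cast_nonneg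
    have hdist : boundaryDist a b t - 1 / ((j + 1) * (j + 2)) ≤ boundaryDist a b s := by
      linarith [neg_le_of_abs_le (abs_boundaryDist_sub_le a b s t)]
    have hle : (j : ℝ) * (1 / ((j + 1) * (j + 2))) ≤ 1 := by
      rw [mul_one_div, div_le_one (by positivity)]
      nlinarith
    rw [Pi.mul_apply, shell_eq_zero_of_far, zero_mul]
    linarith [mul_le_mul_of_nonneg_left hdist hj]
  rw [shellError, Pi.sub_apply, shiftAverage_eq_zero hv, hv t (by simp), sub_zero]

variable (hu : IsBiConvSolution k₁ k₂ a b u φ)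
include hu

theorem isShellFamily_shellError {r : ℕ → ℝ}
    (hr : ∀ j : ℕ, |r j| ≤ 1 / ((j + 1) * (j + 2))) :
    IsShellFamily a b fun j => shellError a b u j (r j) where
  measurable _ := (measurable_shiftAverage (measurable_shell_mul hu.measurable) _).sub
    (measurable_shell_mul hu.measurable)
  integrable _ := (integrable_shiftAverage _ (integrable_shell_mul hu.integrable)).sub
    (integrable_shell_mul hu.integrable)
  eq_zero_of_near _ _ := shellError_eq_zero_of_near (hr _)
  eq_zero_of_far _ _ := shellError_eq_zero_of_far (hr _)

theorem continuousOn_add_tsum_shellError {r : ℕ → ℝ} (hr0 : ∀ j, r j ≠ 0)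
    (hr : ∀ j : ℕ, |r j| ≤ 1 / ((j + 1) * (j + 2))) (hx : x ∈ Ioo a b) :
    ContinuousOn (u + fun t => ∑' j, shellError a b u j (r j) t)
      (Metric.ball x (boundaryDist a b x / 2)) := by
  obtain ⟨n, hn⟩ := (isShellFamily_shellError hu hr).exists_forall_eq_zero hx
  have hcont : Continuous fun t =>
      ∑ j ∈ Finset.range n, shiftAverage (r j) (shell a b j * u) t :=
    continuous_finsetSum _ fun j _ =>
      continuous_shiftAverage (hr0 j) (integrable_shell_mul hu.integrable)
  refine hcont.continuousOn.congr fun t ht => ?_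
  rw [Metric.mem_ball, Real.dist_eq, abs_sub_comm] at ht
  obtain ⟨hnt, hzero⟩ := hn t ht
  have hu_eq : u t = ∑ j ∈ Finset.range n, (shell a b j * u) t := by
    simp only [Pi.mul_apply]
    rw [← Finset.sum_mul, sum_shell, exhaustion_eq_one (by linarith), one_mul]
  have hp_eq : ∑' j, shellError a b u j (r j) t =
      ∑ j ∈ Finset.range n, shellError a b u j (r j) t :=
    tsum_eq_sum fun j hj => hzero j (by simpa using hj)
  rw [Pi.add_apply, hp_eq, hu_eq, ← Finset.sum_add_distrib]
  exact Finset.sum_congr rfl fun j _ => by rw [shellError, Pi.sub_apply, add_sub_cancel]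

theorem existsAt_shellError {k : ℝ → ℝ} {θ C : ℝ} (hk : WeaklySingular k θ C) (hr : r ≠ 0)
    (h : KerConvExistsAt k u x ∨ shell a b j x = 0) :
    KerConvExistsAt k (shellError a b u j r) x :=
  (hk.existsAt_of_continuousAt (integrable_shiftAverage r (integrable_shell_mul hu.integrable))
    (continuous_shiftAverage hr (integrable_shell_mul hu.integrable)).continuousAt).sub
    (hk.existsAt_mul (isCutoff_shell a b j) hu.integrable h)

theorem kerConv_shellError {k : ℝ → ℝ} {θ C : ℝ} (hk : WeaklySingular k θ C) (hr : r ≠ 0)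
    (h : KerConvExistsAt k u x ∨ shell a b j x = 0) :
    kerConv k (shellError a b u j r) x =
      kerConv k (shiftAverage r (shell a b j * u)) x - kerConv k (shell a b j * u) x :=
  kerConv_sub (hk.existsAt_of_continuousAt
    (integrable_shiftAverage r (integrable_shell_mul hu.integrable))
    (continuous_shiftAverage hr (integrable_shell_mul hu.integrable)).continuousAt)
    (hk.existsAt_mul (isCutoff_shell a b j) hu.integrable h)

variable (h₁ : WeaklySingular k₁ θ₁ C₁) (h₂ : WeaklySingular k₂ θ₂ C₂)
include h₁ h₂

theorem continuous_shellForcing : Continuous (shellForcing k₁ k₂ a b u φ j) :=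
  ((isCutoff_shell a b j).continuous.mul hu.continuous).add
    ((h₁.continuous_convCommutator (isCutoff_shell a b j) hu.integrable).add
      (h₂.continuous_convCommutator (isCutoff_shell a b j) hu.integrable))

theorem biConv_shell_mul (h : BiConvExistsAt k₁ k₂ u x ∨ shell a b j x = 0) :
    biConv k₁ k₂ (shell a b j * u) x = shellForcing k₁ k₂ a b u φ j x := by
  rw [biConv_mul h₁ h₂ (isCutoff_shell a b j) hu.integrable h, shellForcing]
  congr 1
  by_cases hx : x ∈ Ioo a b
  · rw [hu.biConv_eq x (Ioo_subset_Icc_self hx)]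
  · rw [shell_eq_zero_of_notMem j hx, zero_mul, zero_mul]

theorem ae_biConvExistsAt : ∀ᵐ x, BiConvExistsAt k₁ k₂ u x :=
  (h₁.ae_kerConvExistsAt hu.integrable hu.measurable).and
    (h₂.ae_kerConvExistsAt hu.integrable hu.measurable)

theorem ae_biConv_shell_mul (j : ℕ) :
    ∀ᵐ x, biConv k₁ k₂ (shell a b j * u) x = shellForcing k₁ k₂ a b u φ j x :=
  (ae_biConvExistsAt hu h₁ h₂).mono fun _ hx => biConv_shell_mul hu h₁ h₂ (.inl hx)

theorem biConv_shellError (hr : r ≠ 0) (h : BiConvExistsAt k₁ k₂ u x ∨ shell a b j x = 0) :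
    biConv k₁ k₂ (shellError a b u j r) x =
      shiftAverage r (shellForcing k₁ k₂ a b u φ j) x - shellForcing k₁ k₂ a b u φ j x := by
  rw [← biConv_shell_mul hu h₁ h₂ h, ← biConv_shiftAverage h₁ h₂
    (integrable_shell_mul hu.integrable) (measurable_shell_mul hu.measurable)
    (ae_biConv_shell_mul hu h₁ h₂ j) hr, biConv, kerConv_shellError hu h₁ hr (h.imp_left And.left),
    kerConv_shellError hu h₂ hr (h.imp_left And.right), sub_add_sub_comm]
  rfl

theorem exists_isShellRadius (hd₁ : AverageDominated k₁ 1) (hd₂ : AverageDominated k₂ (-1))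
    {δ : ℝ} (hδ : 0 < δ) (j : ℕ) : ∃ r, IsShellRadius k₁ k₂ a b u φ δ j r := by
  obtain ⟨r, hr0, hr, hclose, hA⟩ := exists_shiftAverageClose h₁ h₂ hd₁ hd₂
    (integrable_shell_mul hu.integrable) (measurable_shell_mul hu.measurable)
    (hasCompactSupport_shell_mul a b j u) (continuous_shellForcing hu h₁ h₂)
    (ae_biConv_shell_mul hu h₁ h₂ j) a b hδ
    (by positivity : (0 : ℝ) < 1 / ((j + 1) * (j + 2)))
  exact ⟨r, hr0, hr, hclose, hA⟩

end ShellError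

/-- `p` is a measurable perturbation living on `(a, b)` of `L¹` size `η`, and `τ` a continuous one
on `[a, b]` of uniform size `η`. -/
structure IsSmallPerturbation (a b η : ℝ) (p τ : ℝ → ℝ) : Prop where
  measurable : Measurable p
  integrable : Integrable p
  eq_zero : ∀ t, t ∉ Ioo a b → p t = 0
  integral_abs_le : ∫ t, |p t| ≤ η
  continuousOn : ContinuousOn τ (Icc a b)
  abs_le : ∀ x ∈ Icc a b, |τ x| ≤ η

/-- Adding `p` makes `u` continuous inside `(a, b)` and changes the value of `biConv k₁ k₂ u` by the
small continuous function `τ`. -/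
structure IsInteriorMollification (k₁ k₂ : ℝ → ℝ) (a b : ℝ) (u : ℝ → ℝ) (η : ℝ) (p τ : ℝ → ℝ) :
    Prop extends IsSmallPerturbation a b η p τ where
  continuousAt : ∀ x ∈ Ioo a b, ContinuousAt (u + p) x
  biConv_add : ∀ x ∈ Ioo a b, biConv k₁ k₂ (u + p) x = biConv k₁ k₂ u x + τ x
  existsAt : ∀ x, BiConvExistsAt k₁ k₂ u x ∨ x ∉ Ioo a b → BiConvExistsAt k₁ k₂ p x
  biConv_eq : ∀ x, BiConvExistsAt k₁ k₂ u x ∨ x ∉ Ioo a b → biConv k₁ k₂ p x = τ x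
  abs_kerConv_left_le : AprioriBound k₁ k₂ → ∀ x ∈ Ioo a b, KerConvExistsAt k₁ u x →
    |kerConv k₁ p x| ≤ η
  abs_kerConv_right_le : AprioriBound k₁ k₂ → ∀ x ∈ Ioo a b, KerConvExistsAt k₂ u x →
    |kerConv k₂ p x| ≤ η

section Assembly

variable {k₁ k₂ u φ : ℝ → ℝ} {θ₁ θ₂ C₁ C₂ a b S η : ℝ} {ε δ r : ℕ → ℝ}

theorem isSmallPerturbation_tsum_shellError (hu : IsBiConvSolution k₁ k₂ a b u φ)
    (h₁ : WeaklySingular k₁ θ₁ C₁) (h₂ : WeaklySingular k₂ θ₂ C₂)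
    (hr : ∀ j, IsShellRadius k₁ k₂ a b u φ (δ j) j (r j)) (hδ : ∀ j, δ j ≤ ε j) (hε : HasSum ε S)
    (hS : S ≤ η) :
    IsSmallPerturbation a b η (fun t => ∑' j, shellError a b u j (r j) t) fun x =>
      ∑' j, (shiftAverage (r j) (shellForcing k₁ k₂ a b u φ j) x -
        shellForcing k₁ k₂ a b u φ j x) := by
  have hP := isShellFamily_shellError hu fun j => (hr j).abs_le
  have hle : ∀ j, ∫ t, |shellError a b u j (r j) t| ≤ ε j := fun j =>
    (hr j).close.1.trans (hδ j)
  have hnorm : Summable fun j => ∫ t, |shellError a b u j (r j) t| :=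
    Summable.of_nonneg_of_le (fun j => integral_nonneg fun _ => abs_nonneg _) hle hε.summable
  have hτ : ∀ j, ∀ x ∈ Icc a b, ‖shiftAverage (r j) (shellForcing k₁ k₂ a b u φ j) x -
      shellForcing k₁ k₂ a b u φ j x‖ ≤ ε j := fun j x hx => ((hr j).close.2 x hx).trans (hδ j)
  refine ⟨.tsum hP.measurable, integrable_tsum_of_summable_integral_abs hP.integrable hnorm,
    fun t ht => by simp only [hP.eq_zero ht, tsum_zero], ?_, ?_, fun x hx => ?_⟩
  · refine (integral_abs_tsum_le hP.integrable hnorm).trans (le_trans ?_ hS)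
    exact hε.tsum_eq ▸ hnorm.tsum_le_tsum hle hε.summable
  · refine continuousOn_tsum (fun j => ContinuousOn.sub ?_ ?_) hε.summable hτ
    · exact (continuous_shiftAverage_of_continuous
        (continuous_shellForcing hu h₁ h₂) (r j)).continuousOn
    · exact (continuous_shellForcing hu h₁ h₂).continuousOn
  · rw [← norm_eq_abs]
    exact (tsum_of_norm_bounded hε fun j => hτ j x hx).trans hS

theorem abs_kerConv_tsum_shellError_le {k : ℝ → ℝ} {θ C x : ℝ}
    (hu : IsBiConvSolution k₁ k₂ a b u φ) (hk : WeaklySingular k θ C)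
    (hr : ∀ j, IsShellRadius k₁ k₂ a b u φ (δ j) j (r j)) (hδ : ∀ j, δ j ≤ ε j) (hε : HasSum ε S)
    (hS : S ≤ η) (hx : KerConvExistsAt k u x)
    (hs : Summable fun j => ∫ t, |k (x - t) * shellError a b u j (r j) t|)
    (hclose : ∀ j, KerConvExistsAt k (shell a b j * u) x →
      |kerConv k (shiftAverage (r j) (shell a b j * u)) x - kerConv k (shell a b j * u) x| ≤ δ j) :
    |kerConv k (fun t => ∑' j, shellError a b u j (r j) t) x| ≤ η := by
  rw [← (hasSum_kerConv (fun j => existsAt_shellError hu hk (hr j).ne_zero (.inl hx)) hs).tsum_eq,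
    ← norm_eq_abs]
  refine (tsum_of_norm_bounded hε fun j => ?_).trans hS
  rw [kerConv_shellError hu hk (hr j).ne_zero (.inl hx)]
  exact (hclose j (hk.existsAt_mul (isCutoff_shell a b j) hu.integrable (.inl hx))).trans (hδ j)

theorem biConv_add_eq_of_ae {p τ : ℝ → ℝ} (hu : IsBiConvSolution k₁ k₂ a b u φ)
    (h₁ : WeaklySingular k₁ θ₁ C₁) (h₂ : WeaklySingular k₂ θ₂ C₂)
    (hp : IsSmallPerturbation a b η p τ)
    (hcont : ∀ x ∈ Ioo a b, ContinuousOn (u + p) (Metric.ball x (boundaryDist a b x / 2)))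
    (hae : ∀ᵐ x, biConv k₁ k₂ (u + p) x = biConv k₁ k₂ u x + τ x) {x : ℝ} (hx : x ∈ Ioo a b) :
    biConv k₁ k₂ (u + p) x = biConv k₁ k₂ u x + τ x := by
  rw [hu.biConv_eq x (Ioo_subset_Icc_self hx)]
  refine Measure.eqOn_open_of_ae_eq (μ := volume) (f := biConv k₁ k₂ (u + p)) (g := φ + τ) ?_
    isOpen_Ioo (fun y hy => ?_)
    ((hu.continuous.continuousOn.add hp.continuousOn).mono Ioo_subset_Icc_self) hx
  · refine (ae_restrict_iff' measurableSet_Ioo).2 (hae.mono fun y he hy => ?_)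
    rw [he, hu.biConv_eq y (Ioo_subset_Icc_self hy), Pi.add_apply]
  · have hd := half_pos (boundaryDist_pos.2 hy)
    have hup := hu.integrable.add hp.integrable
    exact ((h₁.continuousAt_kerConv hup hd (hcont y hy)).add
      (h₂.continuousAt_kerConv hup hd (hcont y hy))).continuousWithinAt

theorem exists_isInteriorMollification_of_isShellRadius (hu : IsBiConvSolution k₁ k₂ a b u φ)
    (h₁ : WeaklySingular k₁ θ₁ C₁) (h₂ : WeaklySingular k₂ θ₂ C₂)
    (hr : ∀ j, IsShellRadius k₁ k₂ a b u φ (δ j) j (r j)) (hδ : ∀ j, δ j ≤ ε j)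
    (hδ₁ : ∀ j : ℕ, C₁ * (1 / (j + 2) : ℝ) ^ (-θ₁) * δ j ≤ ε j)
    (hδ₂ : ∀ j : ℕ, C₂ * (1 / (j + 2) : ℝ) ^ (-θ₂) * δ j ≤ ε j) (hε : HasSum ε S) (hS : S ≤ η) :
    ∃ p τ, IsInteriorMollification k₁ k₂ a b u η p τ := by
  set p : ℝ → ℝ := fun t => ∑' j, shellError a b u j (r j) t
  have hsmall := isSmallPerturbation_tsum_shellError hu h₁ h₂ hr hδ hε hS
  have hcont := fun x (hx : x ∈ Ioo a b) =>
    continuousOn_add_tsum_shellError hu (fun j => (hr j).ne_zero) (fun j => (hr j).abs_le) hx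
  have hsum : ∀ {k : ℝ → ℝ} {θ C : ℝ}, WeaklySingular k θ C →
      (∀ j : ℕ, C * (1 / (j + 2) : ℝ) ^ (-θ) * δ j ≤ ε j) → ∀ x,
      Summable fun j => ∫ t, |k (x - t) * shellError a b u j (r j) t| := fun hk hle =>
    (isShellFamily_shellError hu fun j => (hr j).abs_le).summable_integral_abs_integrand hk
      hε.summable (fun j => (hr j).close.1.trans (hδ j)) fun j =>
        (mul_le_mul_of_nonneg_left (hr j).close.1
          (mul_nonneg hk.nonneg (rpow_nonneg (by positivity) _))).trans (hle j)
  have hex : ∀ x j, BiConvExistsAt k₁ k₂ u x ∨ x ∉ Ioo a b →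
      BiConvExistsAt k₁ k₂ u x ∨ shell a b j x = 0 := fun x j =>
    Or.imp_right (shell_eq_zero_of_notMem j)
  have hexE : ∀ x j, BiConvExistsAt k₁ k₂ u x ∨ x ∉ Ioo a b →
      BiConvExistsAt k₁ k₂ (shellError a b u j (r j)) x := fun x j h =>
    ⟨existsAt_shellError hu h₁ (hr j).ne_zero ((hex x j h).imp_left And.left),
      existsAt_shellError hu h₂ (hr j).ne_zero ((hex x j h).imp_left And.right)⟩
  have hexp : ∀ x, BiConvExistsAt k₁ k₂ u x ∨ x ∉ Ioo a b → BiConvExistsAt k₁ k₂ p x := fun x h =>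
    ⟨kerConvExistsAt_tsum (fun j => (hexE x j h).1) (hsum h₁ hδ₁ x),
      kerConvExistsAt_tsum (fun j => (hexE x j h).2) (hsum h₂ hδ₂ x)⟩
  have heq : ∀ x, BiConvExistsAt k₁ k₂ u x ∨ x ∉ Ioo a b → biConv k₁ k₂ p x = _ := fun x h =>
    (((hasSum_kerConv (fun j => (hexE x j h).1) (hsum h₁ hδ₁ x)).add
      (hasSum_kerConv (fun j => (hexE x j h).2) (hsum h₂ hδ₂ x))).tsum_eq.symm).trans
      (tsum_congr fun j => biConv_shellError hu h₁ h₂ (hr j).ne_zero (hex x j h))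
  refine ⟨p, _, hsmall, fun x hx => (hcont x hx).continuousAt
    (Metric.ball_mem_nhds x (half_pos (boundaryDist_pos.2 hx))), fun x hx =>
    biConv_add_eq_of_ae hu h₁ h₂ hsmall hcont ((ae_biConvExistsAt hu h₁ h₂).mono fun y hy => ?_) hx,
    hexp, heq, fun hA x hx h => ?_, fun hA x hx h => ?_⟩
  · rw [biConv_add hy (hexp y (.inl hy)), heq y (.inl hy)]
  · exact abs_kerConv_tsum_shellError_le hu h₁ hr hδ hε hS h (hsum h₁ hδ₁ x) fun j =>
      ((hr j).kerConvsClose hA x (Ioo_subset_Icc_self hx)).1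
  · exact abs_kerConv_tsum_shellError_le hu h₂ hr hδ hε hS h (hsum h₂ hδ₂ x) fun j =>
      ((hr j).kerConvsClose hA x (Ioo_subset_Icc_self hx)).2

theorem exists_isInteriorMollification (hu : IsBiConvSolution k₁ k₂ a b u φ)
    (h₁ : WeaklySingular k₁ θ₁ C₁) (h₂ : WeaklySingular k₂ θ₂ C₂) (hd₁ : AverageDominated k₁ 1)
    (hd₂ : AverageDominated k₂ (-1)) (hη : 0 < η) :
    ∃ p τ, IsInteriorMollification k₁ k₂ a b u η p τ := by
  obtain ⟨ε, hε, S, hS, hSη⟩ := posSumOfEncodable hη ℕ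
  choose δ hδ hδε hδ₁ hδ₂ using fun j : ℕ => exists_pos_le_mul_le
    (mul_nonneg h₁.nonneg (rpow_nonneg (by positivity : (0 : ℝ) ≤ 1 / (j + 2)) (-θ₁)))
    (mul_nonneg h₂.nonneg (rpow_nonneg (by positivity : (0 : ℝ) ≤ 1 / (j + 2)) (-θ₂))) (hε j)
  choose r hr using fun j => exists_isShellRadius hu h₁ h₂ hd₁ hd₂ (hδ j) j
  exact exists_isInteriorMollification_of_isShellRadius hu h₁ h₂ hr hδε hδ₁ hδ₂ hS hSη

end Assembly

/-! ### Points where only one of the two convolutions converges -/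

theorem exists_pos_isolation_radii {ι X : Type*} [TopologicalSpace ι] [DiscreteTopology ι]
    [PseudoMetricSpace X] {xs : ι → X} (hxs : IsInducing xs) {ρ : ι → ℝ} (hρ : ∀ i, 0 < ρ i) :
    ∃ r : ι → ℝ, (∀ i, 0 < r i) ∧ (∀ i, r i ≤ ρ i) ∧ ∀ i j, i ≠ j → r i ≤ dist (xs i) (xs j) := by
  have hisol : ∀ i, ∃ r > 0, ∀ j, i ≠ j → r ≤ dist (xs i) (xs j) := by
    intro i
    have hn : {i} ∈ 𝓝 i := (isOpen_discrete {i}).mem_nhds rfl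
    rw [hxs.nhds_eq_comap, Filter.mem_comap] at hn
    obtain ⟨t, ht, hts⟩ := hn
    obtain ⟨r, hr, hb⟩ := Metric.mem_nhds_iff.1 ht
    refine ⟨r, hr, fun j hj => ?_⟩
    by_contra! hlt
    have hball : xs j ∈ Metric.ball (xs i) r := by rwa [Metric.mem_ball, dist_comm]
    exact hj (hts (hb hball) : j = i).symm
  choose r hr hsep using hisol
  exact ⟨fun i => min (r i) (ρ i), fun i => lt_min (hr i) (hρ i), fun i => min_le_right _ _,
    fun i j hij => (min_le_left _ _).trans (hsep i j hij)⟩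

/-- Mutually isolated points `xs i` of a set `A ⊆ (a, b)`, with isolation radii `r` and labels `e`:
they either exhaust `A` and carry the label `0`, or carry labels unbounded above. -/
structure IsIsolatedLabelling {ι : Type*} (a b : ℝ) (A : Set ℝ) (xs r e : ι → ℝ) : Prop where
  mem : ∀ i, xs i ∈ A
  radius_pos : ∀ i, 0 < r i
  radius_le : ∀ i, r i ≤ boundaryDist a b (xs i)
  radius_le_abs_sub : ∀ i j, i ≠ j → r i ≤ |xs i - xs j|
  exhaust_or_unbounded : (∀ x ∈ A, ∃ i, xs i = x ∧ e i = 0) ∨ ∀ M, ∃ i, M ≤ e i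

theorem exists_isIsolatedLabelling {a b : ℝ} {A : Set ℝ} (hA : A ⊆ Ioo a b) :
    ∃ (ι : Type) (_ : Countable ι) (xs r e : ι → ℝ), IsIsolatedLabelling a b A xs r e := by
  rcases A.finite_or_infinite with hfin | hinf
  · have := hfin.to_subtype
    obtain ⟨r, hr, hrb, hsep⟩ := exists_pos_isolation_radii (xs := ((↑) : A → ℝ))
      IsInducing.subtypeVal fun x => boundaryDist_pos.2 (hA x.2)
    exact ⟨A, inferInstance, (↑), r, 0, fun x => x.2, hr, hrb, hsep,
      .inl fun x hx => ⟨⟨x, hx⟩, rfl, rfl⟩⟩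
  · have := hinf.to_subtype
    obtain ⟨f, hf⟩ := exists_topology_isEmbedding_nat A
    obtain ⟨r, hr, hrb, hsep⟩ := exists_pos_isolation_radii
      (IsInducing.subtypeVal.comp hf.isInducing) fun i => boundaryDist_pos.2 (hA (f i).2)
    exact ⟨ℕ, inferInstance, fun i => f i, r, fun i => i, fun i => (f i).2, hr, hrb, hsep,
      .inr exists_nat_ge⟩

section Divergence

variable {k k₁ k₂ f g : ℝ → ℝ} {x : ℝ}

theorem kerConvExistsAt_add_iff_left (hg : KerConvExistsAt k g x) :
    KerConvExistsAt k (f + g) x ↔ KerConvExistsAt k f x :=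
  ⟨fun h => by simpa only [add_sub_cancel_right] using h.sub hg, fun h => h.add hg⟩

theorem kerConvExistsAt_iff_of_add (h : KerConvExistsAt k (f + g) x) :
    KerConvExistsAt k g x ↔ KerConvExistsAt k f x :=
  ⟨fun hg => (kerConvExistsAt_add_iff_left hg).1 h,
    fun hf => by simpa only [add_sub_cancel_left] using h.sub hf⟩

theorem kerConv_add_of_not_existsAt (hf : ¬ KerConvExistsAt k f x) (hg : KerConvExistsAt k g x) :
    kerConv k (f + g) x = 0 :=
  kerConv_of_not_existsAt (mt (kerConvExistsAt_add_iff_left hg).1 hf)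

theorem abs_kerConv_add_sub_le (hg : KerConvExistsAt k g x) :
    |kerConv k (f + g) x - kerConv k f x| ≤ |kerConv k g x| := by
  by_cases hf : KerConvExistsAt k f x
  · rw [kerConv_add hf hg, add_sub_cancel_left]
  · rw [kerConv_of_not_existsAt hf, kerConv_add_of_not_existsAt hf hg, sub_zero, abs_zero]
    exact abs_nonneg _

theorem kerConv_add_of_kerConv_eq_zero (hg : KerConvExistsAt k g x) (h0 : kerConv k g x = 0) :
    kerConv k (f + g) x = kerConv k f x := by
  simpa only [h0, abs_zero, abs_nonpos_iff, sub_eq_zero] using abs_kerConv_add_sub_le (f := f) hg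

theorem abs_biConv_add_sub_le (hg : BiConvExistsAt k₁ k₂ g x) :
    |biConv k₁ k₂ (f + g) x - biConv k₁ k₂ f x| ≤ |kerConv k₁ g x| + |kerConv k₂ g x| := by
  rw [biConv, biConv, add_sub_add_comm]
  exact (abs_add_le _ _).trans
    (add_le_add (abs_kerConv_add_sub_le hg.1) (abs_kerConv_add_sub_le hg.2))

theorem biConv_eq_left (h₂ : ¬ KerConvExistsAt k₂ f x) : biConv k₁ k₂ f x = kerConv k₁ f x := by
  rw [biConv, kerConv_of_not_existsAt h₂, add_zero]

theorem biConv_eq_right (h₁ : ¬ KerConvExistsAt k₁ f x) : biConv k₁ k₂ f x = kerConv k₂ f x := by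
  rw [biConv, kerConv_of_not_existsAt h₁, zero_add]

open Classical in
/-- The value of `k₁ * w` at `x` for which a spike `w` with `k₁ * w + k₂ * w ≈ 0` moves the
surviving one of `k₁ * p` and `k₂ * p` at `x` to `e`. -/
def spikeHeight (k₁ k₂ p : ℝ → ℝ) (e x : ℝ) : ℝ :=
  if KerConvExistsAt k₁ p x then e - biConv k₁ k₂ p x else biConv k₁ k₂ p x - e

theorem abs_biConv_add_sub_le_of_spikeHeight {p w : ℝ → ℝ} {δ e : ℝ}
    (hp : ¬ (KerConvExistsAt k₁ p x ↔ KerConvExistsAt k₂ p x)) (hw : BiConvExistsAt k₁ k₂ w x)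
    (hle : |biConv k₁ k₂ w x| ≤ δ) (hclose : |kerConv k₁ w x - spikeHeight k₁ k₂ p e x| ≤ δ) :
    |biConv k₁ k₂ (p + w) x - e| ≤ 2 * δ := by
  by_cases hp₁ : KerConvExistsAt k₁ p x
  · have hp₂ : ¬ KerConvExistsAt k₂ p x := fun hp₂ => hp (iff_of_true hp₁ hp₂)
    rw [spikeHeight, if_pos hp₁, biConv_eq_left hp₂] at hclose
    rw [biConv, kerConv_add hp₁ hw.1, kerConv_add_of_not_existsAt hp₂ hw.2]
    rw [abs_le] at hclose ⊢
    constructor <;> linarith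
  · have hp₂ : KerConvExistsAt k₂ p x := not_not.1 fun hp₂ => hp (iff_of_false hp₁ hp₂)
    rw [spikeHeight, if_neg hp₁, biConv_eq_right hp₁] at hclose
    rw [biConv, kerConv_add_of_not_existsAt hp₁ hw.1, kerConv_add hp₂ hw.2]
    rw [biConv] at hle
    rw [abs_le] at hle hclose ⊢
    constructor <;> linarith

end Divergence

theorem IsSmallPerturbation.mono {a b η η' : ℝ} {p τ : ℝ → ℝ} (hp : IsSmallPerturbation a b η p τ)
    (h : η ≤ η') : IsSmallPerturbation a b η' p τ :=
  { hp with
    integral_abs_le := hp.integral_abs_le.trans h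
    abs_le := fun x hx => (hp.abs_le x hx).trans h }

theorem IsSmallPerturbation.add {a b η δ : ℝ} {p τ w σ : ℝ → ℝ}
    (hp : IsSmallPerturbation a b η p τ) (hw : IsSmallPerturbation a b δ w σ) :
    IsSmallPerturbation a b (η + δ) (p + w) (τ + σ) where
  measurable := hp.measurable.add hw.measurable
  integrable := hp.integrable.add hw.integrable
  eq_zero t ht := by rw [Pi.add_apply, hp.eq_zero t ht, hw.eq_zero t ht, add_zero]
  integral_abs_le :=
    calc ∫ t, |(p + w) t| ≤ ∫ t, (|p t| + |w t|) :=
          integral_mono (hp.integrable.add hw.integrable).abs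
            (hp.integrable.abs.add hw.integrable.abs) fun t => abs_add_le _ _
      _ = (∫ t, |p t|) + ∫ t, |w t| := integral_add hp.integrable.abs hw.integrable.abs
      _ ≤ η + δ := add_le_add hp.integral_abs_le hw.integral_abs_le
  continuousOn := hp.continuousOn.add hw.continuousOn
  abs_le x hx := (abs_add_le _ _).trans (add_le_add (hp.abs_le x hx) (hw.abs_le x hx))

/-- Adding `p` to `u` removes every divergence inside `(a, b)` and changes the value of
`biConv k₁ k₂ u` by `τ`, while `biConv k₁ k₂ p`, with its junk values where an integral diverges, is
either uniformly small or unbounded. -/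
structure IsBalancedPerturbation (k₁ k₂ : ℝ → ℝ) (a b : ℝ) (u : ℝ → ℝ) (η : ℝ) (p τ : ℝ → ℝ) :
    Prop extends IsSmallPerturbation a b η p τ where
  existsAt_add : ∀ x ∈ Ioo a b, BiConvExistsAt k₁ k₂ (u + p) x
  biConv_add : ∀ x ∈ Ioo a b, biConv k₁ k₂ (u + p) x = biConv k₁ k₂ u x + τ x
  existsAt : ∀ x ∉ Ioo a b, BiConvExistsAt k₁ k₂ p x
  biConv_eq : ∀ x ∉ Ioo a b, biConv k₁ k₂ p x = τ x
  abs_le_or_unbounded : (∀ x ∈ Ioo a b, |biConv k₁ k₂ p x| ≤ η) ∨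
    ∀ M, ∃ x ∈ Ioo a b, M ≤ |biConv k₁ k₂ p x|

section Balanced

variable {k₁ k₂ u φ p τ w : ℝ → ℝ} {θ₁ θ₂ C₁ C₂ a b δ η x : ℝ}

theorem IsInteriorMollification.existsAt_add (hp : IsInteriorMollification k₁ k₂ a b u η p τ)
    (h₁ : WeaklySingular k₁ θ₁ C₁) (h₂ : WeaklySingular k₂ θ₂ C₂) (hu : Integrable u)
    (hx : x ∈ Ioo a b) : BiConvExistsAt k₁ k₂ (u + p) x :=
  biConvExistsAt_of_continuousAt h₁ h₂ (hu.add hp.integrable) (hp.continuousAt x hx)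

theorem IsInteriorMollification.isBalancedPerturbation_of_aprioriBound
    (hp : IsInteriorMollification k₁ k₂ a b u η p τ) (h₁ : WeaklySingular k₁ θ₁ C₁)
    (h₂ : WeaklySingular k₂ θ₂ C₂) (hu : Integrable u) (hA : AprioriBound k₁ k₂) :
    IsBalancedPerturbation k₁ k₂ a b u η p τ := by
  have hex := fun x hx => hp.existsAt_add (x := x) h₁ h₂ hu hx
  refine ⟨hp.toIsSmallPerturbation, hex, hp.biConv_add, fun x hx => hp.existsAt x (.inr hx),
    fun x hx => hp.biConv_eq x (.inr hx), .inl fun x hx => ?_⟩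
  by_cases hp₁ : KerConvExistsAt k₁ p x <;> by_cases hp₂ : KerConvExistsAt k₂ p x
  · have hu₁₂ := And.imp (kerConvExistsAt_iff_of_add (hex x hx).1).1
      (kerConvExistsAt_iff_of_add (hex x hx).2).1 ⟨hp₁, hp₂⟩
    rw [hp.biConv_eq x (.inl hu₁₂)]
    exact hp.abs_le x (Ioo_subset_Icc_self hx)
  · rw [biConv_eq_left hp₂]
    exact hp.abs_kerConv_left_le hA x hx ((kerConvExistsAt_iff_of_add (hex x hx).1).1 hp₁)
  · rw [biConv_eq_right hp₁]
    exact hp.abs_kerConv_right_le hA x hx ((kerConvExistsAt_iff_of_add (hex x hx).2).1 hp₂)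
  · rw [biConv_eq_left hp₂, kerConv_of_not_existsAt hp₁, abs_zero]
    exact (abs_nonneg _).trans (hp.abs_le x (Ioo_subset_Icc_self hx))

theorem IsSpikeTrain.isSmallPerturbation {ι : Type*} {xs r c : ι → ℝ}
    (hw : IsSpikeTrain k₁ k₂ xs r c δ w) (hr : ∀ i, r i ≤ boundaryDist a b (xs i)) :
    IsSmallPerturbation a b δ w (biConv k₁ k₂ w) where
  measurable := hw.measurable
  integrable := hw.integrable
  eq_zero t ht := hw.eq_zero t fun i => (hr i).trans <| by
    linarith [boundaryDist_nonpos ht, (le_abs_self _).trans (abs_boundaryDist_sub_le a b (xs i) t)]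
  integral_abs_le := hw.integral_abs_le
  continuousOn := hw.continuous_biConv.continuousOn
  abs_le x _ := hw.abs_biConv_le x

theorem IsInteriorMollification.abs_biConv_add_le_of_iff
    (hp : IsInteriorMollification k₁ k₂ a b u η p τ) (hup : BiConvExistsAt k₁ k₂ (u + p) x)
    (hw : BiConvExistsAt k₁ k₂ w x) (hδ : |biConv k₁ k₂ w x| ≤ δ) (hx : x ∈ Ioo a b)
    (h : KerConvExistsAt k₁ p x ↔ KerConvExistsAt k₂ p x) :
    |biConv k₁ k₂ (p + w) x| ≤ η + δ := by
  have hτ := hp.abs_le x (Ioo_subset_Icc_self hx)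
  by_cases hp₁ : KerConvExistsAt k₁ p x
  · have hu₁₂ := And.imp (kerConvExistsAt_iff_of_add hup.1).1
      (kerConvExistsAt_iff_of_add hup.2).1 ⟨hp₁, h.1 hp₁⟩
    rw [_root_.biConv_add ⟨hp₁, h.1 hp₁⟩ hw, hp.biConv_eq x (.inl hu₁₂)]
    exact (abs_add_le _ _).trans (add_le_add hτ hδ)
  · rw [biConv, kerConv_add_of_not_existsAt hp₁ hw.1, kerConv_add_of_not_existsAt (mt h.2 hp₁) hw.2,
      add_zero, abs_zero]
    exact add_nonneg ((abs_nonneg _).trans hτ) ((abs_nonneg _).trans hδ)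

theorem IsInteriorMollification.isBalancedPerturbation_add {ι : Type*} {xs r e : ι → ℝ}
    (hp : IsInteriorMollification k₁ k₂ a b u δ p τ) (h₁ : WeaklySingular k₁ θ₁ C₁)
    (h₂ : WeaklySingular k₂ θ₂ C₂) (hu : Integrable u)
    (hlab : IsIsolatedLabelling a b
      {x ∈ Ioo a b | ¬ (KerConvExistsAt k₁ p x ↔ KerConvExistsAt k₂ p x)} xs r e)
    (hw : IsSpikeTrain k₁ k₂ xs r (fun i => spikeHeight k₁ k₂ p (e i) (xs i)) δ w) :
    IsBalancedPerturbation k₁ k₂ a b u (2 * δ) (p + w) (τ + biConv k₁ k₂ w) := by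
  have hex := fun x hx => hp.existsAt_add (x := x) h₁ h₂ hu hx
  have hval : ∀ i, |biConv k₁ k₂ (p + w) (xs i) - e i| ≤ 2 * δ := fun i =>
    abs_biConv_add_sub_le_of_spikeHeight (hlab.mem i).2 (hw.existsAt _) (hw.abs_biConv_le _)
      (hw.abs_kerConv_sub_le i)
  refine ⟨two_mul δ ▸ hp.toIsSmallPerturbation.add (hw.isSmallPerturbation hlab.radius_le),
    fun x hx => ?_, fun x hx => ?_, fun x hx => (hp.existsAt x (.inr hx)).add (hw.existsAt x),
    fun x hx => ?_, ?_⟩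
  · rw [← add_assoc]
    exact (hex x hx).add (hw.existsAt x)
  · rw [← add_assoc, _root_.biConv_add (hex x hx) (hw.existsAt x), hp.biConv_add x hx, add_assoc]
    rfl
  · rw [_root_.biConv_add (hp.existsAt x (.inr hx)) (hw.existsAt x), hp.biConv_eq x (.inr hx)]
    rfl
  · refine hlab.exhaust_or_unbounded.imp (fun hexh x hx => ?_) fun hunb M => ?_
    · by_cases h : KerConvExistsAt k₁ p x ↔ KerConvExistsAt k₂ p x
      · exact two_mul δ ▸
          hp.abs_biConv_add_le_of_iff (hex x hx) (hw.existsAt x) (hw.abs_biConv_le x) hx h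
      · obtain ⟨i, rfl, hi⟩ := hexh x ⟨hx, h⟩
        simpa only [hi, sub_zero] using hval i
    · obtain ⟨i, hi⟩ := hunb (M + 2 * δ)
      exact ⟨xs i, (hlab.mem i).1, le_trans (by linarith [neg_le_of_abs_le (hval i)])
        (le_abs_self _)⟩

theorem exists_isBalancedPerturbation (hu : IsBiConvSolution k₁ k₂ a b u φ)
    (h₁ : WeaklySingular k₁ θ₁ C₁) (h₂ : WeaklySingular k₂ θ₂ C₂) (hd₁ : AverageDominated k₁ 1)
    (hd₂ : AverageDominated k₂ (-1)) (hη : 0 < η) :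
    ∃ p τ, IsBalancedPerturbation k₁ k₂ a b u η p τ := by
  by_cases hA : AprioriBound k₁ k₂
  · obtain ⟨p, τ, hp⟩ := exists_isInteriorMollification hu h₁ h₂ hd₁ hd₂ hη
    exact ⟨p, τ, hp.isBalancedPerturbation_of_aprioriBound h₁ h₂ hu.integrable hA⟩
  · obtain ⟨p, τ, hp⟩ := exists_isInteriorMollification hu h₁ h₂ hd₁ hd₂ (half_pos hη)
    obtain ⟨ι, _, xs, r, e, hlab⟩ := exists_isIsolatedLabelling
      (A := {x ∈ Ioo a b | ¬ (KerConvExistsAt k₁ p x ↔ KerConvExistsAt k₂ p x)}) fun x hx => hx.1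
    obtain ⟨w, hw⟩ := exists_isSpikeTrain h₁ h₂ hA hlab.radius_pos hlab.radius_le_abs_sub
      (fun i => spikeHeight k₁ k₂ p (e i) (xs i)) (half_pos hη)
    exact ⟨p + w, _, by
      simpa only [mul_div_cancel₀ η two_ne_zero] using
        hp.isBalancedPerturbation_add h₁ h₂ hu.integrable hlab hw⟩

theorem IsBalancedPerturbation.abs_biConv_add_le_or_unbounded
    (hp : IsBalancedPerturbation k₁ k₂ a b u η p τ) (hs : ∀ x, BiConvExistsAt k₁ k₂ w x)
    (hδ : ∀ x ∈ Icc a b, |kerConv k₁ w x| + |kerConv k₂ w x| ≤ δ) :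
    (∀ x ∈ Ioo a b, |biConv k₁ k₂ (p + w) x| ≤ η + δ) ∨
      ∀ M, ∃ x ∈ Ioo a b, M ≤ |biConv k₁ k₂ (p + w) x| := by
  have hdiff : ∀ x ∈ Ioo a b, |(|biConv k₁ k₂ (p + w) x| - |biConv k₁ k₂ p x|)| ≤ δ :=
    fun x hx => (abs_abs_sub_abs_le _ _).trans
      ((abs_biConv_add_sub_le (hs x)).trans (hδ x (Ioo_subset_Icc_self hx)))
  refine hp.abs_le_or_unbounded.imp (fun h x hx => ?_) fun h M => ?_
  · linarith [h x hx, (abs_le.1 (hdiff x hx)).2]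
  · obtain ⟨x, hx, hM⟩ := h (M + δ)
    exact ⟨x, hx, by linarith [(abs_le.1 (hdiff x hx)).1]⟩

theorem IsBalancedPerturbation.add (hp : IsBalancedPerturbation k₁ k₂ a b u η p τ)
    (hw : IsSmallPerturbation a b δ w (biConv k₁ k₂ w)) (hex : ∀ x, BiConvExistsAt k₁ k₂ w x)
    (hδ : ∀ x ∈ Icc a b, |kerConv k₁ w x| + |kerConv k₂ w x| ≤ δ) :
    IsBalancedPerturbation k₁ k₂ a b u (η + δ) (p + w) (τ + biConv k₁ k₂ w) where
  toIsSmallPerturbation := hp.toIsSmallPerturbation.add hw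
  existsAt_add x hx := add_assoc u p w ▸ (hp.existsAt_add x hx).add (hex x)
  biConv_add x hx := by
    rw [← add_assoc, _root_.biConv_add (hp.existsAt_add x hx) (hex x), hp.biConv_add x hx,
      add_assoc]
    rfl
  existsAt x hx := (hp.existsAt x hx).add (hex x)
  biConv_eq x hx := by
    rw [_root_.biConv_add (hp.existsAt x hx) (hex x), hp.biConv_eq x hx]
    rfl
  abs_le_or_unbounded := hp.abs_biConv_add_le_or_unbounded hex hδ

end Balanced

/-! ### Normalization at the endpoints -/

/-- The right-sided counterpart of `powerKernel`, supported on the negative half-line. -/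
def rightPowerKernel (c θ : ℝ) : ℝ → ℝ := fun s => powerKernel c θ (-s)

theorem weaklySingular_rightPowerKernel {θ : ℝ} (c : ℝ) (h0 : 0 < θ) (h1 : θ < 1) :
    WeaklySingular (rightPowerKernel c θ) θ |c| :=
  (weaklySingular_powerKernel c h0 h1).comp_neg

theorem averageDominated_rightPowerKernel {θ : ℝ} (c : ℝ) (h0 : 0 < θ) (h1 : θ < 1) :
    AverageDominated (rightPowerKernel c θ) (-1) :=
  (averageDominated_powerKernel c h0 h1).comp_neg

section Endpoints

variable {a b : ℝ} {f : ℝ → ℝ} (c c₁ c₂ α β : ℝ)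

theorem powerKernel_mul_eq_zero (hf : ∀ t, t ∉ Ioo a b → f t = 0) (t : ℝ) :
    powerKernel c α (a - t) * f t = 0 := by
  by_cases ht : t ∈ Ioo a b
  · rw [powerKernel_of_nonpos (by linarith [ht.1]), zero_mul]
  · rw [hf t ht, mul_zero]

theorem rightPowerKernel_mul_eq_zero (hf : ∀ t, t ∉ Ioo a b → f t = 0) (t : ℝ) :
    rightPowerKernel c β (b - t) * f t = 0 := by
  by_cases ht : t ∈ Ioo a b
  · rw [rightPowerKernel, powerKernel_of_nonpos (by linarith [ht.2]), zero_mul]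
  · rw [hf t ht, mul_zero]

theorem kerConv_powerKernel_left (hf : ∀ t, t ∉ Ioo a b → f t = 0) :
    kerConv (powerKernel c α) f a = 0 := by
  simp only [kerConv_apply, powerKernel_mul_eq_zero c α hf, integral_zero]

theorem kerConv_rightPowerKernel_right (hf : ∀ t, t ∉ Ioo a b → f t = 0) :
    kerConv (rightPowerKernel c β) f b = 0 := by
  simp only [kerConv_apply, rightPowerKernel_mul_eq_zero c β hf, integral_zero]

theorem biConv_left_eq_integral_endpointFun (hf : ∀ t, t ∉ Ioo a b → f t = 0) :
    biConv (powerKernel c₁ α) (rightPowerKernel c₂ β) f a =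
      c₂ * ∫ t, endpointFun a b α β 1 t * f t := by
  rw [biConv, kerConv_powerKernel_left c₁ α hf, zero_add, kerConv_apply, ← integral_const_mul]
  congr 1 with t
  by_cases ht : t ∈ Ioo a b
  · rw [rightPowerKernel, powerKernel_of_pos (by linarith [ht.1]), neg_sub, ← mul_assoc]
    rfl
  · simp only [hf t ht, mul_zero]

theorem biConv_right_eq_integral_endpointFun (hf : ∀ t, t ∉ Ioo a b → f t = 0) :
    biConv (powerKernel c₁ α) (rightPowerKernel c₂ β) f b =
      c₁ * ∫ t, endpointFun a b α β 2 t * f t := by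
  rw [biConv, kerConv_rightPowerKernel_right c₂ β hf, add_zero, kerConv_apply,
    ← integral_const_mul]
  congr 1 with t
  by_cases ht : t ∈ Ioo a b
  · rw [powerKernel_of_pos (by linarith [ht.2]), ← mul_assoc]
    rfl
  · simp only [hf t ht, mul_zero]

end Endpoints

/-- The test functions seen by the first variation: their integral vanishes, so that they are
derivatives of variations with fixed endpoints, and they are orthogonal to the singularities of the
kernels at the endpoints. -/
def IsNullTest (a b α β : ℝ) (q : ℝ → ℝ) : Prop :=
  q ∈ testSpace a b ∧ ∀ j, ∫ t, endpointFun a b α β j t * q t = 0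

section TestFunctions

variable {a b θ θ₁ θ₂ C C₁ C₂ : ℝ} {k k₁ k₂ q : ℝ → ℝ}

theorem testSpace.continuous_kerConv (hq : q ∈ testSpace a b) (hk : WeaklySingular k θ C) :
    Continuous (kerConv k q) :=
  hk.continuous_kerConv hq.1 (testSpace.hasCompactSupport hq)

theorem testSpace.continuous_biConv (hq : q ∈ testSpace a b) (h₁ : WeaklySingular k₁ θ₁ C₁)
    (h₂ : WeaklySingular k₂ θ₂ C₂) : Continuous (biConv k₁ k₂ q) :=
  _root_.continuous_biConv h₁ h₂ hq.1 (testSpace.hasCompactSupport hq)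

theorem testSpace.biConvExistsAt (hq : q ∈ testSpace a b) (h₁ : WeaklySingular k₁ θ₁ C₁)
    (h₂ : WeaklySingular k₂ θ₂ C₂) (x : ℝ) : BiConvExistsAt k₁ k₂ q x :=
  biConvExistsAt_of_continuousAt h₁ h₂ (testSpace.integrable hq) hq.1.continuousAt

theorem testSpace.exists_bound_kerConv (hq : q ∈ testSpace a b) (h₁ : WeaklySingular k₁ θ₁ C₁)
    (h₂ : WeaklySingular k₂ θ₂ C₂) :
    ∃ K, ∀ x ∈ Icc a b, |kerConv k₁ q x| + |kerConv k₂ q x| ≤ K := by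
  obtain ⟨K, hK⟩ := (isCompact_Icc (a := a) (b := b)).bddAbove_image
    ((testSpace.continuous_kerConv hq h₁).abs.add
      (testSpace.continuous_kerConv hq h₂).abs).continuousOn
  exact ⟨K, fun x hx => hK (mem_image_of_mem _ hx)⟩

end TestFunctions

section LinearCombinations

variable {ι : Type*} [Fintype ι] {d : ι → ℝ → ℝ} {m : ι → ℝ} {B : ℝ}

theorem kerConv_sum_smul {k : ℝ → ℝ} {x : ℝ} (hd : ∀ j, KerConvExistsAt k (d j) x) (m : ι → ℝ) :
    kerConv k (∑ j, m j • d j) x = ∑ j, m j * kerConv k (d j) x := by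
  simp only [kerConv_apply, Finset.sum_apply, Pi.smul_apply, smul_eq_mul, Finset.mul_sum,
    mul_left_comm _ (m _)]
  rw [integral_finsetSum _ fun j _ => (kerConvExistsAt_iff.1 (hd j)).const_mul (m j)]
  simp only [integral_const_mul]

theorem abs_sum_mul_le (hm : ∀ j, |m j| ≤ B) (v : ι → ℝ) :
    |∑ j, m j * v j| ≤ B * ∑ j, |v j| := by
  rw [Finset.mul_sum]
  refine (Finset.abs_sum_le_sum_abs _ _).trans (Finset.sum_le_sum fun j _ => ?_)
  rw [abs_mul]
  exact mul_le_mul_of_nonneg_right (hm j) (abs_nonneg _)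

theorem integral_abs_sum_smul_le (hd : ∀ j, Integrable (d j)) (hm : ∀ j, |m j| ≤ B) :
    ∫ t, |(∑ j, m j • d j) t| ≤ B * ∑ j, ∫ t, |d j t| := by
  rw [← integral_finsetSum _ fun j _ => (hd j).abs, ← integral_const_mul]
  refine integral_mono (integrable_finsetSum' _ fun j _ => (hd j).smul (m j)).abs
    ((integrable_finsetSum _ fun j _ => (hd j).abs).const_mul B) fun t => ?_
  simpa only [Finset.sum_apply, Pi.smul_apply, smul_eq_mul] using abs_sum_mul_le hm fun j => d j t

theorem exists_testSpace_moments {a b α β θ₁ θ₂ C₁ C₂ : ℝ} {k₁ k₂ : ℝ → ℝ} (hab : a < b)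
    (hα : 0 < α) (hβ : 0 < β) (h₁ : WeaklySingular k₁ θ₁ C₁) (h₂ : WeaklySingular k₂ θ₂ C₂) :
    ∃ K, 0 ≤ K ∧ ∀ (m : Fin 3 → ℝ) (B : ℝ), (∀ j, |m j| ≤ B) → ∃ s ∈ testSpace a b,
      (∀ i, ∫ t, endpointFun a b α β i t * s t = m i) ∧ ∫ t, |s t| ≤ B * K ∧
      ∀ x ∈ Icc a b, |kerConv k₁ s x| + |kerConv k₂ s x| ≤ B * K := by
  have hF := continuousOn_endpointFun a b α β
  choose d hd hdual using fun j : Fin 3 => exists_testSpace_integral_mul_eq hF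
    (fun c => eq_zero_of_sum_endpointFun_eq_zero hab hα hβ) (Pi.single j 1)
  choose K hK using fun j => testSpace.exists_bound_kerConv (hd j) h₁ h₂
  refine ⟨max (∑ j, ∫ t, |d j t|) (∑ j, K j), le_max_of_le_left
    (Finset.sum_nonneg fun j _ => integral_nonneg fun _ => abs_nonneg _), fun m B hm =>
    ⟨∑ j, m j • d j, Submodule.sum_mem _ fun j _ => Submodule.smul_mem _ _ (hd j),
      fun i => ?_, ?_, fun x hx => ?_⟩⟩
  all_goals have hB : 0 ≤ B := (abs_nonneg _).trans (hm 0)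
  · simp only [Finset.sum_apply, Pi.smul_apply, smul_eq_mul, Finset.mul_sum,
      mul_left_comm _ (m _)]
    rw [integral_finsetSum _ fun j _ => (testSpace.integrable_mul (hF i) (hd j)).const_mul _]
    simp [integral_const_mul, hdual, Pi.single_apply]
  · exact (integral_abs_sum_smul_le (fun j => testSpace.integrable (hd j)) hm).trans
      (mul_le_mul_of_nonneg_left (le_max_left _ _) hB)
  · have hex := fun j => testSpace.biConvExistsAt (hd j) h₁ h₂ x
    rw [kerConv_sum_smul fun j => (hex j).1, kerConv_sum_smul fun j => (hex j).2]
    refine (add_le_add (abs_sum_mul_le hm _) (abs_sum_mul_le hm _)).trans ?_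
    rw [← mul_add, ← Finset.sum_add_distrib]
    exact mul_le_mul_of_nonneg_left
      ((Finset.sum_le_sum fun j _ => hK j x hx).trans (le_max_right _ _)) hB

end LinearCombinations

/-- A balanced perturbation which keeps the endpoint values of the primitive of `u` and the values
of `biConv k₁ k₂ u` at the endpoints. -/
structure IsNormalizedPerturbation (k₁ k₂ : ℝ → ℝ) (a b : ℝ) (u : ℝ → ℝ) (η : ℝ) (p τ : ℝ → ℝ) :
    Prop extends IsBalancedPerturbation k₁ k₂ a b u η p τ where
  integral_eq_zero : ∫ t, p t = 0
  left_eq_zero : τ a = 0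
  right_eq_zero : τ b = 0

section Normalized

variable {a b c₁ c₂ α β δ η : ℝ} {u φ p τ q s : ℝ → ℝ}

/-- The moments against `endpointFun` of the test function that normalizes `p`. -/
def correctionMoments (c₁ c₂ a b : ℝ) (p τ : ℝ → ℝ) : Fin 3 → ℝ :=
  ![-∫ t, p t, -(τ a / c₂), -(τ b / c₁)]

theorem IsSmallPerturbation.abs_correctionMoments_le (hp : IsSmallPerturbation a b δ p τ)
    (hab : a ≤ b) (c₁ c₂ : ℝ) (j : Fin 3) :
    |correctionMoments c₁ c₂ a b p τ j| ≤ δ * (1 + |c₁|⁻¹ + |c₂|⁻¹) := by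
  have hδ : 0 ≤ δ := (integral_nonneg fun _ => abs_nonneg _).trans hp.integral_abs_le
  have hinteg : |∫ t, p t| ≤ δ := abs_integral_le_integral_abs.trans hp.integral_abs_le
  have hc₁ : 0 ≤ δ * |c₁|⁻¹ := by positivity
  have hc₂ : 0 ≤ δ * |c₂|⁻¹ := by positivity
  have hdiv : ∀ x ∈ Icc a b, ∀ c, |τ x / c| ≤ δ * |c|⁻¹ := fun x hx c => by
    rw [abs_div, div_eq_mul_inv]
    exact mul_le_mul_of_nonneg_right (hp.abs_le x hx) (by positivity)
  have ha := hdiv a (left_mem_Icc.2 hab) c₂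
  have hb := hdiv b (right_mem_Icc.2 hab) c₁
  fin_cases j <;> simp only [correctionMoments, Fin.zero_eta, Fin.mk_one, Fin.reduceFinMk,
    Matrix.cons_val, abs_neg] <;> linarith

theorem add_mul_neg_div_self_eq_zero {x c y : ℝ} (h : c * y = x) : x + c * -(x / c) = 0 := by
  rcases eq_or_ne c 0 with rfl | hc
  · rw [← h, zero_mul, zero_mul, add_zero]
  · rw [mul_neg, mul_div_cancel₀ x hc, add_neg_cancel]

theorem IsBalancedPerturbation.isNormalizedPerturbation_add
    (hp : IsBalancedPerturbation (powerKernel c₁ α) (rightPowerKernel c₂ β) a b u δ p τ)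
    (hps : IsBalancedPerturbation (powerKernel c₁ α) (rightPowerKernel c₂ β) a b u η (p + s)
      (τ + biConv (powerKernel c₁ α) (rightPowerKernel c₂ β) s)) (hs : s ∈ testSpace a b)
    (hm : ∀ j, ∫ t, endpointFun a b α β j t * s t = correctionMoments c₁ c₂ a b p τ j) :
    IsNormalizedPerturbation (powerKernel c₁ α) (rightPowerKernel c₂ β) a b u η (p + s)
      (τ + biConv (powerKernel c₁ α) (rightPowerKernel c₂ β) s) where
  toIsBalancedPerturbation := hps
  integral_eq_zero := by
    have hs₀ : ∫ t, s t = -∫ t, p t := by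
      simpa only [endpointFun, correctionMoments, Matrix.cons_val, one_mul] using hm 0
    simp only [Pi.add_apply, integral_add hp.integrable (testSpace.integrable hs), hs₀,
      add_neg_cancel]
  left_eq_zero := by
    rw [Pi.add_apply, biConv_left_eq_integral_endpointFun c₁ c₂ α β fun t => testSpace.eq_zero hs,
      hm 1]
    exact add_mul_neg_div_self_eq_zero ((biConv_left_eq_integral_endpointFun c₁ c₂ α β
      hp.eq_zero).symm.trans (hp.biConv_eq a left_notMem_Ioo))
  right_eq_zero := by
    rw [Pi.add_apply, biConv_right_eq_integral_endpointFun c₁ c₂ α β fun t => testSpace.eq_zero hs,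
      hm 2]
    exact add_mul_neg_div_self_eq_zero ((biConv_right_eq_integral_endpointFun c₁ c₂ α β
      hp.eq_zero).symm.trans (hp.biConv_eq b right_notMem_Ioo))

theorem exists_isNormalizedPerturbation (hab : a < b) (hα : α ∈ Ioo (0 : ℝ) 1)
    (hβ : β ∈ Ioo (0 : ℝ) 1)
    (hu : IsBiConvSolution (powerKernel c₁ α) (rightPowerKernel c₂ β) a b u φ) (hη : 0 < η) :
    ∃ p τ, IsNormalizedPerturbation (powerKernel c₁ α) (rightPowerKernel c₂ β) a b u η p τ := by
  have h₁ := weaklySingular_powerKernel c₁ hα.1 hα.2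
  have h₂ := weaklySingular_rightPowerKernel c₂ hβ.1 hβ.2
  obtain ⟨K, hK, hmoments⟩ := exists_testSpace_moments hab hα.1 hβ.1 h₁ h₂
  set B := 1 + |c₁|⁻¹ + |c₂|⁻¹
  have hden : 0 < 1 + B * K := by positivity
  obtain ⟨p, τ, hp⟩ := exists_isBalancedPerturbation hu h₁ h₂
    (averageDominated_powerKernel c₁ hα.1 hα.2) (averageDominated_rightPowerKernel c₂ hβ.1 hβ.2)
    (div_pos hη hden)
  set δ := η / (1 + B * K)
  obtain ⟨s, hs, hm, hinteg, hconv⟩ := hmoments _ _ (hp.abs_correctionMoments_le hab.le c₁ c₂)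
  have hsmall : IsSmallPerturbation a b (δ * B * K) s
      (biConv (powerKernel c₁ α) (rightPowerKernel c₂ β) s) :=
    ⟨hs.1.measurable, testSpace.integrable hs, fun t => testSpace.eq_zero hs, hinteg,
      (testSpace.continuous_biConv hs h₁ h₂).continuousOn,
      fun x hx => (abs_add_le _ _).trans (hconv x hx)⟩
  have hη' : δ + δ * B * K = η := by
    rw [mul_assoc, ← mul_one_add, div_mul_cancel₀ η hden.ne']
  exact ⟨p + s, _, hp.isNormalizedPerturbation_add
    (hη' ▸ hp.add hsmall (testSpace.biConvExistsAt hs h₁ h₂) hconv) hs hm⟩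

theorem biConv_add_of_biConv_eq_zero {k₁ k₂ f g : ℝ → ℝ} {x : ℝ} (hg : BiConvExistsAt k₁ k₂ g x)
    (h0 : biConv k₁ k₂ g x = 0) (h : kerConv k₁ g x = 0 ∨ kerConv k₂ g x = 0) :
    biConv k₁ k₂ (f + g) x = biConv k₁ k₂ f x := by
  have hboth : kerConv k₁ g x = 0 ∧ kerConv k₂ g x = 0 := by
    rw [biConv] at h0
    rcases h with h | h <;> exact ⟨by linarith, by linarith⟩
  rw [biConv, kerConv_add_of_kerConv_eq_zero hg.1 hboth.1,
    kerConv_add_of_kerConv_eq_zero hg.2 hboth.2, biConv]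

theorem IsNullTest.biConv_left (hq : IsNullTest a b α β q) (c₁ c₂ : ℝ) :
    biConv (powerKernel c₁ α) (rightPowerKernel c₂ β) q a = 0 := by
  rw [biConv_left_eq_integral_endpointFun c₁ c₂ α β fun t => testSpace.eq_zero hq.1, hq.2, mul_zero]

theorem IsNullTest.biConv_right (hq : IsNullTest a b α β q) (c₁ c₂ : ℝ) :
    biConv (powerKernel c₁ α) (rightPowerKernel c₂ β) q b = 0 := by
  rw [biConv_right_eq_integral_endpointFun c₁ c₂ α β fun t => testSpace.eq_zero hq.1, hq.2,
    mul_zero]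

theorem IsNormalizedPerturbation.biConv_add_add
    (hp : IsNormalizedPerturbation (powerKernel c₁ α) (rightPowerKernel c₂ β) a b u η p τ)
    (hα : α ∈ Ioo (0 : ℝ) 1) (hβ : β ∈ Ioo (0 : ℝ) 1) (hq : IsNullTest a b α β q) {x : ℝ}
    (hx : x ∈ Icc a b) :
    biConv (powerKernel c₁ α) (rightPowerKernel c₂ β) (u + (p + q)) x =
      biConv (powerKernel c₁ α) (rightPowerKernel c₂ β) u x + τ x +
        biConv (powerKernel c₁ α) (rightPowerKernel c₂ β) q x := by
  have hqex := testSpace.biConvExistsAt hq.1 (weaklySingular_powerKernel c₁ hα.1 hα.2)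
    (weaklySingular_rightPowerKernel c₂ hβ.1 hβ.2) x
  have hpq : ∀ t, t ∉ Ioo a b → (p + q) t = 0 := fun t ht => by
    rw [Pi.add_apply, hp.eq_zero t ht, testSpace.eq_zero hq.1 ht, add_zero]
  rcases eq_endpoints_or_mem_Ioo_of_mem_Icc hx with rfl | rfl | hxI
  · have hex := hp.existsAt _ left_notMem_Ioo
    rw [biConv_add_of_biConv_eq_zero (hex.add hqex) ?_ (.inl (kerConv_powerKernel_left c₁ α hpq)),
      hp.left_eq_zero, hq.biConv_left, add_zero, add_zero]
    rw [biConv_add hex hqex, hp.biConv_eq _ left_notMem_Ioo, hp.left_eq_zero,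
      hq.biConv_left, add_zero]
  · have hex := hp.existsAt _ right_notMem_Ioo
    rw [biConv_add_of_biConv_eq_zero (hex.add hqex) ?_
      (.inr (kerConv_rightPowerKernel_right c₂ β hpq)), hp.right_eq_zero, hq.biConv_right,
      add_zero, add_zero]
    rw [biConv_add hex hqex, hp.biConv_eq _ right_notMem_Ioo, hp.right_eq_zero,
      hq.biConv_right, add_zero]
  · rw [← add_assoc, _root_.biConv_add (hp.existsAt_add x hxI) hqex, hp.biConv_add x hxI]

theorem IsNormalizedPerturbation.abs_biConv_add_le_or_unbounded {k₁ k₂ : ℝ → ℝ} {θ₁ θ₂ C₁ C₂ K : ℝ}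
    (hp : IsNormalizedPerturbation k₁ k₂ a b u η p τ) (h₁ : WeaklySingular k₁ θ₁ C₁)
    (h₂ : WeaklySingular k₂ θ₂ C₂) (hq : q ∈ testSpace a b)
    (hK : ∀ x ∈ Icc a b, |kerConv k₁ q x| + |kerConv k₂ q x| ≤ K) :
    (∀ x ∈ Icc a b, |biConv k₁ k₂ (p + q) x| ≤ η + K) ∨
      ∀ M, ∃ x ∈ Icc a b, M ≤ |biConv k₁ k₂ (p + q) x| := by
  have hex := testSpace.biConvExistsAt hq h₁ h₂
  have hend : ∀ x ∈ Icc a b, x ∉ Ioo a b → τ x = 0 → |biConv k₁ k₂ (p + q) x| ≤ η + K :=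
    fun x hx hxI hτ => by
      rw [biConv_add (hp.existsAt x hxI) (hex x), hp.biConv_eq x hxI, hτ, zero_add]
      exact ((abs_add_le _ _).trans (hK x hx)).trans
        (le_add_of_nonneg_left ((integral_nonneg fun _ => abs_nonneg _).trans hp.integral_abs_le))
  refine (hp.toIsBalancedPerturbation.abs_biConv_add_le_or_unbounded hex hK).imp
    (fun h x hx => ?_) fun h M => (h M).imp fun x hx => ⟨Ioo_subset_Icc_self hx.1, hx.2⟩
  rcases eq_endpoints_or_mem_Ioo_of_mem_Icc hx with rfl | rfl | hxI
  · exact hend _ hx left_notMem_Ioo hp.left_eq_zero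
  · exact hend _ hx right_notMem_Ioo hp.right_eq_zero
  · exact h x hxI

end Normalized

/-! ### Trajectories with one perturbed component -/

theorem kerConv_powerKernel_eq_integral {a b c α x : ℝ} {v w : ℝ → ℝ} (hx : x ∈ Icc a b)
    (hw0 : ∀ t, t ∉ Ioo a b → w t = 0) (hw : ∀ᵐ t, t ∈ Ioo a b → v t = w t) :
    kerConv (powerKernel c α) w x = c * ∫ t in a..x, (x - t) ^ (-α) * v t := by
  rw [intervalIntegral.integral_of_le hx.1, ← integral_indicator measurableSet_Ioc,
    ← integral_const_mul, kerConv_apply]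
  refine integral_congr_ae ?_
  filter_upwards [hw, volume.ae_ne x, volume.ae_ne b] with t ht htx htb
  by_cases htI : t ∈ Ioo a b
  · rcases lt_or_gt_of_ne htx with h | h
    · rw [powerKernel_of_pos (sub_pos.2 h), indicator_of_mem (mem_Ioc.2 ⟨htI.1, h.le⟩), ht htI,
        mul_assoc]
    · rw [powerKernel_of_nonpos (sub_nonpos.2 h.le),
        indicator_of_notMem fun h' => h.not_ge h'.2, zero_mul, mul_zero]
  · rw [hw0 t htI, indicator_of_notMem, mul_zero, mul_zero]
    exact fun h => htI ⟨h.1, lt_of_le_of_ne (h.2.trans hx.2) htb⟩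

theorem kerConv_rightPowerKernel_eq_integral {a b c β x : ℝ} {v w : ℝ → ℝ} (hx : x ∈ Icc a b)
    (hw0 : ∀ t, t ∉ Ioo a b → w t = 0) (hw : ∀ᵐ t, t ∈ Ioo a b → v t = w t) :
    kerConv (rightPowerKernel c β) w x = c * ∫ t in x..b, (t - x) ^ (-β) * v t := by
  rw [intervalIntegral.integral_of_le hx.2, ← integral_indicator measurableSet_Ioc,
    ← integral_const_mul, kerConv_apply]
  refine integral_congr_ae ?_
  filter_upwards [hw, volume.ae_ne x, volume.ae_ne b] with t ht htx htb
  rw [rightPowerKernel, neg_sub]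
  by_cases htI : t ∈ Ioo a b
  · rcases lt_or_gt_of_ne htx with h | h
    · rw [powerKernel_of_nonpos (sub_nonpos.2 h.le),
        indicator_of_notMem fun h' => h.not_gt h'.1, zero_mul, mul_zero]
    · rw [powerKernel_of_pos (sub_pos.2 h), indicator_of_mem (mem_Ioc.2 ⟨h, htI.2.le⟩), ht htI,
        mul_assoc]
  · rw [hw0 t htI, indicator_of_notMem, mul_zero, mul_zero]
    exact fun h => htI ⟨lt_of_le_of_lt hx.1 h.1, lt_of_le_of_ne h.2 htb⟩

/-- The kernel whose convolution with `f'` is the left half `γ ᶜₐDₓ^α f` of the combined Caputo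
derivative. -/
def leftCaputoKernel (α γ : ℝ) : ℝ → ℝ := powerKernel (γ / Gamma (1 - α)) α

/-- The kernel whose convolution with `f'` is the right half `(1-γ) ᶜₓD_b^β f` of the combined
Caputo derivative. -/
def rightCaputoKernel (β γ : ℝ) : ℝ → ℝ := rightPowerKernel (-((1 - γ) / Gamma (1 - β))) β

/-- The combined Caputo derivative, as an operator acting on the derivative of a function. -/
def caputoConv (α β γ : ℝ) (w : ℝ → ℝ) : ℝ → ℝ :=
  biConv (leftCaputoKernel α γ) (rightCaputoKernel β γ) w

theorem weaklySingular_leftCaputoKernel {α : ℝ} (hα : α ∈ Ioo (0 : ℝ) 1) (γ : ℝ) :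
    WeaklySingular (leftCaputoKernel α γ) α |γ / Gamma (1 - α)| :=
  weaklySingular_powerKernel _ hα.1 hα.2

theorem weaklySingular_rightCaputoKernel {β : ℝ} (hβ : β ∈ Ioo (0 : ℝ) 1) (γ : ℝ) :
    WeaklySingular (rightCaputoKernel β γ) β |-((1 - γ) / Gamma (1 - β))| :=
  weaklySingular_rightPowerKernel _ hβ.1 hβ.2

theorem combCaputo_eq_caputoConv {a b α β γ x : ℝ} {f w : ℝ → ℝ} (hx : x ∈ Icc a b)
    (hw0 : ∀ t, t ∉ Ioo a b → w t = 0) (hw : ∀ᵐ t, t ∈ Ioo a b → deriv f t = w t) :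
    combCaputo a b α β γ f x = caputoConv α β γ w x := by
  rw [caputoConv, biConv, leftCaputoKernel, rightCaputoKernel,
    kerConv_powerKernel_eq_integral hx hw0 hw, kerConv_rightPowerKernel_eq_integral hx hw0 hw,
    combCaputo, caputoLeft, caputoRight]
  ring

theorem ae_deriv_of_eq_integral {a b c : ℝ} {z v : ℝ → ℝ} (hv : LocallyIntegrable v)
    (hz : ∀ x ∈ Icc a b, z x = c + ∫ t in a..x, v t) :
    ∀ᵐ t, t ∈ Ioo a b → deriv z t = v t := by
  filter_upwards [LocallyIntegrable.ae_hasDerivAt_integral hv] with t ht htI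
  refine (((ht a).const_add c).congr_of_eventuallyEq ?_).deriv
  filter_upwards [isOpen_Ioo.mem_nhds htI] with s hs using hz s (Ioo_subset_Icc_self hs)

theorem absolutelyContinuousOn_of_eq_integral {a b c : ℝ} (hab : a ≤ b) {z v : ℝ → ℝ}
    (hv : Integrable v) (hz : ∀ x ∈ Icc a b, z x = c + ∫ t in a..x, v t) :
    AbsolutelyContinuousOn z a b := by
  have hderiv : ∀ᵐ t, t ∈ Ioc a b → v t = deriv z t := by
    filter_upwards [ae_deriv_of_eq_integral hv.locallyIntegrable hz, volume.ae_ne b]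
      with t ht htb htI
    exact (ht ⟨htI.1, lt_of_le_of_ne htI.2 htb⟩).symm
  refine ⟨?_, fun x hx => ?_⟩
  · rw [intervalIntegrable_iff_integrableOn_Ioc_of_le hab]
    exact hv.integrableOn.congr_fun_ae ((ae_restrict_iff' measurableSet_Ioc).2 hderiv)
  · rw [hz x hx, hz a (left_mem_Icc.2 hab), intervalIntegral.integral_same, add_zero]
    congr 1
    refine intervalIntegral.integral_congr_ae (hderiv.mono fun t ht hI => ?_)
    rw [uIoc_of_le hx.1] at hI
    exact ht ⟨hI.1, hI.2.trans hx.2⟩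

/-- The derivative of `f` on `(a, b)`, extended by zero. -/
def interiorDeriv (a b : ℝ) (f : ℝ → ℝ) : ℝ → ℝ := (Ioo a b).indicator (deriv f)

theorem measurable_interiorDeriv (a b : ℝ) (f : ℝ → ℝ) : Measurable (interiorDeriv a b f) :=
  (measurable_deriv f).indicator measurableSet_Ioo

theorem interiorDeriv_of_notMem {a b : ℝ} {f : ℝ → ℝ} {t : ℝ} (h : t ∉ Ioo a b) :
    interiorDeriv a b f t = 0 := indicator_of_notMem h _

namespace AbsolutelyContinuousOn

variable {f : ℝ → ℝ} {a b : ℝ}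

theorem continuousOn (hab : a ≤ b) (h : AbsolutelyContinuousOn f a b) :
    ContinuousOn f (Icc a b) := by
  have hprim := intervalIntegral.continuousOn_primitive_interval' h.1 left_mem_uIcc
  rw [uIcc_of_le hab] at hprim
  exact (continuousOn_const.add hprim).congr h.2

theorem integrable_interiorDeriv (hab : a ≤ b) (h : AbsolutelyContinuousOn f a b) :
    Integrable (interiorDeriv a b f) :=
  (((intervalIntegrable_iff_integrableOn_Ioc_of_le hab).1 h.1).mono_set
    Ioo_subset_Ioc_self).integrable_indicator measurableSet_Ioo

theorem eq_add_integral_interiorDeriv (h : AbsolutelyContinuousOn f a b) {x : ℝ}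
    (hx : x ∈ Icc a b) : f x = f a + ∫ t in a..x, interiorDeriv a b f t := by
  rw [h.2 x hx]
  congr 1
  refine intervalIntegral.integral_congr_ae ?_
  filter_upwards [volume.ae_ne b] with t htb ht
  rw [uIoc_of_le hx.1] at ht
  rw [interiorDeriv, indicator_of_mem]
  exact ⟨ht.1, lt_of_le_of_ne (ht.2.trans hx.2) htb⟩

theorem add_integral_eq (hab : a ≤ b) (h : AbsolutelyContinuousOn f a b) {w : ℝ → ℝ}
    (hw : Integrable w) {x : ℝ} (hx : x ∈ Icc a b) :
    f x + ∫ t in a..x, w t = f a + ∫ t in a..x, (interiorDeriv a b f + w) t := by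
  simp only [Pi.add_apply]
  rw [h.eq_add_integral_interiorDeriv hx, intervalIntegral.integral_add
    (h.integrable_interiorDeriv hab).intervalIntegrable hw.intervalIntegrable, add_assoc]

end AbsolutelyContinuousOn

theorem abs_intervalIntegral_le_integral_abs {v : ℝ → ℝ} (hv : Integrable v) (a x : ℝ) :
    |∫ t in a..x, v t| ≤ ∫ t, |v t| :=
  intervalIntegral.norm_integral_le_integral_norm_uIoc.trans
    (setIntegral_le_integral hv.norm (.of_forall fun _ => norm_nonneg _))

theorem intervalIntegral_eq_integral_of_eq_zero {a b : ℝ} (hab : a ≤ b) {v : ℝ → ℝ}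
    (h0 : ∀ t, t ∉ Ioo a b → v t = 0) : ∫ t in a..b, v t = ∫ t, v t := by
  rw [intervalIntegral.integral_of_le hab]
  exact setIntegral_eq_integral_of_forall_compl_eq_zero fun t ht =>
    h0 t fun h => ht (Ioo_subset_Ioc_self h)

/-- The trajectory `y` with the primitive of `w` added to its component `i`. -/
def perturb {N : ℕ} (a : ℝ) (y : ℝ → Fin N → ℝ) (i : Fin N) (w : ℝ → ℝ) : ℝ → Fin N → ℝ :=
  fun x => y x + Pi.single i (∫ t in a..x, w t)

section perturb

variable {a b α β γ : ℝ} {N : ℕ} {y : ℝ → Fin N → ℝ} {i : Fin N} {w : ℝ → ℝ}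

theorem perturb_apply_same (a : ℝ) (y : ℝ → Fin N → ℝ) (i : Fin N) (w : ℝ → ℝ) (x : ℝ) :
    perturb a y i w x i = y x i + ∫ t in a..x, w t := by simp [perturb]

theorem perturb_apply_of_ne (a : ℝ) (y : ℝ → Fin N → ℝ) {i j : Fin N} (h : j ≠ i) (w : ℝ → ℝ)
    (x : ℝ) : perturb a y i w x j = y x j := by simp [perturb, h]

theorem perturb_sub (a : ℝ) (y : ℝ → Fin N → ℝ) (i : Fin N) (w : ℝ → ℝ) :
    perturb a y i w - y = fun x => Pi.single i (∫ t in a..x, w t) := by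
  ext x; simp [perturb]

theorem perturb_left (a : ℝ) (y : ℝ → Fin N → ℝ) (i : Fin N) (w : ℝ → ℝ) :
    perturb a y i w a = y a := by simp [perturb]

theorem perturb_right (hab : a ≤ b) (hw0 : ∀ t, t ∉ Ioo a b → w t = 0) (hinteg : ∫ t, w t = 0) :
    perturb a y i w b = y b := by
  simp [perturb, intervalIntegral_eq_integral_of_eq_zero hab hw0, hinteg]

theorem combCaputoVec_perturb (hab : a ≤ b)
    (hy : AbsolutelyContinuousOn (fun t => y t i) a b) (hw : Integrable w)
    (hw0 : ∀ t, t ∉ Ioo a b → w t = 0) {x c : ℝ} (hx : x ∈ Icc a b)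
    (h : caputoConv α β γ
      (interiorDeriv a b (fun t => y t i) + w) x = combCaputo a b α β γ (fun t => y t i) x + c) :
    combCaputoVec a b α β γ (perturb a y i w) x =
      combCaputoVec a b α β γ y x + Pi.single i c := by
  ext j
  rcases eq_or_ne j i with rfl | hj
  · simp only [combCaputoVec, Pi.add_apply, Pi.single_eq_same]
    rw [← h]
    refine combCaputo_eq_caputoConv hx (fun t ht => by
      rw [Pi.add_apply, interiorDeriv_of_notMem ht, hw0 t ht, add_zero]) ?_
    refine ae_deriv_of_eq_integral (c := y a j)
      ((hy.integrable_interiorDeriv hab).add hw).locallyIntegrable fun s hs => ?_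
    rw [perturb_apply_same, hy.add_integral_eq hab hw hs]
  · simp [combCaputoVec, perturb_apply_of_ne a y hj, hj]

theorem absolutelyContinuousOn_perturb (hab : a ≤ b)
    (hy : ∀ j, AbsolutelyContinuousOn (fun t => y t j) a b) (hw : Integrable w) (j : Fin N) :
    AbsolutelyContinuousOn (fun t => perturb a y i w t j) a b := by
  rcases eq_or_ne j i with rfl | hj
  · simp only [perturb_apply_same]
    exact absolutelyContinuousOn_of_eq_integral hab
      (((hy j).integrable_interiorDeriv hab).add hw) fun s hs => (hy j).add_integral_eq hab hw hs
  · simpa only [perturb_apply_of_ne a y hj] using hy j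

theorem memD_perturb (hab : a ≤ b) (hy : memD a b α β γ y) (hw : Integrable w)
    (hw0 : ∀ t, t ∉ Ioo a b → w t = 0) {ψ : ℝ → ℝ} (hψ : ContinuousOn ψ (Icc a b))
    (h : ∀ x ∈ Icc a b, caputoConv α β γ
      (interiorDeriv a b (fun t => y t i) + w) x =
        combCaputo a b α β γ (fun t => y t i) x + ψ x) :
    memD a b α β γ (perturb a y i w) := by
  refine ⟨absolutelyContinuousOn_perturb hab hy.1 hw, fun j => ?_⟩
  refine ContinuousOn.congr (f := fun x => combCaputo a b α β γ (fun t => y t j) x +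
    (Pi.single i (ψ x) : Fin N → ℝ) j) ((hy.2 j).add ?_) fun x hx =>
      congrFun (combCaputoVec_perturb hab (hy.1 i) hw hw0 hx (h x hx)) j
  rcases eq_or_ne j i with rfl | hj
  · simpa using hψ
  · simpa [hj] using continuousOn_const

theorem combCaputoVec_perturb_sub (hw : Integrable w) (hw0 : ∀ t, t ∉ Ioo a b → w t = 0) {x : ℝ}
    (hx : x ∈ Icc a b) :
    combCaputoVec a b α β γ (perturb a y i w - y) x =
      Pi.single i (caputoConv α β γ w x) := by
  rw [perturb_sub]
  ext j
  rcases eq_or_ne j i with rfl | hj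
  · simp only [combCaputoVec, Pi.single_eq_same]
    exact combCaputo_eq_caputoConv hx hw0
      (ae_deriv_of_eq_integral (c := 0) hw.locallyIntegrable fun s _ => (zero_add _).symm)
  · simp [combCaputoVec, hj, combCaputo, caputoLeft, caputoRight]

-- The `sSup` in `norm1inf` is `0` on an unbounded set, hence the second alternative in `h`.
theorem norm1inf_perturb_sub_le (hw : Integrable w) (hw0 : ∀ t, t ∉ Ioo a b → w t = 0) {A B : ℝ}
    (hA : ∫ t, |w t| ≤ A) (hB0 : 0 ≤ B)
    (h : (∀ x ∈ Icc a b, |caputoConv α β γ w x| ≤ B) ∨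
      ∀ M, ∃ x ∈ Icc a b, M ≤ |caputoConv α β γ w x|) :
    norm1inf a b α β γ (perturb a y i w - y) ≤ A + B := by
  have hnorm : ∀ x ∈ Icc a b, ‖combCaputoVec a b α β γ (perturb a y i w - y) x‖ =
      |caputoConv α β γ w x| := fun x hx => by
    rw [combCaputoVec_perturb_sub hw hw0 hx, Pi.norm_single, norm_eq_abs]
  refine add_le_add (Real.sSup_le ?_ ((integral_nonneg fun _ => abs_nonneg _).trans hA)) ?_
  · rintro _ ⟨x, -, rfl⟩
    simp only [perturb_sub, Pi.norm_single]
    exact (abs_intervalIntegral_le_integral_abs hw a x).trans hA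
  · rw [image_congr hnorm]
    rcases h with hbdd | hunbdd
    · exact Real.sSup_le (forall_mem_image.2 hbdd) hB0
    · refine (Real.sSup_of_not_bddAbove fun ⟨M, hM⟩ => ?_).trans_le hB0
      obtain ⟨x, hx, hxM⟩ := hunbdd (M + 1)
      linarith [hM (mem_image_of_mem _ hx)]

end perturb

/-! ### The first variation -/

section IntegralFunctional

variable {E : Type*} [NormedAddCommGroup E] {M : ℝ × E → ℝ} {a b : ℝ} {z : ℝ → E}

theorem continuousOn_comp_prodMk (hM : Continuous M) (hz : ContinuousOn z (Icc a b)) :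
    ContinuousOn (fun x => M (x, z x)) (Icc a b) :=
  hM.comp_continuousOn (continuousOn_id.prodMk hz)

theorem tendsto_intervalIntegral_of_tendstoUniformlyOn [ProperSpace E] (hab : a ≤ b)
    (hM : Continuous M) (hz : ContinuousOn z (Icc a b)) {zs : ℕ → ℝ → E}
    (hzs : ∀ n, ContinuousOn (zs n) (Icc a b)) (hlim : TendstoUniformlyOn zs z atTop (Icc a b)) :
    Tendsto (fun n => ∫ x in a..b, M (x, zs n x)) atTop (𝓝 (∫ x in a..b, M (x, z x))) := by
  obtain ⟨R, hR⟩ := (isCompact_Icc.image_of_continuousOn hz).isBounded.exists_norm_le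
  obtain ⟨K, hK⟩ := ((isCompact_Icc (a := a) (b := b)).prod
    (isCompact_closedBall (0 : E) (R + 1))).bddAbove_image hM.norm.continuousOn
  have hIoc : ∀ᵐ x, x ∈ uIoc a b → x ∈ Icc a b := .of_forall fun x hx =>
    Ioc_subset_Icc_self (uIoc_of_le hab ▸ hx)
  refine intervalIntegral.tendsto_integral_filter_of_dominated_convergence (fun _ => K)
    (.of_forall fun n => ?_) ?_ intervalIntegrable_const ?_
  · rw [uIoc_of_le hab]
    exact ((continuousOn_comp_prodMk hM (hzs n)).mono
      Ioc_subset_Icc_self).aestronglyMeasurable measurableSet_Ioc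
  · filter_upwards [Metric.tendstoUniformlyOn_iff.1 hlim 1 one_pos] with n hn
    filter_upwards [hIoc] with x hx hxI
    refine hK ⟨(x, zs n x), ⟨hx hxI, mem_closedBall_zero_iff.2 ?_⟩, rfl⟩
    have hdist := hn x (hx hxI)
    rw [dist_eq_norm] at hdist
    linarith [norm_le_norm_add_norm_sub (z x) (zs n x), hR _ (mem_image_of_mem z (hx hxI))]
  · filter_upwards [hIoc] with x hx hxI
    exact (hM.tendsto _).comp (tendsto_const_nhds.prodMk_nhds (hlim.tendsto_at (hx hxI)))

theorem hasDerivAt_intervalIntegral_add_smul [NormedSpace ℝ E] (hab : a ≤ b)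
    (hM : ContDiff ℝ 1 M) (hz : ContinuousOn z (Icc a b)) {h : ℝ → E}
    (hh : ContinuousOn h (Icc a b)) :
    HasDerivAt (fun ε : ℝ => ∫ x in a..b, M (x, z x + ε • h x))
      (∫ x in a..b, fderiv ℝ M (x, z x) (0, h x)) 0 := by
  set F' : ℝ → ℝ → ℝ := fun ε x => fderiv ℝ M (x, z x + ε • h x) (0, h x)
  have hF' : ContinuousOn (Function.uncurry F') (Icc (-1) 1 ×ˢ Icc a b) := by
    have hsnd : MapsTo Prod.snd (Icc (-1 : ℝ) 1 ×ˢ Icc a b) (Icc a b) := fun p hp => hp.2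
    have hz' := hz.comp continuousOn_snd hsnd
    have hh' := hh.comp continuousOn_snd hsnd
    exact ((hM.continuous_fderiv one_ne_zero).comp_continuousOn
      (continuousOn_snd.prodMk (hz'.add (continuousOn_fst.smul hh')))).clm_apply
        (continuousOn_const.prodMk hh')
  obtain ⟨C, hC⟩ := (isCompact_Icc.prod isCompact_Icc).bddAbove_image hF'.norm
  have hF : ∀ ε : ℝ, ContinuousOn (fun x => M (x, z x + ε • h x)) (Icc a b) := fun ε =>
    continuousOn_comp_prodMk hM.continuous (hz.add (hh.fun_const_smul ε))
  have hF'₀ : ContinuousOn (F' 0) (Ioc a b) := hF'.comp (f := Prod.mk (0 : ℝ))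
    (by fun_prop) fun x hx => ⟨⟨by norm_num, by norm_num⟩, Ioc_subset_Icc_self hx⟩
  rw [← uIoc_of_le hab] at hF'₀
  have hderiv : ∀ ε x : ℝ, HasDerivAt (fun ε : ℝ => M (x, z x + ε • h x)) (F' ε x) ε := by
    intro ε x
    have hline := (((hasDerivAt_id ε).smul_const (h x)).const_add (z x))
    rw [one_smul] at hline
    exact (hM.differentiable one_ne_zero _).hasFDerivAt.comp_hasDerivAt ε
      ((hasDerivAt_const ε x).prodMk hline)
  have hmain := (intervalIntegral.hasDerivAt_integral_of_dominated_loc_of_deriv_le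
    (μ := volume) (F := fun ε x => M (x, z x + ε • h x)) (F' := F') (bound := fun _ => C)
    (Icc_mem_nhds (a := -1) (b := 1) (by norm_num) (by norm_num))
    (.of_forall fun ε => ((hF ε).mono (uIoc_of_le hab ▸ Ioc_subset_Icc_self)).aestronglyMeasurable
      measurableSet_uIoc)
    ((hF 0).intervalIntegrable_of_Icc hab) (hF'₀.aestronglyMeasurable measurableSet_uIoc)
    (.of_forall fun x hx ε hε => hC ⟨(ε, x), ⟨hε, Ioc_subset_Icc_self (uIoc_of_le hab ▸ hx)⟩, rfl⟩)
    intervalIntegrable_const (.of_forall fun x _ ε _ => hderiv ε x)).2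
  simpa only [F', zero_smul, add_zero] using hmain

end IntegralFunctional

section Trajectory

variable {a b α β γ δ η A K : ℝ} {N : ℕ} {M : ℝ × (Fin N → ℝ) × (Fin N → ℝ) → ℝ}
  {y z : ℝ → Fin N → ℝ} {i : Fin N} {p q τ : ℝ → ℝ}

/-- A trajectory together with its combined Caputo derivative: the arguments of the Lagrangian. -/
def caputoJet (a b α β γ : ℝ) {N : ℕ} (y : ℝ → Fin N → ℝ) (x : ℝ) : (Fin N → ℝ) × (Fin N → ℝ) :=
  (y x, combCaputoVec a b α β γ y x)

/-- The formal change of `caputoJet` when the derivative of component `i` changes by `q`. -/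
def jetVariation (a α β γ : ℝ) {N : ℕ} (i : Fin N) (q : ℝ → ℝ) (x : ℝ) :
    (Fin N → ℝ) × (Fin N → ℝ) :=
  (Pi.single i (∫ t in a..x, q t), Pi.single i (caputoConv α β γ q x))

/-- `y` minimizes `∫ M (x, y, ᶜDy)` among the trajectories with the same endpoints at
`norm1inf`-distance less than `δ`. -/
def IsMinimizerWithin (a b α β γ : ℝ) {N : ℕ} (M : ℝ × (Fin N → ℝ) × (Fin N → ℝ) → ℝ) (δ : ℝ)
    (y : ℝ → Fin N → ℝ) : Prop :=
  memD a b α β γ y ∧ ∀ z : ℝ → Fin N → ℝ, memD a b α β γ z → z a = y a → z b = y b →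
    norm1inf a b α β γ (z - y) < δ →
      (∫ x in a..b, M (x, caputoJet a b α β γ y x)) ≤ ∫ x in a..b, M (x, caputoJet a b α β γ z x)

/-- `z` is an admissible competitor of `y` whose jet is `η`-close to the formal jet of
`perturb a y i q`, which need not be admissible itself. -/
structure IsAdmissibleApproximation (a b α β γ : ℝ) {N : ℕ} (y : ℝ → Fin N → ℝ) (i : Fin N)
    (q : ℝ → ℝ) (η : ℝ) (z : ℝ → Fin N → ℝ) : Prop where
  memD : memD a b α β γ z
  left_eq : z a = y a
  right_eq : z b = y b
  dist_le : ∀ x ∈ Icc a b,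
    dist (caputoJet a b α β γ y x + jetVariation a α β γ i q x) (caputoJet a b α β γ z x) ≤ η

theorem memD.continuousOn_caputoJet (hab : a ≤ b) (hy : memD a b α β γ y) :
    ContinuousOn (caputoJet a b α β γ y) (Icc a b) :=
  (continuousOn_pi.2 fun i => (hy.1 i).continuousOn hab).prodMk (continuousOn_pi.2 hy.2)

theorem memD.exists_isBiConvSolution (hab : a ≤ b) (hy : memD a b α β γ y) (i : Fin N) :
    ∃ φ, IsBiConvSolution (leftCaputoKernel α γ) (rightCaputoKernel β γ) a b
      (interiorDeriv a b fun t => y t i) φ :=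
  ⟨IccExtend hab fun x => combCaputo a b α β γ (fun t => y t i) x,
    { integrable := (hy.1 i).integrable_interiorDeriv hab
      measurable := measurable_interiorDeriv a b _
      eq_zero := fun _ => interiorDeriv_of_notMem
      continuous := (continuousOn_iff_continuous_domRestrict.1 (hy.2 i)).Icc_extend'
      biConv_eq := fun x hx => by
        rw [IccExtend_of_mem hab _ hx]
        exact (combCaputo_eq_caputoConv hx (fun _ => interiorDeriv_of_notMem)
          (.of_forall fun t ht => (indicator_of_mem ht _).symm)).symm }⟩

theorem continuous_caputoConv (hα : α ∈ Ioo (0 : ℝ) 1) (hβ : β ∈ Ioo (0 : ℝ) 1)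
    (hq : q ∈ testSpace a b) : Continuous (caputoConv α β γ q) :=
  testSpace.continuous_biConv hq (weaklySingular_leftCaputoKernel hα γ)
    (weaklySingular_rightCaputoKernel hβ γ)

theorem continuous_jetVariation (hα : α ∈ Ioo (0 : ℝ) 1) (hβ : β ∈ Ioo (0 : ℝ) 1)
    (hq : q ∈ testSpace a b) : Continuous (jetVariation a α β γ i q) :=
  ((continuous_single i).comp (intervalIntegral.continuous_primitive
    (fun _ _ => (testSpace.integrable hq).intervalIntegrable) a)).prodMk
      ((continuous_single i).comp (continuous_caputoConv hα hβ hq))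

theorem jetVariation_smul (a α β γ : ℝ) (i : Fin N) (ε : ℝ) (q : ℝ → ℝ) (x : ℝ) :
    jetVariation a α β γ i (ε • q) x = ε • jetVariation a α β γ i q x := by
  have hconv : caputoConv α β γ (ε • q) x = ε * caputoConv α β γ q x := biConv_const_mul ..
  simp only [jetVariation, hconv, Pi.smul_apply, smul_eq_mul, intervalIntegral.integral_const_mul,
    Prod.smul_mk, ← Pi.single_smul]

theorem IsNullTest.const_smul (hq : IsNullTest a b α β q) (ε : ℝ) :
    IsNullTest a b α β (ε • q) := by
  refine ⟨Submodule.smul_mem _ ε hq.1, fun j => ?_⟩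
  simp only [Pi.smul_apply, smul_eq_mul, mul_left_comm _ ε, integral_const_mul, hq.2 j, mul_zero]

theorem IsNullTest.integral_eq_zero (hq : IsNullTest a b α β q) : ∫ t, q t = 0 := by
  simpa [endpointFun] using hq.2 0

theorem IsNormalizedPerturbation.caputoConv_add_add
    (hp : IsNormalizedPerturbation (leftCaputoKernel α γ) (rightCaputoKernel β γ) a b
      (interiorDeriv a b fun t => y t i) η p τ)
    (hα : α ∈ Ioo (0 : ℝ) 1) (hβ : β ∈ Ioo (0 : ℝ) 1) (hq : IsNullTest a b α β q) {x : ℝ}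
    (hx : x ∈ Icc a b) :
    caputoConv α β γ (interiorDeriv a b (fun t => y t i) + (p + q)) x =
      combCaputo a b α β γ (fun t => y t i) x + (τ x + caputoConv α β γ q x) := by
  rw [combCaputo_eq_caputoConv hx (fun _ => interiorDeriv_of_notMem)
    (.of_forall fun t ht => (indicator_of_mem ht _).symm)]
  exact (hp.biConv_add_add hα hβ hq hx).trans (add_assoc _ _ _)

theorem IsNormalizedPerturbation.isAdmissibleApproximation_perturb (hab : a ≤ b)
    (hp : IsNormalizedPerturbation (leftCaputoKernel α γ) (rightCaputoKernel β γ) a b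
      (interiorDeriv a b fun t => y t i) η p τ)
    (hα : α ∈ Ioo (0 : ℝ) 1) (hβ : β ∈ Ioo (0 : ℝ) 1) (hy : memD a b α β γ y)
    (hq : IsNullTest a b α β q) :
    IsAdmissibleApproximation a b α β γ y i q η (perturb a y i (p + q)) := by
  have hqi := testSpace.integrable hq.1
  have hw := hp.integrable.add hqi
  have hw0 : ∀ t, t ∉ Ioo a b → (p + q) t = 0 := fun t ht => by
    rw [Pi.add_apply, hp.eq_zero t ht, testSpace.eq_zero hq.1 ht, add_zero]
  have hconv := fun x hx => hp.caputoConv_add_add hα hβ hq (x := x) hx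
  refine ⟨memD_perturb hab hy hw hw0
    (hp.continuousOn.add (continuous_caputoConv hα hβ hq.1).continuousOn) hconv,
    perturb_left a y i _, perturb_right hab hw0 ?_, fun x hx => ?_⟩
  · exact (integral_add hp.integrable hqi).trans
      (by rw [hp.integral_eq_zero, hq.integral_eq_zero, add_zero])
  have hjet : caputoJet a b α β γ (perturb a y i (p + q)) x =
      caputoJet a b α β γ y x + jetVariation a α β γ i q x +
        (Pi.single i (∫ t in a..x, p t), Pi.single i (τ x)) := by
    simp only [caputoJet, jetVariation, combCaputoVec_perturb hab (hy.1 i) hw hw0 hx (hconv x hx),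
      perturb, Pi.add_apply, Prod.mk_add_mk, Pi.single_add,
      intervalIntegral.integral_add hp.integrable.intervalIntegrable hqi.intervalIntegrable]
    ext1 <;> dsimp only <;> abel
  rw [hjet, dist_self_add_right, Prod.norm_def, Pi.norm_single, Pi.norm_single]
  exact max_le ((abs_intervalIntegral_le_integral_abs hp.integrable a x).trans hp.integral_abs_le)
    (hp.abs_le x hx)

theorem IsNormalizedPerturbation.norm1inf_perturb_sub_le (hab : a ≤ b)
    (hp : IsNormalizedPerturbation (leftCaputoKernel α γ) (rightCaputoKernel β γ) a b
      (interiorDeriv a b fun t => y t i) η p τ)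
    (hα : α ∈ Ioo (0 : ℝ) 1) (hβ : β ∈ Ioo (0 : ℝ) 1) (hq : q ∈ testSpace a b)
    (hK : ∀ x ∈ Icc a b,
      |kerConv (leftCaputoKernel α γ) q x| + |kerConv (rightCaputoKernel β γ) q x| ≤ K) :
    norm1inf a b α β γ (perturb a y i (p + q) - y) ≤ (η + ∫ t, |q t|) + (η + K) := by
  have hqi := testSpace.integrable hq
  have hη : 0 ≤ η := (integral_nonneg fun _ => abs_nonneg _).trans hp.integral_abs_le
  have hK0 : 0 ≤ K := le_trans (by positivity) (hK a (left_mem_Icc.2 hab))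
  refine _root_.norm1inf_perturb_sub_le (hp.integrable.add hqi) (fun t ht => ?_) ?_
    (add_nonneg hη hK0) (hp.abs_biConv_add_le_or_unbounded (weaklySingular_leftCaputoKernel hα γ)
      (weaklySingular_rightCaputoKernel hβ γ) hq hK)
  · rw [Pi.add_apply, hp.eq_zero t ht, testSpace.eq_zero hq ht, add_zero]
  · calc ∫ t, |(p + q) t| ≤ ∫ t, (|p t| + |q t|) :=
          integral_mono (hp.integrable.add hqi).abs (hp.integrable.abs.add hqi.abs)
            fun t => abs_add_le _ _
      _ = (∫ t, |p t|) + ∫ t, |q t| := integral_add hp.integrable.abs hqi.abs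
      _ ≤ η + ∫ t, |q t| := by gcongr; exact hp.integral_abs_le

theorem exists_isAdmissibleApproximation (hab : a < b) (hα : α ∈ Ioo (0 : ℝ) 1)
    (hβ : β ∈ Ioo (0 : ℝ) 1) (hy : memD a b α β γ y) (i : Fin N) (hq : IsNullTest a b α β q)
    (hK : ∀ x ∈ Icc a b,
      |kerConv (leftCaputoKernel α γ) q x| + |kerConv (rightCaputoKernel β γ) q x| ≤ K)
    (hη : 0 < η) :
    ∃ z, IsAdmissibleApproximation a b α β γ y i q η z ∧
      norm1inf a b α β γ (z - y) ≤ (η + ∫ t, |q t|) + (η + K) := by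
  obtain ⟨φ, hφ⟩ := hy.exists_isBiConvSolution hab.le i
  obtain ⟨p, τ, hp⟩ := exists_isNormalizedPerturbation hab hα hβ hφ hη
  exact ⟨_, hp.isAdmissibleApproximation_perturb hab.le hα hβ hy hq,
    hp.norm1inf_perturb_sub_le hab.le hα hβ hq.1 hK⟩

theorem IsMinimizerWithin.integral_le_of_isNullTest (hy : IsMinimizerWithin a b α β γ M δ y)
    (hab : a < b) (hα : α ∈ Ioo (0 : ℝ) 1) (hβ : β ∈ Ioo (0 : ℝ) 1) (hM : Continuous M)
    (i : Fin N) (hq : IsNullTest a b α β q)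
    (hK : ∀ x ∈ Icc a b,
      |kerConv (leftCaputoKernel α γ) q x| + |kerConv (rightCaputoKernel β γ) q x| ≤ K)
    (hδ : (∫ t, |q t|) + K < δ) :
    (∫ x in a..b, M (x, caputoJet a b α β γ y x)) ≤
      ∫ x in a..b, M (x, caputoJet a b α β γ y x + jetVariation a α β γ i q x) := by
  choose z hz hzn using fun n : ℕ =>
    exists_isAdmissibleApproximation hab hα hβ hy.1 i hq hK (Nat.one_div_pos_of_nat (n := n))
  have hη : Tendsto (fun n : ℕ => 1 / ((n : ℝ) + 1)) atTop (𝓝 0) :=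
    tendsto_one_div_add_atTop_nhds_zero_nat
  have hunif : TendstoUniformlyOn (fun n => caputoJet a b α β γ (z n))
      (fun x => caputoJet a b α β γ y x + jetVariation a α β γ i q x) atTop (Icc a b) := by
    refine Metric.tendstoUniformlyOn_iff.2 fun ε hε => ?_
    filter_upwards [hη.eventually_lt_const hε] with n hn x hx
    exact ((hz n).dist_le x hx).trans_lt hn
  have hlim := tendsto_intervalIntegral_of_tendstoUniformlyOn hab.le hM
    ((hy.1.continuousOn_caputoJet hab.le).add (continuous_jetVariation hα hβ hq.1).continuousOn)
    (fun n => (hz n).memD.continuousOn_caputoJet hab.le) hunif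
  have hnear : ∀ᶠ n in atTop, norm1inf a b α β γ (z n - y) < δ := by
    filter_upwards [hη.eventually_lt_const (half_pos (sub_pos.2 hδ))] with n hn
    linarith [hzn n]
  refine ge_of_tendsto hlim (hnear.mono fun n hn => ?_)
  exact hy.2 _ (hz n).memD (hz n).left_eq (hz n).right_eq hn

theorem IsMinimizerWithin.first_variation_eq_zero (hy : IsMinimizerWithin a b α β γ M δ y)
    (hab : a < b) (hα : α ∈ Ioo (0 : ℝ) 1) (hβ : β ∈ Ioo (0 : ℝ) 1) (hM : ContDiff ℝ 1 M)
    (hδ : 0 < δ) (i : Fin N) (hq : IsNullTest a b α β q) :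
    ∫ x in a..b, fderiv ℝ M (x, caputoJet a b α β γ y x) (0, jetVariation a α β γ i q x) = 0 := by
  obtain ⟨K, hK⟩ := testSpace.exists_bound_kerConv hq.1 (weaklySingular_leftCaputoKernel hα γ)
    (weaklySingular_rightCaputoKernel hβ γ)
  have hderiv := hasDerivAt_intervalIntegral_add_smul hab.le hM
    (hy.1.continuousOn_caputoJet hab.le)
    (continuous_jetVariation (i := i) (γ := γ) hα hβ hq.1).continuousOn
  refine IsLocalMin.hasDerivAt_eq_zero ?_ hderiv
  have hsmall : ∀ᶠ ε : ℝ in 𝓝 0, |ε| * ((∫ t, |q t|) + K) < δ := by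
    have hcont : Continuous fun ε : ℝ => |ε| * ((∫ t, |q t|) + K) := by fun_prop
    exact hcont.continuousAt.eventually_lt_const (by simpa using hδ)
  filter_upwards [hsmall] with ε hε
  simp only [zero_smul, add_zero, ← jetVariation_smul]
  refine hy.integral_le_of_isNullTest hab hα hβ hM.continuous i (hq.const_smul ε) (K := |ε| * K)
    (fun x hx => ?_) ?_
  · have hscale : ∀ k : ℝ → ℝ, |kerConv k (ε • q) x| = |ε| * |kerConv k q x| := fun k =>
      (congrArg abs (kerConv_const_mul ..)).trans (abs_mul _ _)
    rw [hscale, hscale, ← mul_add]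
    gcongr
    exact hK x hx
  · simpa only [Pi.smul_apply, smul_eq_mul, abs_mul, integral_const_mul, ← mul_add] using hε

end Trajectory

section Lagrangian

variable {N : ℕ}

/-- A Lagrangian as a function on the product space. -/
def lagrangianMap (L : ℝ → (Fin N → ℝ) → (Fin N → ℝ) → ℝ) : ℝ × (Fin N → ℝ) × (Fin N → ℝ) → ℝ :=
  fun p => L p.1 p.2.1 p.2.2

variable {L : ℝ → (Fin N → ℝ) → (Fin N → ℝ) → ℝ} {i : Fin N}

theorem pdY_eq_fderiv (hL : Differentiable ℝ (lagrangianMap L)) (i : Fin N) (x : ℝ)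
    (u v : Fin N → ℝ) :
    pdY L i x u v = fderiv ℝ (lagrangianMap L) (x, u, v) (0, Pi.single i 1, 0) := by
  have hline : HasDerivAt (fun s : ℝ => (x, Function.update u i s, v))
      ((0 : ℝ), (Pi.single i (1 : ℝ) : Fin N → ℝ), (0 : Fin N → ℝ)) (u i) :=
    (hasDerivAt_const _ _).prodMk ((hasDerivAt_update u i (u i)).prodMk (hasDerivAt_const _ _))
  have hcomp := (hL (x, Function.update u i (u i), v)).hasFDerivAt.comp_hasDerivAt (u i) hline
  rw [Function.update_eq_self] at hcomp
  exact hcomp.deriv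

theorem pdV_eq_fderiv (hL : Differentiable ℝ (lagrangianMap L)) (i : Fin N) (x : ℝ)
    (u v : Fin N → ℝ) :
    pdV L i x u v = fderiv ℝ (lagrangianMap L) (x, u, v) (0, 0, Pi.single i 1) := by
  have hline : HasDerivAt (fun s : ℝ => (x, u, Function.update v i s))
      ((0 : ℝ), (0 : Fin N → ℝ), (Pi.single i (1 : ℝ) : Fin N → ℝ)) (v i) :=
    (hasDerivAt_const _ _).prodMk ((hasDerivAt_const _ _).prodMk (hasDerivAt_update v i (v i)))
  have hcomp := (hL (x, u, Function.update v i (v i))).hasFDerivAt.comp_hasDerivAt (v i) hline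
  rw [Function.update_eq_self] at hcomp
  exact hcomp.deriv

theorem fderiv_lagrangianMap_single (hL : Differentiable ℝ (lagrangianMap L)) (i : Fin N) (x : ℝ)
    (u v : Fin N → ℝ) (r s : ℝ) :
    fderiv ℝ (lagrangianMap L) (x, u, v) (0, Pi.single i r, Pi.single i s) =
      pdY L i x u v * r + pdV L i x u v * s := by
  have hdecomp : ((0 : ℝ), (Pi.single i r : Fin N → ℝ), (Pi.single i s : Fin N → ℝ)) =
      r • ((0 : ℝ), (Pi.single i 1 : Fin N → ℝ), (0 : Fin N → ℝ)) +
        s • ((0 : ℝ), (0 : Fin N → ℝ), (Pi.single i 1 : Fin N → ℝ)) := by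
    simp [← Pi.single_smul]
  rw [hdecomp, map_add, map_smul, map_smul, pdY_eq_fderiv hL, pdV_eq_fderiv hL, smul_eq_mul,
    smul_eq_mul, mul_comm r, mul_comm s]

theorem continuous_pdY (hL : ContDiff ℝ 1 (lagrangianMap L)) (i : Fin N) :
    Continuous fun p : ℝ × (Fin N → ℝ) × (Fin N → ℝ) => pdY L i p.1 p.2.1 p.2.2 := by
  simp only [pdY_eq_fderiv (hL.differentiable one_ne_zero)]
  exact (hL.continuous_fderiv one_ne_zero).clm_apply continuous_const

theorem continuous_pdV (hL : ContDiff ℝ 1 (lagrangianMap L)) (i : Fin N) :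
    Continuous fun p : ℝ × (Fin N → ℝ) × (Fin N → ℝ) => pdV L i p.1 p.2.1 p.2.2 := by
  simp only [pdV_eq_fderiv (hL.differentiable one_ne_zero)]
  exact (hL.continuous_fderiv one_ne_zero).clm_apply continuous_const

end Lagrangian

/-! ### Riemann–Liouville integrals of functions of bounded variation -/

section RiemannLiouvilleIntegral

variable {a b x ν : ℝ} {g p m : ℝ → ℝ}

theorem intervalIntegrable_rpow_mul_of_antitoneOn {φ : ℝ → ℝ} {c : ℝ} (hν : 0 < ν) (hc : 0 ≤ c)
    (hφ : AntitoneOn φ (Icc 0 c)) :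
    IntervalIntegrable (fun s => s ^ (ν - 1) * φ s) volume 0 c := by
  have hpow : IntervalIntegrable (fun s : ℝ => s ^ (ν - 1)) volume 0 c :=
    intervalIntegral.intervalIntegrable_rpow' (by linarith)
  have hmeas : IntervalIntegrable φ volume 0 c := by
    rw [← uIcc_of_le hc] at hφ
    exact hφ.intervalIntegrable
  rw [intervalIntegrable_iff_integrableOn_Ioc_of_le hc] at hpow hmeas ⊢
  refine hpow.mul_bdd (c := max |φ c| |φ 0|) hmeas.aestronglyMeasurable ?_
  filter_upwards [ae_restrict_mem measurableSet_Ioc] with s hs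
  have hs' := Ioc_subset_Icc_self hs
  exact abs_le_max_abs_abs (hφ hs' (right_mem_Icc.2 hc) hs.2)
    (hφ (left_mem_Icc.2 hc) hs' hs.1.le)

theorem intervalIntegrable_sub_rpow_mul_of_monotoneOn (hν : 0 < ν) (hax : a ≤ x)
    (hp : MonotoneOn p (Icc a x)) :
    IntervalIntegrable (fun t => (x - t) ^ (ν - 1) * p t) volume a x := by
  have hanti : AntitoneOn (fun s => p (x - s)) (Icc 0 (x - a)) := fun s hs t ht hst =>
    hp ⟨by linarith [ht.2], by linarith [ht.1]⟩ ⟨by linarith [hs.2], by linarith [hs.1]⟩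
      (by linarith)
  simpa only [sub_zero, sub_sub_cancel] using
    ((intervalIntegrable_rpow_mul_of_antitoneOn hν (sub_nonneg.2 hax) hanti).comp_sub_left x).symm

theorem monotoneOn_indicator_Ioi (hp : MonotoneOn p (Icc a b)) (h0 : 0 ≤ p a) :
    MonotoneOn ((Ioi a).indicator p) (Iic b) := by
  have hmono : ∀ ⦃s t⦄, a ≤ s → s ≤ t → t ≤ b → p s ≤ p t := fun s t has hst htb =>
    hp ⟨has, hst.trans htb⟩ ⟨has.trans hst, htb⟩ hst
  intro s _ t ht hst
  simp only [indicator_apply, mem_Ioi]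
  split_ifs with hs hta hta
  · exact hmono hs.le hst ht
  · exact absurd (hs.trans_le hst) hta
  · exact h0.trans (hmono le_rfl hta.le ht)
  · exact le_rfl

theorem leftRLI_eq_integral_indicator (hx : x ∈ Icc a b) :
    leftRLI a ν p x =
      1 / Gamma ν * ∫ s in (0 : ℝ)..b - a, s ^ (ν - 1) * (Ioi a).indicator p (x - s) := by
  set F : ℝ → ℝ := fun t => (x - t) ^ (ν - 1) * (Ioi a).indicator p t with hF
  have hsubst := intervalIntegral.integral_comp_sub_left (a := 0) (b := b - a) F x
  simp only [sub_zero, hF, sub_sub_cancel] at hsubst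
  rw [leftRLI, hsubst, intervalIntegral.integral_of_le hx.1,
    intervalIntegral.integral_of_le (by linarith [hx.1, hx.2])]
  congr 1
  calc ∫ t in Ioc a x, (x - t) ^ (ν - 1) * p t = ∫ t in Ioc a x, F t :=
        setIntegral_congr_fun measurableSet_Ioc fun t ht => by
          simp only [hF, indicator_of_mem (mem_Ioi.2 ht.1)]
    _ = ∫ t in Ioc (x - (b - a)) x, F t :=
        (setIntegral_eq_of_subset_of_forall_sdiff_eq_zero measurableSet_Ioc
          (Ioc_subset_Ioc_left (by linarith [hx.2])) fun t ht => by
            have hta : t ∉ Ioi a := fun hta => ht.2 ⟨hta, ht.1.2⟩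
            simp only [hF, indicator_of_notMem hta, mul_zero]).symm

theorem monotoneOn_leftRLI (hν : 0 < ν) (hp : MonotoneOn p (Icc a b)) (h0 : 0 ≤ p a) :
    MonotoneOn (leftRLI a ν p) (Icc a b) := by
  intro x hx z hz hxz
  have hab : 0 ≤ b - a := sub_nonneg.2 (hx.1.trans hx.2)
  have hmono := monotoneOn_indicator_Ioi hp h0
  have hmem : ∀ x ∈ Icc a b, ∀ s ∈ Icc 0 (b - a), x - s ∈ Iic b := fun x hx s hs =>
    (sub_le_self x hs.1).trans hx.2
  have hinteg : ∀ x ∈ Icc a b, IntervalIntegrable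
      (fun s => s ^ (ν - 1) * (Ioi a).indicator p (x - s)) volume 0 (b - a) := fun x hx =>
    intervalIntegrable_rpow_mul_of_antitoneOn hν hab fun s hs t ht hst =>
      hmono (hmem x hx t ht) (hmem x hx s hs) (sub_le_sub_left hst x)
  rw [leftRLI_eq_integral_indicator hx, leftRLI_eq_integral_indicator hz]
  refine mul_le_mul_of_nonneg_left ?_ (one_div_pos.2 (Gamma_pos_of_pos hν)).le
  exact intervalIntegral.integral_mono_on hab (hinteg x hx) (hinteg z hz) fun s hs =>
    mul_le_mul_of_nonneg_left
      (hmono (hmem x hx s hs) (hmem z hz s hs) (sub_le_sub_right hxz s)) (rpow_nonneg hs.1 _)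

theorem leftRLI_sub (hν : 0 < ν) (hp : MonotoneOn p (Icc a b)) (hm : MonotoneOn m (Icc a b))
    (hx : x ∈ Icc a b) :
    leftRLI a ν (p - m) x = leftRLI a ν p x - leftRLI a ν m x := by
  have hsub : Icc a x ⊆ Icc a b := Icc_subset_Icc_right hx.2
  simp only [leftRLI, Pi.sub_apply, mul_sub]
  rw [intervalIntegral.integral_sub
    (intervalIntegrable_sub_rpow_mul_of_monotoneOn hν hx.1 (hp.mono hsub))
    (intervalIntegrable_sub_rpow_mul_of_monotoneOn hν hx.1 (hm.mono hsub)), mul_sub]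

theorem ae_differentiableAt_leftRLI (hν : 0 < ν) (hg : BoundedVariationOn g (Icc a b)) :
    ∀ᵐ x, x ∈ Ioo a b → DifferentiableAt ℝ (leftRLI a ν g) x := by
  obtain ⟨p₀, m₀, hp₀, hm₀, hg₀⟩ := hg.locallyBoundedVariationOn.exists_monotoneOn_sub_monotoneOn
  obtain ⟨p, m, hp, hm, hpa, hma, rfl⟩ : ∃ p m : ℝ → ℝ, MonotoneOn p (Icc a b) ∧
      MonotoneOn m (Icc a b) ∧ 0 ≤ p a ∧ 0 ≤ m a ∧ g = p - m :=
    ⟨fun t => p₀ t + (|p₀ a| + |m₀ a|), fun t => m₀ t + (|p₀ a| + |m₀ a|),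
      hp₀.add_const _, hm₀.add_const _,
      by linarith [neg_abs_le (p₀ a), abs_nonneg (m₀ a)],
      by linarith [neg_abs_le (m₀ a), abs_nonneg (p₀ a)],
      by rw [hg₀]; ext t; exact (add_sub_add_right_eq_sub _ _ _).symm⟩
  filter_upwards [(monotoneOn_leftRLI hν hp hpa).ae_differentiableWithinAt_of_mem,
    (monotoneOn_leftRLI hν hm hma).ae_differentiableWithinAt_of_mem] with x hdp hdm hx
  have hnhds : Icc a b ∈ 𝓝 x := Icc_mem_nhds hx.1 hx.2
  have hx' := Ioo_subset_Icc_self hx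
  refine (((hdp hx').differentiableAt hnhds).sub
    ((hdm hx').differentiableAt hnhds)).congr_of_eventuallyEq ?_
  filter_upwards [hnhds] with z hz
  exact leftRLI_sub hν hp hm hz

theorem rightRLI_eq_leftRLI_neg (b ν : ℝ) (g : ℝ → ℝ) (x : ℝ) :
    rightRLI b ν g x = leftRLI (-b) ν (fun t => g (-t)) (-x) := by
  have hsubst := intervalIntegral.integral_comp_neg (a := -b) (b := -x)
    fun t => (t - x) ^ (ν - 1) * g t
  simp only [neg_neg] at hsubst
  simp only [rightRLI, leftRLI, ← hsubst, neg_sub_comm]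

theorem ae_differentiableAt_rightRLI (hν : 0 < ν) (hg : BoundedVariationOn g (Icc a b)) :
    ∀ᵐ x, x ∈ Ioo a b → DifferentiableAt ℝ (rightRLI b ν g) x := by
  have hmaps : MapsTo Neg.neg (Icc (-b) (-a)) (Icc a b) := fun t ht =>
    ⟨le_neg.1 ht.2, neg_le.1 ht.1⟩
  have hneg : BoundedVariationOn (g ∘ Neg.neg) (Icc (-b) (-a)) :=
    ((eVariationOn.comp_le_of_antitoneOn g _ (fun _ _ _ _ h => neg_le_neg h) hmaps).trans_lt
      hg.lt_top).ne
  filter_upwards [(Measure.measurePreserving_neg (volume : Measure ℝ)).quasiMeasurePreserving.ae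
    (ae_differentiableAt_leftRLI hν hneg)] with x hd hx
  refine ((hd ⟨neg_lt_neg hx.2, neg_lt_neg hx.1⟩).comp x
    differentiable_neg.differentiableAt).congr_of_eventuallyEq (.of_forall fun z => ?_)
  exact rightRLI_eq_leftRLI_neg b ν g z

theorem AbsolutelyContinuousOn.boundedVariationOn (hab : a ≤ b)
    (hg : AbsolutelyContinuousOn g a b) : BoundedVariationOn g (Icc a b) := by
  have hconst : AbsolutelyContinuousOnInterval (fun _ : ℝ => g a) a b :=
    (LipschitzWith.const (g a)).lipschitzOnWith.absolutelyContinuousOnInterval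
  have hac := hconst.add (hg.1.absolutelyContinuousOnInterval_intervalIntegral left_mem_uIcc)
  rw [BoundedVariationOn, eVariationOn.eq_of_eqOn fun x hx => hg.2 x hx, ← uIcc_of_le hab]
  exact hac.boundedVariationOn

end RiemannLiouvilleIntegral

/-! ### The adjoint of the combined Caputo derivative -/

namespace WeaklySingular

variable {a b : ℝ} {k w q : ℝ → ℝ} {θ C M : ℝ}

theorem integral_mul_kerConv (hk : WeaklySingular k θ C) (hwm : Measurable w)
    (hwb : ∀ t, |w t| ≤ M) (hw0 : ∀ t, t ∉ Icc a b → w t = 0) (hq : Integrable q)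
    (hqm : Measurable q) :
    ∫ x, w x * kerConv k q x = ∫ t, kerConv (fun s => k (-s)) w t * q t := by
  have hI : Integrable (fun z : ℝ × ℝ => w z.1 * (k (z.1 - z.2) * q z.2))
      ((volume.restrict (Icc a b)).prod volume) :=
    (hk.integrable_prod_Icc hq hqm a b).bdd_mul (c := M)
      (hwm.comp measurable_fst).aestronglyMeasurable (.of_forall fun z => hwb z.1)
  calc ∫ x, w x * kerConv k q x = ∫ x in Icc a b, w x * kerConv k q x :=
        (setIntegral_eq_integral_of_forall_compl_eq_zero fun x hx => by
          rw [hw0 x hx, zero_mul]).symm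
    _ = ∫ x in Icc a b, ∫ t, w x * (k (x - t) * q t) := by
        simp only [kerConv_apply, integral_const_mul]
    _ = ∫ t, ∫ x in Icc a b, w x * (k (x - t) * q t) := integral_integral_swap hI
    _ = ∫ t, kerConv (fun s => k (-s)) w t * q t := by
        refine integral_congr_ae (.of_forall fun t => ?_)
        dsimp only
        rw [kerConv_apply, ← integral_mul_const,
          setIntegral_eq_integral_of_forall_compl_eq_zero fun x hx => by rw [hw0 x hx, zero_mul]]
        refine integral_congr_ae (.of_forall fun x => ?_)
        simp only [neg_sub]
        ring

theorem abs_kerConv_le (hk : WeaklySingular k θ C) (hab : a ≤ b) (hwb : ∀ t, |w t| ≤ M)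
    (hw0 : ∀ t, t ∉ Icc a b → w t = 0) (x : ℝ) :
    |kerConv k w x| ≤ C * ((∫ s, singularPart θ s) + (b - a)) * M := by
  have hM : 0 ≤ M := (abs_nonneg _).trans (hwb a)
  have hi : IntervalIntegrable (fun t => k (x - t)) volume a b := by
    simpa only [sub_sub_cancel] using (hk.intervalIntegrable (x - a) (x - b)).comp_sub_left x
  rw [kerConv_apply, ← setIntegral_eq_integral_of_forall_compl_eq_zero (s := Icc a b)
      fun t ht => by rw [hw0 t ht, mul_zero], integral_Icc_eq_integral_Ioc,
    ← intervalIntegral.integral_of_le hab, ← norm_eq_abs]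
  calc ‖∫ t in a..b, k (x - t) * w t‖ ≤ ∫ t in a..b, |k (x - t)| * M :=
        intervalIntegral.norm_integral_le_of_norm_le hab (.of_forall fun t _ => by
          rw [norm_mul, norm_eq_abs, norm_eq_abs]
          exact mul_le_mul_of_nonneg_left (hwb t) (abs_nonneg _)) (hi.abs.mul_const M)
    _ = (∫ s in (x - b)..(x - a), |k s|) * M := by
        rw [intervalIntegral.integral_mul_const,
          intervalIntegral.integral_comp_sub_left (fun s => |k s|)]
    _ ≤ C * ((∫ s, singularPart θ s) + (b - a)) * M := by
        refine mul_le_mul_of_nonneg_right ?_ hM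
        simpa only [sub_sub_sub_cancel_left] using hk.integral_abs_le (sub_le_sub_left hab x)

theorem continuousOn_kerConv_Ioo (hk : WeaklySingular k θ C) (hw : Integrable w)
    (hwc : ContinuousOn w (Ioo a b)) : ContinuousOn (kerConv k w) (Ioo a b) := by
  intro x hx
  obtain ⟨ρ, hρ, hball⟩ := Metric.isOpen_iff.1 isOpen_Ioo x hx
  exact (hk.continuousAt_kerConv hw hρ (hwc.mono hball)).continuousWithinAt

end WeaklySingular

/-- The formal adjoint of `caputoConv` on `[a, b]`: the convolution kernels are reflected and the
argument is cut off outside `(a, b)`. -/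
def caputoAdjoint (a b α β γ : ℝ) (g : ℝ → ℝ) : ℝ → ℝ :=
  biConv (fun s => leftCaputoKernel α γ (-s)) (fun s => rightCaputoKernel β γ (-s))
    ((Ioo a b).indicator g)

section CaputoAdjoint

variable {a b α β γ t : ℝ} {g q : ℝ → ℝ}

theorem indicator_Ioo_of_notMem_Icc (g : ℝ → ℝ) (ht : t ∉ Icc a b) :
    (Ioo a b).indicator g t = 0 :=
  indicator_of_notMem (fun h => ht (Ioo_subset_Icc_self h)) g

theorem measurable_indicator_Ioo (hg : ContinuousOn g (Icc a b)) :
    Measurable ((Ioo a b).indicator g) := by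
  rw [← piecewise_eq_indicator]
  exact (hg.mono Ioo_subset_Icc_self).measurable_piecewise continuousOn_const measurableSet_Ioo

theorem exists_abs_indicator_Ioo_le (hg : ContinuousOn g (Icc a b)) :
    ∃ M, ∀ t, |(Ioo a b).indicator g t| ≤ M := by
  obtain ⟨M, hM⟩ := isCompact_Icc.bddAbove_image hg.norm
  refine ⟨|M|, fun t => ?_⟩
  by_cases ht : t ∈ Ioo a b
  · rw [indicator_of_mem ht]
    exact (hM (mem_image_of_mem _ (Ioo_subset_Icc_self ht))).trans (le_abs_self M)
  · rw [indicator_of_notMem ht, abs_zero]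
    exact abs_nonneg M

theorem integrable_indicator_Ioo (hg : ContinuousOn g (Icc a b)) :
    Integrable ((Ioo a b).indicator g) :=
  (hg.integrableOn_Icc.mono_set Ioo_subset_Icc_self).integrable_indicator measurableSet_Ioo

theorem continuousOn_indicator_Ioo (hg : ContinuousOn g (Icc a b)) :
    ContinuousOn ((Ioo a b).indicator g) (Ioo a b) :=
  (hg.mono Ioo_subset_Icc_self).congr fun _ ht => indicator_of_mem ht g

theorem continuousOn_caputoAdjoint (hα : α ∈ Ioo (0 : ℝ) 1) (hβ : β ∈ Ioo (0 : ℝ) 1)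
    (hg : ContinuousOn g (Icc a b)) : ContinuousOn (caputoAdjoint a b α β γ g) (Ioo a b) := by
  have hinteg := integrable_indicator_Ioo hg
  have hcont := continuousOn_indicator_Ioo hg
  exact ((weaklySingular_leftCaputoKernel hα γ).comp_neg.continuousOn_kerConv_Ioo hinteg hcont).add
    ((weaklySingular_rightCaputoKernel hβ γ).comp_neg.continuousOn_kerConv_Ioo hinteg hcont)

theorem exists_abs_caputoAdjoint_le (hab : a ≤ b) (hα : α ∈ Ioo (0 : ℝ) 1)
    (hβ : β ∈ Ioo (0 : ℝ) 1) (hg : ContinuousOn g (Icc a b)) :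
    ∃ K, ∀ t, |caputoAdjoint a b α β γ g t| ≤ K := by
  obtain ⟨M, hM⟩ := exists_abs_indicator_Ioo_le hg
  have h0 : ∀ t, t ∉ Icc a b → (Ioo a b).indicator g t = 0 := fun t =>
    indicator_Ioo_of_notMem_Icc g
  exact ⟨_, fun t => (abs_add_le _ _).trans <| add_le_add
    ((weaklySingular_leftCaputoKernel hα γ).comp_neg.abs_kerConv_le hab hM h0 t)
    ((weaklySingular_rightCaputoKernel hβ γ).comp_neg.abs_kerConv_le hab hM h0 t)⟩

theorem caputoAdjoint_eq (a b α β γ : ℝ) (g : ℝ → ℝ) (ht : t ∈ Icc a b) :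
    caputoAdjoint a b α β γ g t =
      γ * rightRLI b (1 - α) g t - (1 - γ) * leftRLI a (1 - β) g t := by
  have h0 : ∀ s, s ∉ Ioo a b → (Ioo a b).indicator g s = 0 := fun s hs => indicator_of_notMem hs g
  have hae : ∀ᵐ s, s ∈ Ioo a b → g s = (Ioo a b).indicator g s :=
    .of_forall fun s hs => (indicator_of_mem hs g).symm
  have hleft : (fun s => leftCaputoKernel α γ (-s)) =
      rightPowerKernel (γ / Gamma (1 - α)) α := rfl
  have hright : (fun s => rightCaputoKernel β γ (-s)) =
      powerKernel (-((1 - γ) / Gamma (1 - β))) β := by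
    ext s; simp only [rightCaputoKernel, rightPowerKernel, neg_neg]
  rw [caputoAdjoint, biConv, hleft, hright, kerConv_rightPowerKernel_eq_integral ht h0 hae,
    kerConv_powerKernel_eq_integral ht h0 hae, rightRLI, leftRLI, sub_sub_cancel_left,
    sub_sub_cancel_left]
  ring

theorem intervalIntegral_mul_kerConv {k : ℝ → ℝ} {θ C : ℝ} (hk : WeaklySingular k θ C)
    (hab : a ≤ b) (hg : ContinuousOn g (Icc a b)) (hq : q ∈ testSpace a b) :
    ∫ x in a..b, g x * kerConv k q x =
      ∫ t, kerConv (fun s => k (-s)) ((Ioo a b).indicator g) t * q t := by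
  obtain ⟨M, hM⟩ := exists_abs_indicator_Ioo_le hg
  rw [← hk.integral_mul_kerConv (measurable_indicator_Ioo hg) hM
      (fun _ => indicator_Ioo_of_notMem_Icc g) (testSpace.integrable hq) hq.1.measurable,
    intervalIntegral.integral_of_le hab, integral_Ioc_eq_integral_Ioo,
    ← integral_indicator measurableSet_Ioo]
  exact integral_congr_ae (.of_forall fun x => indicator_mul_left _ _ _)

theorem integral_mul_caputoConv (hab : a ≤ b) (hα : α ∈ Ioo (0 : ℝ) 1)
    (hβ : β ∈ Ioo (0 : ℝ) 1) (hg : ContinuousOn g (Icc a b)) (hq : q ∈ testSpace a b) :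
    ∫ x in a..b, g x * caputoConv α β γ q x = ∫ t, caputoAdjoint a b α β γ g t * q t := by
  have hk₁ := weaklySingular_leftCaputoKernel hα γ
  have hk₂ := weaklySingular_rightCaputoKernel hβ γ
  have hinteg : ∀ {k : ℝ → ℝ} {θ C : ℝ}, WeaklySingular k θ C →
      IntervalIntegrable (fun x => g x * kerConv k q x) volume a b := fun hk =>
    (hg.mul (testSpace.continuous_kerConv hq hk).continuousOn).intervalIntegrable_of_Icc hab
  have hinteg' : ∀ {k : ℝ → ℝ} {θ C : ℝ}, WeaklySingular k θ C →
      Integrable fun t => kerConv k ((Ioo a b).indicator g) t * q t := fun hk =>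
    testSpace.integrable_mul (hk.continuousOn_kerConv_Ioo (integrable_indicator_Ioo hg)
      (continuousOn_indicator_Ioo hg)) hq
  simp only [caputoConv, caputoAdjoint, biConv, mul_add, add_mul]
  rw [intervalIntegral.integral_add (hinteg hk₁) (hinteg hk₂),
    integral_add (hinteg' hk₁.comp_neg) (hinteg' hk₂.comp_neg),
    intervalIntegral_mul_kerConv hk₁ hab hg hq, intervalIntegral_mul_kerConv hk₂ hab hg hq]

end CaputoAdjoint

/-! ### The Euler–Lagrange equation -/

section EulerLagrange

variable {a b α β γ : ℝ} {f g q : ℝ → ℝ}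

theorem continuousOn_primitive_Icc (hab : a ≤ b) (hf : ContinuousOn f (Icc a b)) :
    ContinuousOn (fun t => ∫ s in a..t, f s) (Icc a b) := by
  rw [← uIcc_of_le hab] at hf ⊢
  exact intervalIntegral.continuousOn_primitive_interval hf.integrableOn_uIcc

theorem hasDerivAt_primitive (hf : ContinuousOn f (Icc a b)) {x : ℝ} (hx : x ∈ Ioo a b) :
    HasDerivAt (fun t => ∫ s in a..t, f s) (f x) x :=
  intervalIntegral.integral_hasDerivAt_right
    ((hf.mono (Icc_subset_Icc_right hx.2.le)).intervalIntegrable_of_Icc hx.1.le)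
    ((hf.mono Ioo_subset_Icc_self).stronglyMeasurableAtFilter isOpen_Ioo x hx)
    (hf.continuousAt (Icc_mem_nhds hx.1 hx.2))

theorem integral_mul_primitive_eq_neg (hab : a ≤ b) (hf : ContinuousOn f (Icc a b))
    (hq : q ∈ testSpace a b) (hmean : ∫ t, q t = 0) :
    ∫ x in a..b, f x * ∫ t in a..x, q t = -∫ x, (∫ t in a..x, f t) * q x := by
  have hq0 : ∀ t, t ∉ Ioo a b → q t = 0 := fun _ => testSpace.eq_zero hq
  have hprim := continuousOn_primitive_Icc hab hf
  rw [← uIcc_of_le hab] at hprim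
  have hparts := intervalIntegral.integral_mul_deriv_eq_deriv_mul_of_hasDerivAt
    (intervalIntegral.continuous_primitive (fun _ _ => hq.1.intervalIntegrable _ _) a).continuousOn
    hprim
    (fun x _ => (hq.1.integral_hasStrictDerivAt a x).hasDerivAt)
    (fun x hx => hasDerivAt_primitive hf (by rwa [min_eq_left hab, max_eq_right hab] at hx))
    (hq.1.intervalIntegrable a b) (hf.intervalIntegrable_of_Icc hab)
  rw [intervalIntegral_eq_integral_of_eq_zero hab hq0, hmean, intervalIntegral.integral_same,
    zero_mul, zero_mul, sub_zero, zero_sub,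
    intervalIntegral_eq_integral_of_eq_zero (v := fun x => q x * ∫ t in a..x, f t) hab
      fun t ht => by rw [hq0 t ht, zero_mul]] at hparts
  simpa only [mul_comm] using hparts

theorem integral_caputoAdjoint_sub_primitive_mul (hab : a ≤ b) (hα : α ∈ Ioo (0 : ℝ) 1)
    (hβ : β ∈ Ioo (0 : ℝ) 1) (hf : ContinuousOn f (Icc a b)) (hg : ContinuousOn g (Icc a b))
    (hq : q ∈ testSpace a b) (hmean : ∫ t, q t = 0) :
    ∫ t, (caputoAdjoint a b α β γ g t - ∫ s in a..t, f s) * q t =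
      ∫ x in a..b, (f x * (∫ t in a..x, q t) + g x * caputoConv α β γ q x) := by
  have hfq := hf.fun_mul (continuousOn_primitive_Icc hab hq.1.continuousOn)
  have hgq := hg.fun_mul (continuous_caputoConv (γ := γ) hα hβ hq).continuousOn
  simp only [sub_mul]
  rw [intervalIntegral.integral_add (hfq.intervalIntegrable_of_Icc hab)
      (hgq.intervalIntegrable_of_Icc hab), integral_mul_primitive_eq_neg hab hf hq hmean,
    integral_mul_caputoConv hab hα hβ hg hq,
    integral_sub (testSpace.integrable_mul (continuousOn_caputoAdjoint hα hβ hg) hq)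
      (testSpace.integrable_mul
        ((continuousOn_primitive_Icc hab hf).mono Ioo_subset_Icc_self) hq)]
  ring

theorem exists_caputoAdjoint_eq_const_add_primitive (hab : a < b) (hα : α ∈ Ioo (0 : ℝ) 1)
    (hβ : β ∈ Ioo (0 : ℝ) 1) (hf : ContinuousOn f (Icc a b)) (hg : ContinuousOn g (Icc a b))
    (h : ∀ q, IsNullTest a b α β q →
      ∫ x in a..b, (f x * (∫ t in a..x, q t) + g x * caputoConv α β γ q x) = 0) :
    ∃ c, ∀ t ∈ Ioo a b, caputoAdjoint a b α β γ g t = c + ∫ s in a..t, f s := by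
  have hprim := continuousOn_primitive_Icc hab.le hf
  obtain ⟨c, hc⟩ := exists_eq_linearCombination_of_integral_mul_eq_zero
    ((continuousOn_caputoAdjoint (γ := γ) hα hβ hg).fun_sub (hprim.mono Ioo_subset_Icc_self))
    (continuousOn_endpointFun a b α β) fun q hq hnull => by
      have hqn : IsNullTest a b α β q := ⟨hq, hnull⟩
      exact (integral_caputoAdjoint_sub_primitive_mul hab.le hα hβ hf hg hq
        hqn.integral_eq_zero).trans (h q hqn)
  -- The left side is bounded, so the endpoint singularities cannot contribute.
  obtain ⟨K, hK⟩ := exists_abs_caputoAdjoint_le (γ := γ) hab.le hα hβ hg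
  obtain ⟨K', hK'⟩ := isCompact_Icc.bddAbove_image hprim.norm
  obtain ⟨hc₁, hc₂⟩ := coeff_eq_zero_of_abs_sum_endpointFun_le hab hα.1 hβ.1 (c := c)
    fun t ht => by
      rw [← hc t ht]
      exact (abs_sub _ _).trans
        (add_le_add (hK t) (hK' (mem_image_of_mem _ (Ioo_subset_Icc_self ht))))
  refine ⟨c 0, fun t ht => ?_⟩
  rw [← sub_eq_iff_eq_add, hc t ht, Fin.sum_univ_three, hc₁, hc₂]
  simp [endpointFun]

theorem ae_add_combRL_eq_zero (hα : α < 1) (hβ : β < 1) {c : ℝ}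
    (hf : ContinuousOn f (Icc a b)) (hg : BoundedVariationOn g (Icc a b))
    (h : ∀ t ∈ Ioo a b, caputoAdjoint a b α β γ g t = c + ∫ s in a..t, f s) :
    ∀ᵐ x, x ∈ Ioo a b → f x + combRL a b α β γ g x = 0 := by
  filter_upwards [ae_differentiableAt_leftRLI (sub_pos.2 hβ) hg,
    ae_differentiableAt_rightRLI (sub_pos.2 hα) hg] with x hl hr hx
  have hadj := ((hr hx).hasDerivAt.const_mul γ).sub ((hl hx).hasDerivAt.const_mul (1 - γ))
  have hprim := (hasDerivAt_primitive hf hx).const_add c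
  have heq := hadj.unique (hprim.congr_of_eventuallyEq (by
    filter_upwards [isOpen_Ioo.mem_nhds hx] with t ht
    exact (caputoAdjoint_eq a b α β γ g (Ioo_subset_Icc_self ht)).symm.trans (h t ht)))
  rw [combRL, rlLeftD, rlRightD, ← heq]
  ring

theorem intervalIntegral_sum_mul_eq_zero (hab : a ≤ b) {ι : Type*} [Fintype ι] {E : ι → ℝ → ℝ}
    (hE : ∀ᵐ x, x ∈ Ioo a b → ∀ i, E i x = 0) (h : ℝ → ι → ℝ) :
    ∫ x in a..b, ∑ i, E i x * h x i = 0 := by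
  rw [intervalIntegral.integral_of_le hab, integral_Ioc_eq_integral_Ioo]
  refine integral_eq_zero_of_ae ((ae_restrict_iff' measurableSet_Ioo).2 ?_)
  filter_upwards [hE] with x hx hxI
  exact Finset.sum_eq_zero fun i _ => by rw [hx hxI i, zero_mul]

end EulerLagrange

theorem fractional_euler_lagrange_weak_form_general {a b α β γ δ : ℝ} {N : ℕ} (hab : a < b)
    (hα : α ∈ Ioo (0 : ℝ) 1) (hβ : β ∈ Ioo (0 : ℝ) 1)
    {L : ℝ → (Fin N → ℝ) → (Fin N → ℝ) → ℝ} (hL : ContDiff ℝ 1 (lagrangianMap L)) (hδ : 0 < δ)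
    {y : ℝ → Fin N → ℝ} (hy : IsMinimizerWithin a b α β γ (lagrangianMap L) δ y)
    (hreg : ∀ i, BoundedVariationOn
      (fun x => pdV L i x (y x) (combCaputoVec a b α β γ y x)) (Icc a b)) :
    ∀ᵐ x, x ∈ Ioo a b → ∀ i, pdY L i x (y x) (combCaputoVec a b α β γ y x) +
      combRL a b α β γ (fun t => pdV L i t (y t) (combCaputoVec a b α β γ y t)) x = 0 := by
  have hjet := hy.1.continuousOn_caputoJet hab.le
  have hcomponent : ∀ i, ∀ᵐ x, x ∈ Ioo a b → pdY L i x (y x) (combCaputoVec a b α β γ y x) +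
      combRL a b α β γ (fun t => pdV L i t (y t) (combCaputoVec a b α β γ y t)) x = 0 := by
    intro i
    have hf := continuousOn_comp_prodMk (continuous_pdY hL i) hjet
    have hg := continuousOn_comp_prodMk (continuous_pdV hL i) hjet
    obtain ⟨c, hc⟩ := exists_caputoAdjoint_eq_const_add_primitive (γ := γ) hab hα hβ hf hg
      fun q hq => by
        rw [← hy.first_variation_eq_zero hab hα hβ hL hδ i hq]
        simp only [caputoJet, jetVariation,
          fderiv_lagrangianMap_single (hL.differentiable one_ne_zero)]
    exact ae_add_combRL_eq_zero hα.2 hβ.2 hf (hreg i) hc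
  filter_upwards [ae_all_iff.2 hcomponent] with x hx hxI i using hx i hxI

end

/-- Weak form of the Euler–Lagrange equations: if `y ∈ 𝐃` with `y(a) = yᵃ`, `y(b) = yᵇ` is a
local minimizer of `J` subject to these boundary conditions, then for every `h ∈ 𝐃` with
`h(a) = h(b) = 0`,
`∫_a^b Σᵢ [∂L/∂yᵢ + D_{1-γ}^{β,α} ∂L/∂vᵢ] hᵢ dx = 0`. -/
theorem fractional_euler_lagrange_weak_form
    (a b α β γ : ℝ) (N : ℕ) (hab : a < b)
    (hα : α ∈ Ioo (0 : ℝ) 1) (hβ : β ∈ Ioo (0 : ℝ) 1) (hγ : γ ∈ Icc (0 : ℝ) 1)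
    (L : ℝ → (Fin N → ℝ) → (Fin N → ℝ) → ℝ)
    (hL : ContDiff ℝ 1 (fun p : ℝ × (Fin N → ℝ) × (Fin N → ℝ) => L p.1 p.2.1 p.2.2))
    (ya yb : Fin N → ℝ)
    (y : ℝ → Fin N → ℝ) (hy : memD a b α β γ y) (hya : y a = ya) (hyb : y b = yb)
    (hmin : ∃ δ > (0 : ℝ), ∀ z : ℝ → Fin N → ℝ, memD a b α β γ z → z a = ya → z b = yb →
      norm1inf a b α β γ (z - y) < δ →
      (∫ x in a..b, L x (y x) (combCaputoVec a b α β γ y x)) ≤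
        ∫ x in a..b, L x (z x) (combCaputoVec a b α β γ z x))
    (hreg : ∀ i : Fin N,
      AbsolutelyContinuousOn
        (fun x => pdV L i x (y x) (combCaputoVec a b α β γ y x)) a b ∧
      ContinuousOn
        (fun x => combRL a b α β γ
          (fun t => pdV L i t (y t) (combCaputoVec a b α β γ y t)) x) (Icc a b)) :
    ∀ h : ℝ → Fin N → ℝ, memD a b α β γ h → h a = 0 → h b = 0 →
      (∫ x in a..b, ∑ i,
        (pdY L i x (y x) (combCaputoVec a b α β γ y x) +
          combRL a b α β γ
            (fun t => pdV L i t (y t) (combCaputoVec a b α β γ y t)) x) * h x i) = 0 := by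
  subst hya hyb
  obtain ⟨δ, hδ, hlocal⟩ := hmin
  exact fun h _ _ _ => intervalIntegral_sum_mul_eq_zero hab.le
    (fractional_euler_lagrange_weak_form_general hab hα hβ hL hδ ⟨hy, hlocal⟩
      fun i => (hreg i).1.boundedVariationOn hab.le) h
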